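/- arXiv:2505.19664 — 5 statements merged into one kernel-verified Lean document; each statement's English description precedes it below -/
import Mathlib

section
/- Let G : [0,1]×[0,1] → [0,∞) be a graphon (measurable, symmetric, bounded) with ‖G‖_∞ ≤ M and degrees bounded below by some c > 0. Then there exists a constant C, depending only on M and c, such that for all setwise measurable families (μ^u)_{u∈[0,1]} and (ν^u)_{u∈[0,1]} of Borel probability measures on ℝ^d with sup_{u∈[0,1]} ∫ |x|² dμ^u(x) < ∞ and sup_{u∈[0,1]} ∫ |x|² dν^u(x) < ∞, one has ∫₀¹ W₂²([Gμ]^u, [Gν]^u) du ≤ C ∫₀¹ W₂²(μ^u, ν^u) du, where the integrals over [0,1] are upper Lebesgue integrals. -/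
open MeasureTheory ENNReal

noncomputable section

/-- The normalized graphon `G̃(u,v) = G(u,v) / ∫₀¹ G(u,w) dw`. -/
def gnorm (G : ℝ → ℝ → ℝ) (u v : ℝ) : ℝ :=
  G u v / ∫ w in Set.Icc (0:ℝ) 1, G u w

/-- The squared 2-Wasserstein distance, as the infimum over couplings of the integral of the
squared distance (valued in `ℝ≥0∞`). -/
def W2sq {E : Type*} [NormedAddCommGroup E] [MeasurableSpace E]
    (μ ν : Measure E) : ℝ≥0∞ :=
  ⨅ (π : Measure (E × E)) (_ : IsProbabilityMeasure π)
    (_ : π.map Prod.fst = μ) (_ : π.map Prod.snd = ν),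
    ∫⁻ p, (‖p.1 - p.2‖₊ : ℝ≥0∞) ^ 2 ∂π

/-- The upper Lebesgue integral of an `ℝ≥0∞`-valued function. -/
def upperLintegral {α : Type*} [MeasurableSpace α] (m : Measure α) (f : α → ℝ≥0∞) : ℝ≥0∞ :=
  ⨅ (g : α → ℝ≥0∞) (_ : Measurable g) (_ : ∀ x, f x ≤ g x), ∫⁻ x, g x ∂m

/-- `ν` is the graphon aggregate family `[Gμ]` of the family `μ`. -/
def IsGraphonAggregate {E : Type*} [MeasurableSpace E] (G : ℝ → ℝ → ℝ)
    (μ ν : ℝ → Measure E) : Prop :=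
  ∀ u ∈ Set.Icc (0:ℝ) 1, IsProbabilityMeasure (ν u) ∧
    ∀ B : Set E, MeasurableSet B →
      ν u B = ∫⁻ v in Set.Icc (0:ℝ) 1, ENNReal.ofReal (gnorm G u v) * μ v B

section helpers
open scoped Pointwise

lemma sq_three {E : Type*} [NormedAddCommGroup E] (a b c d : E) :
    (‖a - d‖₊ : ℝ≥0∞) ^ 2 ≤
      3 * ((‖a - b‖₊ : ℝ≥0∞) ^ 2 + (‖b - c‖₊ : ℝ≥0∞) ^ 2 + (‖d - c‖₊ : ℝ≥0∞) ^ 2) := by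
  have h : ‖a - d‖₊ ^ 2 ≤ 3 * (‖a - b‖₊ ^ 2 + ‖b - c‖₊ ^ 2 + ‖d - c‖₊ ^ 2) := by
    rw [← NNReal.coe_le_coe]
    push_cast
    have h1 : ‖a - d‖ ≤ ‖a - b‖ + ‖b - c‖ + ‖d - c‖ := by
      have : a - d = (a - b) + (b - c) + (c - d) := by abel
      rw [this, norm_sub_rev d c]
      exact norm_add₃_le
    have h0 := norm_nonneg (a - d)
    nlinarith [sq_nonneg (‖a - b‖ - ‖b - c‖), sq_nonneg (‖a - b‖ - ‖d - c‖),
      sq_nonneg (‖b - c‖ - ‖d - c‖)]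
  exact_mod_cast h

lemma mix_lintegral {α E : Type*} [MeasurableSpace α] [MeasurableSpace E] (κ : Measure α)
    (μ : α → Measure E) (μ' : Measure E)
    (hm : ∀ B, MeasurableSet B → AEMeasurable (fun v => μ v B) κ)
    (hμ' : ∀ B, MeasurableSet B → μ' B = ∫⁻ v, μ v B ∂κ)
    (f : E → ℝ≥0∞) (hf : Measurable f) :
    AEMeasurable (fun v => ∫⁻ x, f x ∂(μ v)) κ ∧
      ∫⁻ x, f x ∂μ' = ∫⁻ v, ∫⁻ x, f x ∂(μ v) ∂κ := by
  refine Measurable.ennreal_induction (motive := fun f =>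
    AEMeasurable (fun v => ∫⁻ x, f x ∂(μ v)) κ ∧
      ∫⁻ x, f x ∂μ' = ∫⁻ v, ∫⁻ x, f x ∂(μ v) ∂κ) ?_ ?_ ?_ hf
  · intro c s hs
    simp only [lintegral_indicator_const hs]
    refine ⟨(hm s hs).const_mul c, ?_⟩
    rw [hμ' s hs, lintegral_const_mul'' _ (hm s hs)]
  · intro f g _ hf hg ihf ihg
    simp only [Pi.add_apply, lintegral_add_left hf]
    refine ⟨ihf.1.add ihg.1, ?_⟩
    rw [lintegral_add_left' ihf.1, ihf.2, ihg.2]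
  · intro f hf hmono ih
    have e : ∀ m : Measure E, ∫⁻ x, (⨆ n, f n x) ∂m = ⨆ n, ∫⁻ x, f n x ∂m := by
      intro m
      exact lintegral_iSup hf hmono
    simp only [e]
    refine ⟨AEMeasurable.iSup fun n => (ih n).1, ?_⟩
    rw [lintegral_iSup' (fun n => (ih n).1)]
    · simp only [(ih _).2]
    · exact Filter.Eventually.of_forall fun v i j hij => lintegral_mono (hmono hij)

/-- Marginals and cost of a discrete plan. -/
def planMap {ι : Type*} [Fintype ι] (w : ι → ι → ℝ) :
    (ι × ι → ℝ) →ₗ[ℝ] (ι → ℝ) × (ι → ℝ) × ℝ where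
  toFun p := (fun i => ∑ j, p (i, j), fun j => ∑ i, p (i, j), ∑ i, ∑ j, p (i, j) * w i j)
  map_add' p q := by
    simp [Finset.sum_add_distrib, add_mul, funext_iff]
  map_smul' r p := by
    simp [Finset.mul_sum, mul_assoc, funext_iff]

/-- The epigraph of the discrete transport cost. -/
def planSet {ι : Type*} [Fintype ι] (w : ι → ι → ℝ) : Set ((ι → ℝ) × (ι → ℝ) × ℝ) :=
  planMap w '' stdSimplex ℝ (ι × ι) + (({0} : Set (ι → ℝ)) ×ˢ ({0} : Set (ι → ℝ)) ×ˢ Set.Ici (0:ℝ))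

lemma planSet_closed {ι : Type*} [Fintype ι] (w : ι → ι → ℝ) : IsClosed (planSet w) := by
  refine IsClosed.add_left_of_isCompact ?_ ?_
  · exact isClosed_singleton.prod (isClosed_singleton.prod isClosed_Ici)
  · exact (isCompact_stdSimplex ℝ _).image (planMap w).continuous_of_finiteDimensional

lemma planSet_convex {ι : Type*} [Fintype ι] (w : ι → ι → ℝ) : Convex ℝ (planSet w) := by
  refine Convex.add ((convex_stdSimplex ℝ _).linear_image _) ?_
  exact (convex_singleton 0).prod ((convex_singleton 0).prod (convex_Ici 0))

lemma mem_planSet {ι : Type*} [Fintype ι] (w : ι → ι → ℝ) (a b : ι → ℝ) (t : ℝ) :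
    (a, b, t) ∈ planSet w ↔ ∃ p ∈ stdSimplex ℝ (ι × ι),
      (∀ i, ∑ j, p (i, j) = a i) ∧ (∀ j, ∑ i, p (i, j) = b j) ∧
        ∑ i, ∑ j, p (i, j) * w i j ≤ t := by
  unfold planSet
  rw [Set.mem_add]
  constructor
  · rintro ⟨_, ⟨p, hp, rfl⟩, ⟨x, y, z⟩, ⟨hx, hy, hz⟩, h⟩
    simp only [Set.mem_singleton_iff, Set.mem_Ici] at hx hy hz
    subst hx hy
    simp only [planMap, LinearMap.coe_mk, AddHom.coe_mk, Prod.mk_add_mk, Prod.mk.injEq,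
      add_zero] at h
    obtain ⟨h1, h2, h3⟩ := h
    exact ⟨p, hp, fun i => congrFun h1 i, fun i => congrFun h2 i, by linarith⟩
  · rintro ⟨p, hp, h1, h2, h3⟩
    refine ⟨_, ⟨p, hp, rfl⟩, (0, 0, t - ∑ i, ∑ j, p (i, j) * w i j), ⟨rfl, rfl, ?_⟩, ?_⟩
    · simpa using h3
    · simp only [planMap, LinearMap.coe_mk, AddHom.coe_mk, Prod.mk_add_mk, Prod.mk.injEq,
        add_zero]
      exact ⟨funext h1, funext h2, by ring⟩

variable {E : Type*} [NormedAddCommGroup E] [MeasurableSpace E] [BorelSpace E]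
  [SecondCountableTopology E]

/-- discretize a coupling -/
lemma forward {ι : Type*} [Fintype ι] [MeasurableSpace ι] [MeasurableSingletonClass ι]
    (k : E → ι) (hk : Measurable k) (q : ι → E)
    (μ ν : Measure E) (π : Measure (E × E)) [IsProbabilityMeasure π]
    (h1 : π.map Prod.fst = μ) (h2 : π.map Prod.snd = ν) (T : ℝ)
    (hT : 3 * (∫⁻ x, (‖x - q (k x)‖₊ : ℝ≥0∞) ^ 2 ∂μ + ∫⁻ p, (‖p.1 - p.2‖₊ : ℝ≥0∞) ^ 2 ∂π
      + ∫⁻ x, (‖x - q (k x)‖₊ : ℝ≥0∞) ^ 2 ∂ν) ≤ ENNReal.ofReal T) (hT0 : 0 ≤ T) :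
    ((fun i => μ.real (k ⁻¹' {i}), fun i => ν.real (k ⁻¹' {i}), T) :
      (ι → ℝ) × (ι → ℝ) × ℝ) ∈ planSet (fun i j => ‖q i - q j‖ ^ 2) := by
  have hq : Measurable q := measurable_of_finite q
  have hqk : Measurable fun x => q (k x) := hq.comp hk
  rw [mem_planSet]
  set ρ := π.map (Prod.map k k) with hρ
  have hkk : Measurable (Prod.map k k) := hk.prodMap hk
  have : IsProbabilityMeasure ρ := Measure.isProbabilityMeasure_map hkk.aemeasurable
  refine ⟨fun z => ρ.real {z}, ⟨fun _ => measureReal_nonneg, ?_⟩, ?_, ?_, ?_⟩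
  · rw [sum_measureReal_singleton]
    simp
  · intro i
    have e : (Finset.univ : Finset ι).sum (fun j => ρ.real {(i, j)})
        = ((Finset.univ : Finset ι).map ⟨fun j => (i, j), fun a b h => by simpa using h⟩).sum
          (fun z => ρ.real {z}) := by
      rw [Finset.sum_map]; rfl
    rw [e, sum_measureReal_singleton, ← h1, map_measureReal_apply measurable_fst (hk (by simp)), hρ,
      map_measureReal_apply hkk (Finset.measurableSet _)]
    congr 1
    ext ⟨x, y⟩
    simp only [Set.mem_preimage, Finset.mem_coe, Finset.mem_map, Finset.mem_univ, true_and]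
    exact ⟨fun ⟨_, h⟩ => (congrArg Prod.fst h).symm, fun h => ⟨k y, Prod.ext (Eq.symm h) rfl⟩⟩
  · intro j
    have e : (Finset.univ : Finset ι).sum (fun i => ρ.real {(i, j)})
        = ((Finset.univ : Finset ι).map ⟨fun i => (i, j), fun a b h => by simpa using h⟩).sum
          (fun z => ρ.real {z}) := by
      rw [Finset.sum_map]; rfl
    rw [e, sum_measureReal_singleton, ← h2, map_measureReal_apply measurable_snd (hk (by simp)), hρ,
      map_measureReal_apply hkk (Finset.measurableSet _)]
    congr 1
    ext ⟨x, y⟩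
    simp only [Set.mem_preimage, Finset.mem_coe, Finset.mem_map, Finset.mem_univ, true_and]
    exact ⟨fun ⟨_, h⟩ => (congrArg Prod.snd h).symm, fun h => ⟨k x, Prod.ext rfl (Eq.symm h)⟩⟩
  · rw [← ENNReal.ofReal_le_ofReal_iff hT0]
    refine le_trans (b := ∫⁻ p, (‖q (k p.1) - q (k p.2)‖₊ : ℝ≥0∞) ^ 2 ∂π)
      (le_of_eq ?_) (le_trans ?_ hT)
    · have : ∫⁻ p, (‖q (k p.1) - q (k p.2)‖₊ : ℝ≥0∞) ^ 2 ∂π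
          = ∫⁻ z, (‖q z.1 - q z.2‖₊ : ℝ≥0∞) ^ 2 ∂ρ := by
        rw [hρ, lintegral_map (measurable_of_finite _) hkk]
        rfl
      rw [this, lintegral_fintype, ← Fintype.sum_prod_type' (fun i j => ρ.real {(i,j)} * ‖q i - q j‖ ^ 2),
        ENNReal.ofReal_sum_of_nonneg (fun _ _ => by positivity)]
      refine Finset.sum_congr rfl fun z _ => ?_
      rw [ENNReal.ofReal_mul measureReal_nonneg, ofReal_measureReal, mul_comm,
        ENNReal.ofReal_pow (norm_nonneg _), ofReal_norm]
      rfl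
    · have hf : Measurable fun x => (‖x - q (k x)‖₊ : ℝ≥0∞) ^ 2 := by fun_prop
      rw [← h1, ← h2, lintegral_map hf measurable_fst, lintegral_map hf measurable_snd,
        ← lintegral_add_left (by fun_prop), ← lintegral_add_left (by fun_prop),
        ← lintegral_const_mul _ (by fun_prop)]
      refine lintegral_mono fun p => ?_
      refine (sq_three (q (k p.1)) p.1 p.2 (q (k p.2))).trans (le_of_eq ?_)
      rw [← nnnorm_neg (q (k p.1) - p.1), neg_sub, ← nnnorm_neg (q (k p.2) - p.2), neg_sub]

/-- lift a discrete plan to a coupling -/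
lemma backward {ι : Type*} [Fintype ι] [MeasurableSpace ι] [MeasurableSingletonClass ι]
    (k : E → ι) (hk : Measurable k) (q : ι → E)
    (μ ν : Measure E) [IsProbabilityMeasure μ] [IsProbabilityMeasure ν] (T : ℝ)
    (hT : ((fun i => μ.real (k ⁻¹' {i}), fun i => ν.real (k ⁻¹' {i}), T) :
      (ι → ℝ) × (ι → ℝ) × ℝ) ∈ planSet (fun i j => ‖q i - q j‖ ^ 2)) :
    W2sq μ ν ≤ 3 * (∫⁻ x, (‖x - q (k x)‖₊ : ℝ≥0∞) ^ 2 ∂μ + ENNReal.ofReal T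
      + ∫⁻ x, (‖x - q (k x)‖₊ : ℝ≥0∞) ^ 2 ∂ν) := by
  have hq : Measurable q := measurable_of_finite q
  have hqk : Measurable fun x => q (k x) := hq.comp hk
  rw [mem_planSet] at hT
  obtain ⟨p, ⟨hp0, hp1⟩, ha, hb, hcost⟩ := hT
  have hks : ∀ i, MeasurableSet (k ⁻¹' {i}) := fun i => hk (by simp)
  set m : ι → Measure E := fun i => ProbabilityTheory.cond μ (k ⁻¹' {i}) with hm
  set n : ι → Measure E := fun i => ProbabilityTheory.cond ν (k ⁻¹' {i}) with hn
  have hm1 : ∀ i j, ENNReal.ofReal (p (i, j)) * m i Set.univ = ENNReal.ofReal (p (i, j)) := by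
    intro i j
    by_cases h : μ (k ⁻¹' {i}) = 0
    · have : p (i, j) ≤ 0 := by
        have h3 := ha i
        rw [measureReal_def, h, ENNReal.toReal_zero] at h3
        rw [← h3]
        exact Finset.single_le_sum (f := fun j => p (i, j)) (fun j _ => hp0 (i, j)) (Finset.mem_univ j)
      simp [ENNReal.ofReal_of_nonpos this]
    · have := ProbabilityTheory.cond_isProbabilityMeasure h
      simp [hm]
  have hn1 : ∀ i j, ENNReal.ofReal (p (i, j)) * n j Set.univ = ENNReal.ofReal (p (i, j)) := by
    intro i j
    by_cases h : ν (k ⁻¹' {j}) = 0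
    · have : p (i, j) ≤ 0 := by
        have h3 := hb j
        rw [measureReal_def, h, ENNReal.toReal_zero] at h3
        rw [← h3]
        exact Finset.single_le_sum (f := fun i => p (i, j)) (fun i _ => hp0 (i, j)) (Finset.mem_univ i)
      simp [ENNReal.ofReal_of_nonpos this]
    · have := ProbabilityTheory.cond_isProbabilityMeasure h
      simp [hn]
  have hma : ∀ i, ∑ j, ENNReal.ofReal (p (i, j)) = μ (k ⁻¹' {i}) := by
    intro i
    rw [← ENNReal.ofReal_sum_of_nonneg (fun _ _ => hp0 _), ha, ofReal_measureReal]
  have hnb : ∀ j, ∑ i, ENNReal.ofReal (p (i, j)) = ν (k ⁻¹' {j}) := by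
    intro i
    rw [← ENNReal.ofReal_sum_of_nonneg (fun _ _ => hp0 _), hb, ofReal_measureReal]
  have tot : ∀ (μ : Measure E) [IsProbabilityMeasure μ] (B : Set E), MeasurableSet B →
      ∑ i, μ (k ⁻¹' {i}) * ProbabilityTheory.cond μ (k ⁻¹' {i}) B = μ B := by
    intro μ _ B hB
    calc _ = ∑ i, (μ.restrict B) (k ⁻¹' {i}) := by
          refine Finset.sum_congr rfl fun i _ => ?_
          rw [mul_comm, ProbabilityTheory.cond_mul_eq_inter (hks i), Measure.restrict_apply (hks i)]
      _ = _ := by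
          rw [sum_measure_preimage_singleton _ (fun i _ => hks i)]
          simp
  set π : Measure (E × E) := ∑ i, ∑ j, ENNReal.ofReal (p (i, j)) • (m i).prod (n j) with hπ
  have h1 : π.map Prod.fst = μ := by
    ext B hB
    rw [Measure.map_apply measurable_fst hB, ← Set.prod_univ]
    simp only [hπ, Measure.finsetSum_apply, Measure.smul_apply, Measure.prod_prod, smul_eq_mul]
    rw [← tot μ B hB]
    refine Finset.sum_congr rfl fun i _ => ?_
    rw [← hma, Finset.sum_mul]
    refine Finset.sum_congr rfl fun j _ => ?_
    rw [mul_comm (m i B), ← mul_assoc, hn1]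
  have h2 : π.map Prod.snd = ν := by
    ext B hB
    rw [Measure.map_apply measurable_snd hB, ← Set.univ_prod]
    simp only [hπ, Measure.finsetSum_apply, Measure.smul_apply, Measure.prod_prod, smul_eq_mul]
    rw [← tot ν B hB, Finset.sum_comm]
    refine Finset.sum_congr rfl fun i _ => ?_
    rw [← hnb, Finset.sum_mul]
    refine Finset.sum_congr rfl fun j _ => ?_
    rw [← mul_assoc, hm1]
  have hπ1 : IsProbabilityMeasure π := by
    constructor
    have : π.map Prod.fst Set.univ = 1 := by rw [h1]; simp
    rwa [Measure.map_apply measurable_fst MeasurableSet.univ] at this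
  refine (iInf₂_le_of_le π hπ1 (iInf₂_le_of_le h1 h2 le_rfl)).trans ?_
  have hf : Measurable fun x => (‖x - q (k x)‖₊ : ℝ≥0∞) ^ 2 := by fun_prop
  have hmid : ∫⁻ p, (‖q (k p.1) - q (k p.2)‖₊ : ℝ≥0∞) ^ 2 ∂π ≤ ENNReal.ofReal T := by
    refine le_trans ?_ (ENNReal.ofReal_le_ofReal hcost)
    rw [ENNReal.ofReal_sum_of_nonneg
      (fun i _ => Finset.sum_nonneg fun j _ => mul_nonneg (hp0 _) (by positivity))]
    rw [hπ, lintegral_finsetSum_measure]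
    refine Finset.sum_le_sum fun i _ => ?_
    rw [lintegral_finsetSum_measure, ENNReal.ofReal_sum_of_nonneg
      (fun j _ => mul_nonneg (hp0 _) (by positivity))]
    refine Finset.sum_le_sum fun j _ => ?_
    rw [lintegral_smul_measure, ENNReal.ofReal_mul (hp0 _), smul_eq_mul]
    gcongr
    rw [lintegral_prod _ (by fun_prop)]
    have hc : ENNReal.ofReal (‖q i - q j‖ ^ 2) = (‖q i - q j‖₊ : ℝ≥0∞) ^ 2 := by
      rw [ENNReal.ofReal_pow (norm_nonneg _), ofReal_norm]
      rfl
    rw [hc]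
    calc _ ≤ ∫⁻ x, (‖q i - q j‖₊ : ℝ≥0∞) ^ 2 ∂(m i) := by
          refine lintegral_mono_ae ?_
          filter_upwards [ProbabilityTheory.ae_cond_mem (μ := μ) (hks i)] with x hx
          calc _ ≤ ∫⁻ y, (‖q i - q j‖₊ : ℝ≥0∞) ^ 2 ∂(n j) := by
                refine lintegral_mono_ae ?_
                filter_upwards [ProbabilityTheory.ae_cond_mem (μ := ν) (hks j)] with y hy
                simp only [Set.mem_preimage, Set.mem_singleton_iff] at hx hy
                rw [hx, hy]
            _ ≤ _ := by
                rw [lintegral_const]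
                exact mul_le_of_le_one_right' prob_le_one
      _ ≤ _ := by
          rw [lintegral_const]
          exact mul_le_of_le_one_right' prob_le_one
  calc _ ≤ 3 * (∫⁻ p, (‖p.1 - q (k p.1)‖₊ : ℝ≥0∞) ^ 2 ∂π
        + ∫⁻ p, (‖q (k p.1) - q (k p.2)‖₊ : ℝ≥0∞) ^ 2 ∂π
        + ∫⁻ p, (‖p.2 - q (k p.2)‖₊ : ℝ≥0∞) ^ 2 ∂π) := by
        rw [← lintegral_add_left (by fun_prop), ← lintegral_add_left (by fun_prop),
          ← lintegral_const_mul _ (by fun_prop)]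
        exact lintegral_mono fun p => sq_three _ _ _ _
    _ ≤ _ := by
        have e1 : ∫⁻ x, (‖x - q (k x)‖₊ : ℝ≥0∞) ^ 2 ∂μ
            = ∫⁻ p, (‖p.1 - q (k p.1)‖₊ : ℝ≥0∞) ^ 2 ∂π := by
          rw [← lintegral_map hf measurable_fst, h1]
        have e2 : ∫⁻ x, (‖x - q (k x)‖₊ : ℝ≥0∞) ^ 2 ∂ν
            = ∫⁻ p, (‖p.2 - q (k p.2)‖₊ : ℝ≥0∞) ^ 2 ∂π := by
          rw [← lintegral_map hf measurable_snd, h2]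
        rw [e1, e2]
        gcongr

lemma exists_quant (m : Measure E) [IsFiniteMeasure m]
    (h : ∫⁻ x, (‖x‖₊ : ℝ≥0∞) ^ 2 ∂m < ⊤) (ε : ℝ≥0∞) (hε : ε ≠ 0) :
    ∃ Q : SimpleFunc E E, ∫⁻ x, (‖x - Q x‖₊ : ℝ≥0∞) ^ 2 ∂m ≤ ε := by
  have hid : MemLp (id : E → E) 2 m := by
    refine ⟨aestronglyMeasurable_id, ?_⟩
    rw [eLpNorm_lt_top_iff_lintegral_rpow_enorm_lt_top two_ne_zero ENNReal.ofNat_ne_top]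
    simpa [enorm] using h
  have hε' : ε ^ (1 / 2 : ℝ) ≠ 0 := by
    simp [ENNReal.rpow_eq_zero_iff, hε]
  obtain ⟨Q, hQ, -⟩ := hid.exists_simpleFunc_eLpNorm_sub_lt ENNReal.ofNat_ne_top hε'
  refine ⟨Q, ?_⟩
  rw [eLpNorm_eq_lintegral_rpow_enorm_toReal two_ne_zero ENNReal.ofNat_ne_top] at hQ
  simp only [ENNReal.toReal_ofNat] at hQ
  rw [ENNReal.rpow_lt_rpow_iff (by norm_num)] at hQ
  simpa [enorm] using hQ.le

lemma W2sq_mix {α : Type*} [MeasurableSpace α] (κ : Measure α) [IsProbabilityMeasure κ]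
    (μ ν : α → Measure E) (μ' ν' : Measure E) [IsProbabilityMeasure μ'] [IsProbabilityMeasure ν']
    (hmp : ∀ᵐ v ∂κ, IsProbabilityMeasure (μ v)) (hnp : ∀ᵐ v ∂κ, IsProbabilityMeasure (ν v))
    (hm : ∀ B, MeasurableSet B → AEMeasurable (fun v => μ v B) κ)
    (hn : ∀ B, MeasurableSet B → AEMeasurable (fun v => ν v B) κ)
    (hμ' : ∀ B, MeasurableSet B → μ' B = ∫⁻ v, μ v B ∂κ)
    (hν' : ∀ B, MeasurableSet B → ν' B = ∫⁻ v, ν v B ∂κ)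
    (h2m : ∫⁻ x, (‖x‖₊ : ℝ≥0∞) ^ 2 ∂μ' < ⊤) (h2n : ∫⁻ x, (‖x‖₊ : ℝ≥0∞) ^ 2 ∂ν' < ⊤)
    (g : α → ℝ≥0∞) (hg : Measurable g) (hle : ∀ᵐ v ∂κ, W2sq (μ v) (ν v) ≤ g v) :
    W2sq μ' ν' ≤ 9 * ∫⁻ v, g v ∂κ := by
  refine ENNReal.le_of_forall_pos_le_add fun δ hδ hfin => ?_
  have hgfin : ∫⁻ v, g v ∂κ < ⊤ := by
    by_contra hcon
    rw [not_lt, top_le_iff] at hcon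
    rw [hcon] at hfin
    simp at hfin
  set ε : ℝ≥0∞ := (δ : ℝ≥0∞) / 21 with hεdef
  have hε0 : ε ≠ 0 := by
    simp [hεdef, hδ.ne']
  have hεt : ε ≠ ⊤ := by
    simp [hεdef, ENNReal.div_eq_top]
  have hεδ : 21 * ε = δ := ENNReal.mul_div_cancel (by norm_num) (by norm_num)
  obtain ⟨Q, hQ⟩ := exists_quant (μ' + ν') (by
    rw [lintegral_add_measure]; exact ENNReal.add_lt_top.2 ⟨h2m, h2n⟩) ε hε0
  rw [lintegral_add_measure] at hQ
  let k : E → Q.range := fun x => ⟨Q x, Q.mem_range_self x⟩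
  have hk : Measurable k := Q.measurable.subtype_mk
  let q : Q.range → E := Subtype.val
  change ∫⁻ x, (‖x - q (k x)‖₊ : ℝ≥0∞) ^ 2 ∂μ' + ∫⁻ x, (‖x - q (k x)‖₊ : ℝ≥0∞) ^ 2 ∂ν' ≤ ε at hQ
  have hks : ∀ i, MeasurableSet (k ⁻¹' {i}) := fun i => hk (by simp)
  have hf : Measurable fun x => (‖x - q (k x)‖₊ : ℝ≥0∞) ^ 2 := by
    have : Measurable fun x => q (k x) := Q.measurable
    fun_prop
  obtain ⟨am, em⟩ := mix_lintegral κ μ μ' hm hμ' _ hf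
  obtain ⟨an, en⟩ := mix_lintegral κ ν ν' hn hν' _ hf
  set T : α → ℝ≥0∞ := fun v => 3 * (∫⁻ x, (‖x - q (k x)‖₊ : ℝ≥0∞) ^ 2 ∂(μ v) + (g v + ε)
    + ∫⁻ x, (‖x - q (k x)‖₊ : ℝ≥0∞) ^ 2 ∂(ν v)) with hTdef
  have aT : AEMeasurable T κ := ((am.add (hg.add_const ε).aemeasurable).add an).const_mul 3
  have iT : ∫⁻ v, T v ∂κ ≤ 3 * (∫⁻ v, g v ∂κ + 2 * ε) := by
    have a1 : AEMeasurable (fun v => ∫⁻ x, (‖x - q (k x)‖₊ : ℝ≥0∞) ^ 2 ∂(μ v) + (g v + ε)) κ :=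
      am.add (hg.add_const ε).aemeasurable
    have a2 : AEMeasurable (fun v => ∫⁻ x, (‖x - q (k x)‖₊ : ℝ≥0∞) ^ 2 ∂(μ v) + (g v + ε)
        + ∫⁻ x, (‖x - q (k x)‖₊ : ℝ≥0∞) ^ 2 ∂(ν v)) κ := a1.add an
    simp only [hTdef]
    rw [lintegral_const_mul'' _ a2, lintegral_add_left' a1, lintegral_add_left' am,
      lintegral_add_left hg, lintegral_const, measure_univ, mul_one, ← em, ← en]
    refine mul_le_mul_right ?_ 3
    calc _ = ∫⁻ v, g v ∂κ + (ε + (∫⁻ x, (‖x - q (k x)‖₊ : ℝ≥0∞) ^ 2 ∂μ'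
            + ∫⁻ x, (‖x - q (k x)‖₊ : ℝ≥0∞) ^ 2 ∂ν')) := by ring
      _ ≤ ∫⁻ v, g v ∂κ + (ε + ε) := by gcongr
      _ = _ := by ring
  have iTfin : ∫⁻ v, T v ∂κ ≠ ⊤ := by
    refine ne_top_of_le_ne_top ?_ iT
    exact ENNReal.mul_ne_top (by norm_num)
      (ENNReal.add_ne_top.2 ⟨hgfin.ne, ENNReal.mul_ne_top (by norm_num) hεt⟩)
  have Tfin : ∀ᵐ v ∂κ, T v < ⊤ := ae_lt_top' aT iTfin
  have gfin : ∀ᵐ v ∂κ, g v < ⊤ := ae_lt_top hg hgfin.ne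
  have key : ∀ᵐ v ∂κ, ((fun i => (μ v).real (k ⁻¹' {i}), fun i => (ν v).real (k ⁻¹' {i}),
      (T v).toReal) : (Q.range → ℝ) × (Q.range → ℝ) × ℝ)
        ∈ planSet (fun i j => ‖q i - q j‖ ^ 2) := by
    filter_upwards [Tfin, gfin, hle] with v hTv hgv hlev
    have hlt : W2sq (μ v) (ν v) < g v + ε :=
      hlev.trans_lt (ENNReal.lt_add_right hgv.ne hε0)
    simp only [W2sq, iInf_lt_iff] at hlt
    obtain ⟨π, hπ, h1, h2, hc⟩ := hlt
    refine forward k hk q (μ v) (ν v) π h1 h2 _ ?_ ENNReal.toReal_nonneg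
    rw [ENNReal.ofReal_toReal hTv.ne]
    simp only [hTdef]
    gcongr
  have real_int : ∀ (ρ : α → Measure E) (ρ' : Measure E) [IsProbabilityMeasure ρ'],
      (∀ᵐ v ∂κ, IsProbabilityMeasure (ρ v)) →
      (∀ B, MeasurableSet B → AEMeasurable (fun v => ρ v B) κ) →
      (∀ B, MeasurableSet B → ρ' B = ∫⁻ v, ρ v B ∂κ) → ∀ B, MeasurableSet B →
      Integrable (fun v => (ρ v).real B) κ ∧ ∫ v, (ρ v).real B ∂κ = ρ'.real B := by
    intro ρ ρ' _ hp ha he B hB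
    refine ⟨integrable_toReal_of_lintegral_ne_top (ha B hB) ?_, ?_⟩
    · rw [← he B hB]; exact measure_ne_top _ _
    · simp only [measureReal_def]
      rw [integral_toReal (ha B hB), ← he B hB]
      filter_upwards [hp] with v hv
      exact measure_lt_top _ _
  have rm := fun i => real_int μ μ' hmp hm hμ' (k ⁻¹' {i}) (hks i)
  have rn := fun i => real_int ν ν' hnp hn hν' (k ⁻¹' {i}) (hks i)
  have im : Integrable (fun v => fun i => (μ v).real (k ⁻¹' {i})) κ :=
    Integrable.of_eval fun i => (rm i).1
  have inn : Integrable (fun v => fun i => (ν v).real (k ⁻¹' {i})) κ :=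
    Integrable.of_eval fun i => (rn i).1
  have iTr : Integrable (fun v => (T v).toReal) κ := integrable_toReal_of_lintegral_ne_top aT iTfin
  have hmem := (planSet_convex _).integral_mem (planSet_closed _) key (im.prodMk (inn.prodMk iTr))
  rw [integral_pair im (inn.prodMk iTr), integral_pair inn iTr, integral_toReal aT Tfin] at hmem
  have e1 : ∫ v, (fun i => (μ v).real (k ⁻¹' {i})) ∂κ = fun i => μ'.real (k ⁻¹' {i}) := by
    ext i
    rw [eval_integral fun i => (rm i).1]
    exact (rm i).2
  have e2 : ∫ v, (fun i => (ν v).real (k ⁻¹' {i})) ∂κ = fun i => ν'.real (k ⁻¹' {i}) := by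
    ext i
    rw [eval_integral fun i => (rn i).1]
    exact (rn i).2
  rw [e1, e2] at hmem
  refine (backward k hk q μ' ν' _ hmem).trans ?_
  rw [ENNReal.ofReal_toReal iTfin]
  calc _ = 3 * (∫⁻ v, T v ∂κ + (∫⁻ x, (‖x - q (k x)‖₊ : ℝ≥0∞) ^ 2 ∂μ'
            + ∫⁻ x, (‖x - q (k x)‖₊ : ℝ≥0∞) ^ 2 ∂ν')) := by ring
    _ ≤ 3 * (3 * (∫⁻ v, g v ∂κ + 2 * ε) + ε) := by gcongr
    _ = 9 * ∫⁻ v, g v ∂κ + 21 * ε := by ring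
    _ = _ := by rw [hεδ]

end helpers

/-- **L² stability of the graphon aggregation operator in Wasserstein distance**:
`∫₀¹ W₂²([Gμ]^u, [Gν]^u) du ≤ C ∫₀¹ W₂²(μ^u, ν^u) du`, with `C` depending only on the
uniform bound `M` of the graphon and the lower degree bound `c`. -/
theorem graphon_aggregate_W2_L2_stability
    (d : ℕ) (M c : ℝ) (hc : 0 < c) :
    ∃ C : ℝ, 0 < C ∧
      ∀ G : ℝ → ℝ → ℝ,
        Measurable (Function.uncurry G) →
        (∀ u v, G u v = G v u) →
        (∀ u v, 0 ≤ G u v) →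
        (∀ u v, G u v ≤ M) →
        (∀ u ∈ Set.Icc (0:ℝ) 1, c ≤ ∫ v in Set.Icc (0:ℝ) 1, G u v) →
        ∀ μ ν : ℝ → Measure (EuclideanSpace ℝ (Fin d)),
          (∀ u ∈ Set.Icc (0:ℝ) 1, IsProbabilityMeasure (μ u)) →
          (∀ u ∈ Set.Icc (0:ℝ) 1, IsProbabilityMeasure (ν u)) →
          (∀ B : Set (EuclideanSpace ℝ (Fin d)), MeasurableSet B →
            AEMeasurable (fun u => μ u B) (volume.restrict (Set.Icc (0:ℝ) 1))) →
          (∀ B : Set (EuclideanSpace ℝ (Fin d)), MeasurableSet B →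
            AEMeasurable (fun u => ν u B) (volume.restrict (Set.Icc (0:ℝ) 1))) →
          (⨆ u ∈ Set.Icc (0:ℝ) 1, ∫⁻ x, (‖x‖₊ : ℝ≥0∞) ^ 2 ∂(μ u)) < ⊤ →
          (⨆ u ∈ Set.Icc (0:ℝ) 1, ∫⁻ x, (‖x‖₊ : ℝ≥0∞) ^ 2 ∂(ν u)) < ⊤ →
          ∀ aggμ aggν : ℝ → Measure (EuclideanSpace ℝ (Fin d)),
            IsGraphonAggregate G μ aggμ → IsGraphonAggregate G ν aggν →
            upperLintegral (volume.restrict (Set.Icc (0:ℝ) 1))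
                (fun u => W2sq (aggμ u) (aggν u)) ≤
              ENNReal.ofReal C *
                upperLintegral (volume.restrict (Set.Icc (0:ℝ) 1))
                  (fun u => W2sq (μ u) (ν u)) := by
  refine ⟨9 * max (M / c) 1, by positivity, ?_⟩
  intro G hG _ hG0 hGM hGc μ ν hμ hν hmμ hmν h2μ h2ν aμ aν haμ haν
  set I : Measure ℝ := volume.restrict (Set.Icc (0:ℝ) 1) with hI
  set C : ℝ := 9 * max (M / c) 1 with hC
  have hC0 : 0 < C := by positivity
  have hIp : IsProbabilityMeasure I := ⟨by simp [hI]⟩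
  have hmemI : ∀ᵐ v ∂I, v ∈ Set.Icc (0:ℝ) 1 := ae_restrict_mem measurableSet_Icc
  rw [mul_comm, ← ENNReal.div_le_iff_le_mul (by simp [hC0]) (by simp)]
  refine le_iInf fun g => le_iInf fun hg => le_iInf fun hle => ?_
  rw [ENNReal.div_le_iff_le_mul (by simp [hC0]) (by simp), mul_comm]
  have pt : ∀ u ∈ Set.Icc (0:ℝ) 1, W2sq (aμ u) (aν u) ≤ ENNReal.ofReal C * ∫⁻ v, g v ∂I := by
    intro u hu
    obtain ⟨hpμ, hBμ⟩ := haμ u hu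
    obtain ⟨hpν, hBν⟩ := haν u hu
    have hGu : Measurable (G u) := hG.comp measurable_prodMk_left
    have hw : Measurable fun v => ENNReal.ofReal (gnorm G u v) :=
      (hGu.div_const _).ennreal_ofReal
    set κ : Measure ℝ := I.withDensity fun v => ENNReal.ofReal (gnorm G u v) with hκ
    have hac : κ ≪ I := withDensity_absolutelyContinuous _ _
    have hmemκ : ∀ᵐ v ∂κ, v ∈ Set.Icc (0:ℝ) 1 := hac.ae_le hmemI
    have conv : ∀ f : ℝ → ℝ≥0∞, AEMeasurable f I →
        ∫⁻ v, f v ∂κ = ∫⁻ v, ENNReal.ofReal (gnorm G u v) * f v ∂I := by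
      intro f hf
      exact lintegral_withDensity_eq_lintegral_mul₀ hw.aemeasurable hf
    have hκp : IsProbabilityMeasure κ := by
      constructor
      have h1 := hBμ Set.univ MeasurableSet.univ
      rw [measure_univ] at h1
      rw [h1, ← conv _ (hmμ _ MeasurableSet.univ), ← lintegral_one]
      refine lintegral_congr_ae ?_
      filter_upwards [hmemκ] with v hv
      have := hμ v hv
      simp
    have eμ : ∀ B, MeasurableSet B → aμ u B = ∫⁻ v, μ v B ∂κ := fun B hB => by
      rw [hBμ B hB, conv _ (hmμ B hB)]
    have eν : ∀ B, MeasurableSet B → aν u B = ∫⁻ v, ν v B ∂κ := fun B hB => by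
      rw [hBν B hB, conv _ (hmν B hB)]
    have cμ := fun B hB => (hmμ B hB).mono_ac hac
    have cν := fun B hB => (hmν B hB).mono_ac hac
    have sec : ∀ (ρ : ℝ → Measure (EuclideanSpace ℝ (Fin d)))
        (ρ' : Measure (EuclideanSpace ℝ (Fin d))),
        (∀ B, MeasurableSet B → AEMeasurable (fun v => ρ v B) κ) →
        (∀ B, MeasurableSet B → ρ' B = ∫⁻ v, ρ v B ∂κ) →
        (⨆ u ∈ Set.Icc (0:ℝ) 1, ∫⁻ x, (‖x‖₊ : ℝ≥0∞) ^ 2 ∂(ρ u)) < ⊤ →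
        ∫⁻ x, (‖x‖₊ : ℝ≥0∞) ^ 2 ∂ρ' < ⊤ := by
      intro ρ ρ' h1 h2 h3
      rw [(mix_lintegral κ ρ ρ' h1 h2 _ (by fun_prop)).2]
      refine lt_of_le_of_lt ?_ h3
      calc _ ≤ ∫⁻ v, (⨆ u ∈ Set.Icc (0:ℝ) 1, ∫⁻ x, (‖x‖₊ : ℝ≥0∞) ^ 2 ∂(ρ u)) ∂κ := by
            refine lintegral_mono_ae ?_
            filter_upwards [hmemκ] with v hv
            exact le_iSup₂ (f := fun u (_ : u ∈ Set.Icc (0:ℝ) 1) =>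
              ∫⁻ x, (‖x‖₊ : ℝ≥0∞) ^ 2 ∂(ρ u)) v hv
        _ = _ := by simp
    refine (W2sq_mix κ μ ν (aμ u) (aν u) (hmemκ.mono fun v hv => hμ v hv)
      (hmemκ.mono fun v hv => hν v hv) cμ cν eμ eν (sec μ _ cμ eμ h2μ) (sec ν _ cν eν h2ν)
      g hg (Filter.Eventually.of_forall hle)).trans ?_
    rw [conv g hg.aemeasurable, hC, ENNReal.ofReal_mul (by norm_num), mul_assoc,
      ← lintegral_const_mul _ hg]
    have h9 : ENNReal.ofReal 9 = 9 := by norm_num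
    rw [h9]
    gcongr with v
    refine le_trans ?_ (le_max_left _ _)
    unfold gnorm
    have hM : 0 ≤ M := (hG0 u u).trans (hGM u u)
    have := hGc u hu
    gcongr
    exact hGM u v
  refine (iInf₂_le_of_le (fun u => if u ∈ Set.Icc (0:ℝ) 1 then
    ENNReal.ofReal C * ∫⁻ v, g v ∂I else ⊤) (Measurable.ite measurableSet_Icc measurable_const measurable_const)
    (iInf_le_of_le ?_ le_rfl)).trans ?_
  · intro u
    simp only
    split_ifs with h
    · exact pt u h
    · exact le_top
  · have : ∫⁻ u, (if u ∈ Set.Icc (0:ℝ) 1 then ENNReal.ofReal C * ∫⁻ v, g v ∂I else ⊤) ∂I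
        = ∫⁻ u, (ENNReal.ofReal C * ∫⁻ v, g v ∂I) ∂I := by
      refine lintegral_congr_ae ?_
      filter_upwards [hmemI] with u hu
      rw [if_pos hu]
    rw [this]
    simp

end
end

section
/- Let G : [0,1]×[0,1] → [0,∞) be measurable and symmetric with 0 < ∫₀¹ G(u,v) dv < ∞ for every u ∈ [0,1] (no uniform bounds assumed), and let (μ^u)_{u∈[0,1]} and (ν^u)_{u∈[0,1]} be setwise measurable families of Borel probability measures on ℝ^d with sup_{u∈[0,1]} ∫ |x|² dμ^u(x) < ∞ and sup_{u∈[0,1]} ∫ |x|² dν^u(x) < ∞. Then sup_{u∈[0,1]} W₂([Gμ]^u, [Gν]^u) ≤ sup_{u∈[0,1]} W₂(μ^u, ν^u). -/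
open MeasureTheory ENNReal

noncomputable section

/-- The 2-Wasserstein distance (valued in `ℝ≥0∞`). -/
def W2 {E : Type*} [NormedAddCommGroup E] [MeasurableSpace E]
    (μ ν : Measure E) : ℝ≥0∞ :=
  (W2sq μ ν) ^ (1/2 : ℝ)

/-- Sublevel sets of `π ↦ ∫ g dπ` are closed for continuous `g ≥ 0`. -/
lemma aux_isClosed_lintegral_le {X : Type*} [TopologicalSpace X] [MeasurableSpace X]
    [OpensMeasurableSpace X] (g : X → NNReal) (hg : Continuous g) (c : ℝ≥0∞) :
    IsClosed {π : ProbabilityMeasure X | ∫⁻ p, (g p : ℝ≥0∞) ∂(π : Measure X) ≤ c} := by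
  let F : ℕ → BoundedContinuousFunction X NNReal := fun n =>
    BoundedContinuousFunction.mkOfBound ⟨fun p => min (g p) n, hg.min continuous_const⟩ n (by
      intro x y
      have h1 : ((min (g x) n : NNReal) : ℝ) ≤ n := by exact_mod_cast min_le_right (g x) n
      have h2 : ((min (g y) n : NNReal) : ℝ) ≤ n := by exact_mod_cast min_le_right (g y) n
      have h3 : (0 : ℝ) ≤ ((min (g x) n : NNReal) : ℝ) := NNReal.coe_nonneg _
      have h4 : (0 : ℝ) ≤ ((min (g y) n : NNReal) : ℝ) := NNReal.coe_nonneg _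
      change |((min (g x) n : NNReal) : ℝ) - ((min (g y) n : NNReal) : ℝ)| ≤ n
      rw [abs_le]
      constructor <;> linarith)
  have key : {π : ProbabilityMeasure X | ∫⁻ p, (g p : ℝ≥0∞) ∂(π : Measure X) ≤ c}
      = ⋂ n, {π : ProbabilityMeasure X | ∫⁻ p, (F n p : ℝ≥0∞) ∂(π : Measure X) ≤ c} := by
    ext π
    simp only [Set.mem_iInter, Set.mem_ofPred_eq]
    have h1 : ∀ p, (g p : ℝ≥0∞) = ⨆ n, (F n p : ℝ≥0∞) := by
      intro p
      apply le_antisymm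
      · obtain ⟨n, hn⟩ := exists_nat_ge (g p)
        refine le_iSup_of_le n ?_
        have : F n p = g p := min_eq_left hn
        rw [this]
      · refine iSup_le fun n => ?_
        have : F n p ≤ g p := min_le_left _ _
        exact_mod_cast this
    simp_rw [h1]
    rw [lintegral_iSup]
    · exact iSup_le_iff
    · intro n
      exact ((F n).continuous.measurable).coe_nnreal_ennreal
    · intro m n hmn p
      have : F m p ≤ F n p := min_le_min le_rfl (by exact_mod_cast hmn)
      exact ENNReal.coe_le_coe.2 this
  rw [key]
  refine isClosed_iInter fun n => ?_
  exact isClosed_le (ProbabilityMeasure.continuous_lintegral_boundedContinuousFunction (F n))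
    continuous_const

/-- Couplings with bounded cost and bounded second moment. -/
def auxK {E : Type*} [NormedAddCommGroup E] [MeasurableSpace E] (c R : ℝ≥0∞) :
    Set (ProbabilityMeasure (E × E)) :=
  {π | ∫⁻ p, ((‖p.1 - p.2‖₊ ^ 2 : NNReal) : ℝ≥0∞) ∂(π : Measure (E × E)) ≤ c} ∩
  {π | ∫⁻ p, ((‖p‖₊ ^ 2 : NNReal) : ℝ≥0∞) ∂(π : Measure (E × E)) ≤ R}

lemma aux_isCompact {E : Type*} [NormedAddCommGroup E] [MeasurableSpace E] [BorelSpace E]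
    [ProperSpace E] [SecondCountableTopology E] (c R : ℝ≥0∞) (hR : R ≠ ⊤) :
    IsCompact (auxK (E := E) c R) := by
  have hcl : IsClosed (auxK (E := E) c R) :=
    (aux_isClosed_lintegral_le _ (by fun_prop) c).inter
      (aux_isClosed_lintegral_le _ (by fun_prop) R)
  rw [← hcl.closure_eq]
  apply isCompact_closure_of_isTightMeasureSet
  rw [isTightMeasureSet_iff_exists_isCompact_measure_compl_le]
  intro ε hε
  obtain ⟨n, hn⟩ : ∃ n : ℕ, R / ε ≤ n := by
    obtain ⟨n, hn⟩ := ENNReal.exists_nat_gt (ENNReal.div_ne_top hR hε.ne')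
    exact ⟨n, hn.le⟩
  refine ⟨Metric.closedBall 0 (n + 1), isCompact_closedBall _ _, ?_⟩
  rintro _ ⟨π, hπ, rfl⟩
  have hmeas : Measurable (fun p : E × E => ((‖p‖₊ ^ 2 : NNReal) : ℝ≥0∞)) :=
    (Continuous.measurable (by fun_prop : Continuous (fun p : E × E => ‖p‖₊ ^ 2))).coe_nnreal_ennreal
  have hsub : (Metric.closedBall (0 : E × E) (n + 1))ᶜ ⊆
      {p | ((n : ℝ≥0∞) + 1) ≤ ((‖p‖₊ ^ 2 : NNReal) : ℝ≥0∞)} := by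
    intro p hp
    simp only [Set.mem_compl_iff, Metric.mem_closedBall, dist_zero_right, not_le] at hp
    simp only [Set.mem_ofPred_eq]
    have : ((n : NNReal) + 1) ≤ ‖p‖₊ ^ 2 := by
      rw [← NNReal.coe_le_coe]
      push_cast
      have : (0:ℝ) ≤ n := Nat.cast_nonneg n
      nlinarith
    exact_mod_cast this
  have h1 := meas_ge_le_lintegral_div (μ := (π : Measure (E × E))) hmeas.aemeasurable
    (ε := (n : ℝ≥0∞) + 1) (by simp) (by finiteness)
  refine (measure_mono hsub).trans (h1.trans ?_)
  refine (ENNReal.div_le_div_right hπ.2 _).trans ?_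
  rcases eq_or_ne ε ⊤ with rfl | hεt
  · exact le_top
  rw [ENNReal.div_le_iff (by simp) (by finiteness)]
  rw [ENNReal.div_le_iff hε.ne' hεt] at hn
  refine hn.trans ?_
  rw [mul_comm]
  gcongr
  exact le_self_add

lemma aux_mix {X : Type*} [MeasurableSpace X] (π₁ π₂ : ProbabilityMeasure X) (a b : NNReal)
    (hab : a + b = 1) : ∃ π : ProbabilityMeasure X, ∀ g : X → ℝ≥0∞,
      ∫⁻ p, g p ∂(π : Measure X) = a * ∫⁻ p, g p ∂(π₁ : Measure X)
        + b * ∫⁻ p, g p ∂(π₂ : Measure X) := by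
  refine ⟨⟨a • (π₁ : Measure X) + b • (π₂ : Measure X), ⟨?_⟩⟩, fun g => ?_⟩
  · simp only [Measure.coe_add, Measure.coe_nnreal_smul_apply, Pi.add_apply, measure_univ, mul_one]
    exact_mod_cast hab
  · simp only [ProbabilityMeasure.coe_mk]
    rw [lintegral_add_measure, lintegral_smul_measure, lintegral_smul_measure]
    rfl

lemma aux_barycenter {X Ω I : Type*} [TopologicalSpace X] [MeasurableSpace X]
    [OpensMeasurableSpace X] [MeasurableSpace Ω] (lam : Measure Ω) [IsProbabilityMeasure lam]
    (K : Set (ProbabilityMeasure X)) (hK : IsCompact K)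
    (hconv : ∀ π₁ ∈ K, ∀ π₂ ∈ K, ∀ a b : NNReal, a + b = 1 → ∃ π ∈ K, ∀ g : X → ℝ≥0∞,
      ∫⁻ p, g p ∂(π : Measure X) = a * ∫⁻ p, g p ∂(π₁ : Measure X)
        + b * ∫⁻ p, g p ∂(π₂ : Measure X))
    (F : I → BoundedContinuousFunction X NNReal) (h : Ω → I → ℝ≥0∞)
    (hmeas : ∀ i, AEMeasurable (fun ω => h ω i) lam)
    (hh : ∀ᵐ ω ∂lam, ∃ π ∈ K, ∀ i, ∫⁻ p, (F i p : ℝ≥0∞) ∂(π : Measure X) = h ω i) :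
    ∃ π ∈ K, ∀ i, ∫⁻ p, (F i p : ℝ≥0∞) ∂(π : Measure X) = ∫⁻ ω, h ω i ∂lam := by
  have hcont : ∀ i, Continuous
      (fun π : ProbabilityMeasure X => ∫⁻ p, (F i p : ℝ≥0∞) ∂(π : Measure X)) := fun i =>
    ProbabilityMeasure.continuous_lintegral_boundedContinuousFunction (F i)
  have hbd : ∀ (i : I) (π : ProbabilityMeasure X),
      ∫⁻ p, (F i p : ℝ≥0∞) ∂(π : Measure X) ≤ (nndist (F i) 0 : ℝ≥0∞) := by
    intro i π
    calc ∫⁻ p, (F i p : ℝ≥0∞) ∂(π : Measure X)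
        ≤ ∫⁻ p, (nndist (F i) 0 : ℝ≥0∞) ∂(π : Measure X) := by
          apply lintegral_mono
          intro p
          have h2 := BoundedContinuousFunction.NNReal.upper_bound (F i) p
          exact ENNReal.coe_le_coe.2 h2
      _ = _ := by simp
  have hbd' : ∀ i, ∀ᵐ ω ∂lam, h ω i ≤ (nndist (F i) 0 : ℝ≥0∞) := by
    intro i
    filter_upwards [hh] with ω hω
    obtain ⟨π, -, hπ⟩ := hω
    rw [← hπ i]
    exact hbd i π
  have hint : ∀ i, ∫⁻ ω, h ω i ∂lam ≠ ⊤ := by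
    intro i
    refine ne_top_of_le_ne_top (b := (nndist (F i) 0 : ℝ≥0∞)) (by simp) ?_
    calc ∫⁻ ω, h ω i ∂lam ≤ ∫⁻ ω, (nndist (F i) 0 : ℝ≥0∞) ∂lam := lintegral_mono_ae (hbd' i)
      _ = _ := by simp
  suffices hsuff : _ by
    obtain ⟨π, hπK, hπ⟩ := hK.inter_iInter_nonempty
      (fun i => {π : ProbabilityMeasure X |
        ∫⁻ p, (F i p : ℝ≥0∞) ∂(π : Measure X) = ∫⁻ ω, h ω i ∂lam})
      (fun i => isClosed_eq (hcont i) continuous_const) hsuff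
    exact ⟨π, hπK, fun i => by simpa using Set.mem_iInter.1 hπ i⟩
  intro u
  let Φ : ProbabilityMeasure X → (u → ℝ) := fun π i =>
    (∫⁻ p, (F i p : ℝ≥0∞) ∂(π : Measure X)).toReal
  have hΦ : Continuous Φ := by
    refine continuous_pi fun i => ?_
    exact ENNReal.continuousOn_toReal.comp_continuous (hcont i)
      (fun π => ne_top_of_le_ne_top (by simp) (hbd i π))
  have hS : IsCompact (Φ '' K) := hK.image hΦ
  have hSc : Convex ℝ (Φ '' K) := by
    rintro _ ⟨π₁, h₁, rfl⟩ _ ⟨π₂, h₂, rfl⟩ a b ha hb hab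
    lift a to NNReal using ha
    lift b to NNReal using hb
    obtain ⟨π, hπ, hg⟩ := hconv π₁ h₁ π₂ h₂ a b (by exact_mod_cast hab)
    refine ⟨π, hπ, ?_⟩
    funext i
    have e1 : ∫⁻ p, (F i p : ℝ≥0∞) ∂(π₁ : Measure X) ≠ ⊤ :=
      ne_top_of_le_ne_top (by simp) (hbd i π₁)
    have e2 : ∫⁻ p, (F i p : ℝ≥0∞) ∂(π₂ : Measure X) ≠ ⊤ :=
      ne_top_of_le_ne_top (by simp) (hbd i π₂)
    simp only [Φ, hg, Pi.add_apply, Pi.smul_apply, smul_eq_mul]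
    rw [ENNReal.toReal_add (by finiteness) (by finiteness), ENNReal.toReal_mul,
      ENNReal.toReal_mul]
    simp
  have hgi : ∀ i : u, Integrable (fun ω => (h ω i).toReal) lam := fun i =>
    integrable_toReal_of_lintegral_ne_top (hmeas i) (hint i)
  have hmem : (∫ ω, (fun i : u => (h ω i).toReal) ∂lam) ∈ Φ '' K := by
    refine hSc.integral_mem hS.isClosed ?_ (Integrable.of_eval hgi)
    filter_upwards [hh] with ω hω
    obtain ⟨π, hπK, hπ⟩ := hω
    exact ⟨π, hπK, by funext i; simp [Φ, hπ]⟩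
  obtain ⟨π, hπK, hπ⟩ := hmem
  refine ⟨π, hπK, ?_⟩
  simp only [Set.mem_iInter, Set.mem_ofPred_eq]
  intro i hi
  have h1 := congrFun hπ ⟨i, hi⟩
  rw [eval_integral hgi] at h1
  simp only [Φ] at h1
  rw [integral_toReal (hmeas i)
    (by filter_upwards [hbd' i] with ω hω; exact hω.trans_lt ENNReal.coe_lt_top)] at h1
  exact (ENNReal.toReal_eq_toReal_iff' (ne_top_of_le_ne_top (by simp) (hbd i π)) (hint i)).1 h1

lemma aux_lintegral_mix {Ω E : Type*} [MeasurableSpace Ω] [MeasurableSpace E] (lam : Measure Ω)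
    (μ : Ω → Measure E) (α : Measure E)
    (hmeas : ∀ B, MeasurableSet B → AEMeasurable (fun v => μ v B) lam)
    (hα : ∀ B, MeasurableSet B → α B = ∫⁻ v, μ v B ∂lam)
    (f : E → ℝ≥0∞) (hf : Measurable f) :
    AEMeasurable (fun v => ∫⁻ x, f x ∂(μ v)) lam ∧
      ∫⁻ x, f x ∂α = ∫⁻ v, ∫⁻ x, f x ∂(μ v) ∂lam := by
  refine Measurable.ennreal_induction (motive := fun f =>
    AEMeasurable (fun v => ∫⁻ x, f x ∂(μ v)) lam ∧
      ∫⁻ x, f x ∂α = ∫⁻ v, ∫⁻ x, f x ∂(μ v) ∂lam) ?_ ?_ ?_ hf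
  · intro c s hs
    simp only [lintegral_indicator_const hs]
    refine ⟨(hmeas s hs).const_mul c, ?_⟩
    rw [lintegral_const_mul'' _ (hmeas s hs), hα s hs]
  · intro f g hd hf hg ihf ihg
    simp only [Pi.add_apply, lintegral_add_left hf]
    refine ⟨ihf.1.add ihg.1, ?_⟩
    rw [lintegral_add_left' ihf.1, ihf.2, ihg.2]
  · intro f hf hmono ih
    simp only [lintegral_iSup hf hmono]
    refine ⟨AEMeasurable.iSup fun n => (ih n).1, ?_⟩
    rw [lintegral_iSup' (fun n => (ih n).1)]
    · simp_rw [(ih _).2]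
    · exact Filter.Eventually.of_forall fun v m n hmn => lintegral_mono (hmono hmn)

lemma aux_mix_W2sq {Ω E : Type*} [MeasurableSpace Ω] [NormedAddCommGroup E] [MeasurableSpace E]
    [BorelSpace E] [ProperSpace E] [SecondCountableTopology E]
    (lam : Measure Ω) [IsProbabilityMeasure lam]
    (μ ν : Ω → Measure E) (α β : Measure E) [IsProbabilityMeasure α] [IsProbabilityMeasure β]
    (hμ : ∀ B, MeasurableSet B → AEMeasurable (fun v => μ v B) lam)
    (hν : ∀ B, MeasurableSet B → AEMeasurable (fun v => ν v B) lam)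
    (hα : ∀ B, MeasurableSet B → α B = ∫⁻ v, μ v B ∂lam)
    (hβ : ∀ B, MeasurableSet B → β B = ∫⁻ v, ν v B ∂lam)
    (M N c : ℝ≥0∞) (hM : M ≠ ⊤) (hN : N ≠ ⊤)
    (hμM : ∀ᵐ v ∂lam, ∫⁻ x, (‖x‖₊ : ℝ≥0∞) ^ 2 ∂(μ v) ≤ M)
    (hνN : ∀ᵐ v ∂lam, ∫⁻ x, (‖x‖₊ : ℝ≥0∞) ^ 2 ∂(ν v) ≤ N)
    (hc : ∀ᵐ v ∂lam, W2sq (μ v) (ν v) < c) :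
    W2sq α β ≤ c := by
  let F : (BoundedContinuousFunction E NNReal) ⊕ (BoundedContinuousFunction E NNReal) →
      BoundedContinuousFunction (E × E) NNReal :=
    Sum.elim (fun f => f.compContinuous ⟨Prod.fst, continuous_fst⟩)
      (fun f => f.compContinuous ⟨Prod.snd, continuous_snd⟩)
  let h : Ω → (BoundedContinuousFunction E NNReal) ⊕ (BoundedContinuousFunction E NNReal) →
      ℝ≥0∞ := fun v => Sum.elim (fun f => ∫⁻ x, (f x : ℝ≥0∞) ∂(μ v))
        (fun f => ∫⁻ x, (f x : ℝ≥0∞) ∂(ν v))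
  have hfm : ∀ f : BoundedContinuousFunction E NNReal, Measurable (fun x => (f x : ℝ≥0∞)) :=
    fun f => f.continuous.measurable.coe_nnreal_ennreal
  have hnm : Measurable (fun x : E => (‖x‖₊ : ℝ≥0∞) ^ 2) := by fun_prop
  have hex : ∃ π ∈ auxK (E := E) c (M + N), ∀ i,
      ∫⁻ p, (F i p : ℝ≥0∞) ∂(π : Measure (E × E)) = ∫⁻ ω, h ω i ∂lam := by
    refine aux_barycenter lam (auxK (E := E) c (M + N))
      (aux_isCompact c (M + N) (by finiteness)) ?_ F h ?_ ?_
    · intro π₁ h₁ π₂ h₂ a b hab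
      obtain ⟨π, hπ⟩ := aux_mix π₁ π₂ a b hab
      have hab' : (a : ℝ≥0∞) + b = 1 := by exact_mod_cast hab
      refine ⟨π, ⟨?_, ?_⟩, hπ⟩
      · have e1 := h₁.1
        have e2 := h₂.1
        simp only [Set.mem_ofPred_eq] at e1 e2 ⊢
        rw [hπ]
        calc _ ≤ (a : ℝ≥0∞) * c + b * c := by gcongr
          _ = c := by rw [← add_mul, hab', one_mul]
      · have e1 := h₁.2
        have e2 := h₂.2
        simp only [Set.mem_ofPred_eq] at e1 e2 ⊢
        rw [hπ]
        calc _ ≤ (a : ℝ≥0∞) * (M + N) + b * (M + N) := by gcongr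
          _ = M + N := by rw [← add_mul, hab', one_mul]
    · rintro (f | f)
      · exact (aux_lintegral_mix lam μ α hμ hα _ (hfm f)).1
      · exact (aux_lintegral_mix lam ν β hν hβ _ (hfm f)).1
    · filter_upwards [hμM, hνN, hc] with v hv1 hv2 hv3
      unfold W2sq at hv3
      simp only [iInf_lt_iff] at hv3
      obtain ⟨π, hp, hf, hs, hcost⟩ := hv3
      refine ⟨⟨π, hp⟩, ⟨?_, ?_⟩, ?_⟩
      · change ∫⁻ p, ((‖p.1 - p.2‖₊ ^ 2 : NNReal) : ℝ≥0∞) ∂π ≤ c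
        simpa using hcost.le
      · change ∫⁻ p, ((‖p‖₊ ^ 2 : NNReal) : ℝ≥0∞) ∂π ≤ M + N
        calc ∫⁻ p, ((‖p‖₊ ^ 2 : NNReal) : ℝ≥0∞) ∂π
            ≤ ∫⁻ p, ((‖p.1‖₊ : ℝ≥0∞) ^ 2 + (‖p.2‖₊ : ℝ≥0∞) ^ 2) ∂π := by
              apply lintegral_mono
              intro p
              have : ‖p‖₊ ^ 2 ≤ ‖p.1‖₊ ^ 2 + ‖p.2‖₊ ^ 2 := by
                rw [Prod.nnnorm_def]
                rcases max_choice ‖p.1‖₊ ‖p.2‖₊ with h | h <;> rw [h]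
                · exact le_self_add
                · exact le_add_self
              beta_reduce
              exact_mod_cast this
          _ = ∫⁻ x, (‖x‖₊ : ℝ≥0∞) ^ 2 ∂(μ v) + ∫⁻ x, (‖x‖₊ : ℝ≥0∞) ^ 2 ∂(ν v) := by
              rw [lintegral_add_left (f := fun p : E × E => (‖p.1‖₊ : ℝ≥0∞) ^ 2)
                (hnm.comp measurable_fst), ← hf, ← hs,
                lintegral_map hnm measurable_fst, lintegral_map hnm measurable_snd]
          _ ≤ M + N := add_le_add hv1 hv2
      · rintro (f | f)
        · simp only [h, Sum.elim_inl]
          rw [← hf, lintegral_map (hfm f) measurable_fst]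
          rfl
        · simp only [h, Sum.elim_inr]
          rw [← hs, lintegral_map (hfm f) measurable_snd]
          rfl
  obtain ⟨π, hπK, hπ⟩ := hex
  have h1 : (π : Measure (E × E)).map Prod.fst = α := by
    symm
    apply ext_of_forall_lintegral_eq_of_IsFiniteMeasure
    intro f
    rw [lintegral_map (hfm f) measurable_fst,
      (aux_lintegral_mix lam μ α hμ hα _ (hfm f)).2]
    exact (hπ (Sum.inl f)).symm
  have h2 : (π : Measure (E × E)).map Prod.snd = β := by
    symm
    apply ext_of_forall_lintegral_eq_of_IsFiniteMeasure
    intro f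
    rw [lintegral_map (hfm f) measurable_snd,
      (aux_lintegral_mix lam ν β hν hβ _ (hfm f)).2]
    exact (hπ (Sum.inr f)).symm
  unfold W2sq
  refine iInf_le_of_le (π : Measure (E × E)) (iInf_le_of_le inferInstance
    (iInf_le_of_le h1 (iInf_le_of_le h2 ?_)))
  have := hπK.1
  simpa using this

/-- **Sup stability of graphon aggregation in Wasserstein distance** (no uniform bounds on `G`):
`sup_u W₂([Gμ]^u, [Gν]^u) ≤ sup_u W₂(μ^u, ν^u)`. -/
theorem graphon_aggregate_W2_sup_stability
    (d : ℕ) (G : ℝ → ℝ → ℝ)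
    (hGmeas : Measurable (Function.uncurry G))
    (hGsymm : ∀ u v, G u v = G v u)
    (hGnonneg : ∀ u v, 0 ≤ G u v)
    (hGdeg : ∀ u ∈ Set.Icc (0:ℝ) 1,
      IntegrableOn (fun v => G u v) (Set.Icc (0:ℝ) 1) ∧
        0 < ∫ v in Set.Icc (0:ℝ) 1, G u v)
    (μ ν : ℝ → Measure (EuclideanSpace ℝ (Fin d)))
    (hμprob : ∀ u ∈ Set.Icc (0:ℝ) 1, IsProbabilityMeasure (μ u))
    (hνprob : ∀ u ∈ Set.Icc (0:ℝ) 1, IsProbabilityMeasure (ν u))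
    (hμsetwise : ∀ B : Set (EuclideanSpace ℝ (Fin d)), MeasurableSet B →
      AEMeasurable (fun u => μ u B) (volume.restrict (Set.Icc (0:ℝ) 1)))
    (hνsetwise : ∀ B : Set (EuclideanSpace ℝ (Fin d)), MeasurableSet B →
      AEMeasurable (fun u => ν u B) (volume.restrict (Set.Icc (0:ℝ) 1)))
    (hμmom : (⨆ u ∈ Set.Icc (0:ℝ) 1, ∫⁻ x, (‖x‖₊ : ℝ≥0∞) ^ 2 ∂(μ u)) < ⊤)
    (hνmom : (⨆ u ∈ Set.Icc (0:ℝ) 1, ∫⁻ x, (‖x‖₊ : ℝ≥0∞) ^ 2 ∂(ν u)) < ⊤)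
    (aggμ aggν : ℝ → Measure (EuclideanSpace ℝ (Fin d)))
    (haggμ : IsGraphonAggregate G μ aggμ)
    (haggν : IsGraphonAggregate G ν aggν) :
    (⨆ u ∈ Set.Icc (0:ℝ) 1, W2 (aggμ u) (aggν u)) ≤
      ⨆ u ∈ Set.Icc (0:ℝ) 1, W2 (μ u) (ν u) := by
  refine iSup₂_le fun u hu => ?_
  set S := ⨆ u ∈ Set.Icc (0:ℝ) 1, W2 (μ u) (ν u) with hS
  let vol := volume.restrict (Set.Icc (0:ℝ) 1)
  let w : ℝ → ℝ≥0∞ := fun v => ENNReal.ofReal (gnorm G u v)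
  have hw : Measurable w := by
    refine ENNReal.measurable_ofReal.comp ?_
    exact (hGmeas.comp (measurable_const.prodMk measurable_id)).div_const _
  let lam := vol.withDensity w
  have hac : lam ≪ vol := withDensity_absolutelyContinuous _ _
  have haeIcc : ∀ᵐ v ∂lam, v ∈ Set.Icc (0:ℝ) 1 :=
    hac.ae_le (ae_restrict_mem measurableSet_Icc)
  obtain ⟨hpα, hα⟩ := haggμ u hu
  obtain ⟨hpβ, hβ⟩ := haggν u hu
  have hα' : ∀ B, MeasurableSet B → aggμ u B = ∫⁻ v, μ v B ∂lam := by
    intro B hB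
    rw [hα B hB, lintegral_withDensity_eq_lintegral_mul₀ hw.aemeasurable (hμsetwise B hB)]
    rfl
  have hβ' : ∀ B, MeasurableSet B → aggν u B = ∫⁻ v, ν v B ∂lam := by
    intro B hB
    rw [hβ B hB, lintegral_withDensity_eq_lintegral_mul₀ hw.aemeasurable (hνsetwise B hB)]
    rfl
  have hlam : IsProbabilityMeasure lam := by
    constructor
    have h1 := hα' Set.univ MeasurableSet.univ
    rw [measure_univ] at h1
    rw [h1, ← lintegral_one]
    apply lintegral_congr_ae
    filter_upwards [haeIcc] with v hv
    have := hμprob v hv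
    simp
  have hle : W2sq (aggμ u) (aggν u) ≤ S ^ (2 : ℝ) := by
    refine le_of_forall_gt_imp_ge_of_dense fun c hc => ?_
    refine aux_mix_W2sq lam μ ν (aggμ u) (aggν u)
      (fun B hB => (hμsetwise B hB).mono_ac hac) (fun B hB => (hνsetwise B hB).mono_ac hac)
      hα' hβ' _ _ c hμmom.ne hνmom.ne ?_ ?_ ?_
    · filter_upwards [haeIcc] with v hv
      exact le_iSup₂ (f := fun u (_ : u ∈ Set.Icc (0:ℝ) 1) =>
        ∫⁻ x, (‖x‖₊ : ℝ≥0∞) ^ 2 ∂(μ u)) v hv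
    · filter_upwards [haeIcc] with v hv
      exact le_iSup₂ (f := fun u (_ : u ∈ Set.Icc (0:ℝ) 1) =>
        ∫⁻ x, (‖x‖₊ : ℝ≥0∞) ^ 2 ∂(ν u)) v hv
    · filter_upwards [haeIcc] with v hv
      refine lt_of_le_of_lt ?_ hc
      have h1 : W2 (μ v) (ν v) ≤ S :=
        le_iSup₂ (f := fun u (_ : u ∈ Set.Icc (0:ℝ) 1) => W2 (μ u) (ν u)) v hv
      have h2 : W2sq (μ v) (ν v) = (W2 (μ v) (ν v)) ^ (2 : ℝ) := by
        unfold W2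
        rw [← ENNReal.rpow_mul]
        norm_num
      rw [h2]
      exact ENNReal.rpow_le_rpow h1 (by norm_num)
  calc W2 (aggμ u) (aggν u) ≤ (S ^ (2 : ℝ)) ^ (1/2 : ℝ) :=
        ENNReal.rpow_le_rpow hle (by norm_num)
    _ = S := by
        rw [← ENNReal.rpow_mul]
        norm_num

end
end

section
/- Let w : [0,1] → [0,∞) be Lebesgue-measurable with ∫₀¹ w(v) dv = 1, and let (μ^v)_{v∈[0,1]} and (ν^v)_{v∈[0,1]} be setwise measurable families of Borel probability measures on ℝ^d with sup_{v∈[0,1]} ∫ |x|² dμ^v(x) < ∞ and sup_{v∈[0,1]} ∫ |x|² dν^v(x) < ∞. Let μ̄ and ν̄ be the mixture probability measures determined by μ̄(B) = ∫₀¹ w(v) μ^v(B) dv and ν̄(B) = ∫₀¹ w(v) ν^v(B) dv for Borel sets B. Then W₂²(μ̄, ν̄) ≤ ∫₀¹ w(v) W₂²(μ^v, ν^v) dv, where the right-hand side is an upper Lebesgue integral. -/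
open MeasureTheory ENNReal

noncomputable section

/-- closedness and convexity combine to a Jensen-type statement for transport plans -/
theorem jensen_plan {I : Type*} [Fintype I] (c : I → I → ℝ) (m : Measure ℝ)
    [IsProbabilityMeasure m] (a b : ℝ → I → ℝ) (t : ℝ → ℝ)
    (ha : Integrable a m) (hb : Integrable b m) (ht : Integrable t m)
    (h : ∀ᵐ v ∂m, ∃ p : I → I → ℝ, (∀ i j, 0 ≤ p i j) ∧ (∀ i, ∑ j, p i j = a v i) ∧
      (∀ j, ∑ i, p i j = b v j) ∧ ∑ i, ∑ j, p i j * c i j ≤ t v) :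
    ∃ p : I → I → ℝ, (∀ i j, 0 ≤ p i j) ∧ (∀ i, ∑ j, p i j = (∫ v, a v ∂m) i) ∧
      (∀ j, ∑ i, p i j = (∫ v, b v ∂m) j) ∧ ∑ i, ∑ j, p i j * c i j ≤ ∫ v, t v ∂m := by
  set S : Set ((I → ℝ) × (I → ℝ) × ℝ) := {z | ∃ p : I → I → ℝ, (∀ i j, 0 ≤ p i j) ∧
    (∀ i, ∑ j, p i j = z.1 i) ∧ (∀ j, ∑ i, p i j = z.2.1 j) ∧
    ∑ i, ∑ j, p i j * c i j ≤ z.2.2} with hS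
  have hconv : Convex ℝ S := by
    rintro z ⟨p, hp0, hp1, hp2, hp3⟩ z' ⟨p', hp0', hp1', hp2', hp3'⟩ s s' hs hs' hss
    refine ⟨fun i j => s * p i j + s' * p' i j, fun i j => ?_, fun i => ?_, fun j => ?_, ?_⟩
    · have := hp0 i j
      have := hp0' i j
      positivity
    · simp [Finset.sum_add_distrib, ← Finset.mul_sum, hp1, hp1']
    · simp [Finset.sum_add_distrib, ← Finset.mul_sum, hp2, hp2']
    · have : ∑ i, ∑ j, (s * p i j + s' * p' i j) * c i j
          = s * (∑ i, ∑ j, p i j * c i j) + s' * (∑ i, ∑ j, p' i j * c i j) := by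
        simp only [Finset.mul_sum, ← Finset.sum_add_distrib]
        refine Finset.sum_congr rfl fun i _ => Finset.sum_congr rfl fun j _ => by ring
      rw [this]
      simp only [Prod.snd_add, Prod.smul_snd, smul_eq_mul]
      gcongr
  have hclosed : IsClosed S := by
    apply IsSeqClosed.isClosed
    intro z z₀ hz hlim
    choose p hp0 hp1 hp2 hp3 using hz
    obtain ⟨R, hR⟩ := (Metric.isBounded_range_of_tendsto z hlim).exists_norm_le
    have hb : ∀ n, p n ∈ Metric.closedBall (0 : I → I → ℝ) R := by
      intro n
      have hzn : ‖z n‖ ≤ R := hR _ ⟨n, rfl⟩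
      have hR0 : 0 ≤ R := (norm_nonneg _).trans hzn
      rw [mem_closedBall_zero_iff, pi_norm_le_iff_of_nonneg hR0]
      intro i
      rw [pi_norm_le_iff_of_nonneg hR0]
      intro j
      rw [Real.norm_of_nonneg (hp0 n i j)]
      calc p n i j ≤ ∑ j, p n i j :=
            Finset.single_le_sum (f := fun j => p n i j) (fun j _ => hp0 n i j) (Finset.mem_univ j)
        _ = (z n).1 i := hp1 n i
        _ ≤ ‖(z n).1 i‖ := Real.le_norm_self _
        _ ≤ ‖(z n).1‖ := norm_le_pi_norm _ i
        _ ≤ ‖z n‖ := norm_fst_le _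
        _ ≤ R := hzn
    obtain ⟨p₀, -, φ, hφ, hpl⟩ := tendsto_subseq_of_bounded Metric.isBounded_closedBall hb
    have hl := hlim.comp hφ.tendsto_atTop
    have hpij : ∀ i j, Filter.Tendsto (fun n => p (φ n) i j) Filter.atTop (nhds (p₀ i j)) :=
      fun i j => tendsto_pi_nhds.1 (tendsto_pi_nhds.1 hpl i) j
    refine ⟨p₀, fun i j => ?_, fun i => ?_, fun j => ?_, ?_⟩
    · exact ge_of_tendsto' (hpij i j) fun n => hp0 _ i j
    · refine tendsto_nhds_unique (tendsto_finsetSum _ fun j _ => hpij i j) ?_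
      simp_rw [hp1]
      exact tendsto_pi_nhds.1 (continuous_fst.tendsto _ |>.comp hl) i
    · refine tendsto_nhds_unique (tendsto_finsetSum _ fun i _ => hpij i j) ?_
      simp_rw [hp2]
      exact tendsto_pi_nhds.1 ((continuous_fst.comp continuous_snd).tendsto _ |>.comp hl) j
    · refine le_of_tendsto_of_tendsto' (tendsto_finsetSum _ fun i _ => tendsto_finsetSum _ fun j _ =>
        (hpij i j).mul_const (c i j)) ((continuous_snd.comp continuous_snd).tendsto _ |>.comp hl)
        fun n => hp3 _
  have := hconv.integral_mem hclosed (f := fun v => (a v, b v, t v)) (μ := m) h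
    (ha.prodMk (hb.prodMk ht))
  rw [integral_pair ha (hb.prodMk ht), integral_pair hb ht] at this
  exact this

theorem mixture_lintegral {E : Type*} [MeasurableSpace E] (m : Measure ℝ) (k : ℝ → ℝ≥0∞)
    (hk : AEMeasurable k m) (μ : ℝ → Measure E)
    (hμ : ∀ B, MeasurableSet B → AEMeasurable (fun v => μ v B) m) (μbar : Measure E)
    (hbar : ∀ B, MeasurableSet B → μbar B = ∫⁻ v, k v * μ v B ∂m)
    {f : E → ℝ≥0∞} (hf : Measurable f) :
    AEMeasurable (fun v => ∫⁻ x, f x ∂(μ v)) m ∧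
      ∫⁻ x, f x ∂μbar = ∫⁻ v, k v * ∫⁻ x, f x ∂(μ v) ∂m := by
  refine Measurable.ennreal_induction (motive := fun f : E → ℝ≥0∞ =>
    AEMeasurable (fun v => ∫⁻ x, f x ∂(μ v)) m ∧
      ∫⁻ x, f x ∂μbar = ∫⁻ v, k v * ∫⁻ x, f x ∂(μ v) ∂m) ?_ ?_ ?_ hf
  · intro c s hs
    simp only [lintegral_indicator hs, lintegral_const, Measure.restrict_apply_univ]
    refine ⟨(hμ s hs).const_mul c, ?_⟩
    rw [hbar s hs, ← lintegral_const_mul'' _ (hk.fun_mul (hμ s hs))]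
    refine lintegral_congr fun v => by ring
  · intro f g _ hf hg ihf ihg
    simp only [Pi.add_apply, lintegral_add_left hf]
    refine ⟨ihf.1.add ihg.1, ?_⟩
    rw [ihf.2, ihg.2, ← lintegral_add_left' (hk.fun_mul ihf.1)]
    refine lintegral_congr fun v => by simp [mul_add]
  · intro f hf hmono ih
    have : ∀ ρ : Measure E, ∫⁻ x, ⨆ n, f n x ∂ρ = ⨆ n, ∫⁻ x, f n x ∂ρ := fun ρ =>
      lintegral_iSup hf hmono
    simp only [this]
    refine ⟨AEMeasurable.iSup fun n => (ih n).1, ?_⟩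
    simp_rw [ENNReal.mul_iSup]
    rw [lintegral_iSup' (fun n => hk.fun_mul (ih n).1)]
    · exact iSup_congr fun n => (ih n).2
    · refine Filter.Eventually.of_forall fun v i j hij => ?_
      dsimp only
      gcongr
      exact hmono hij _

theorem norm_pt {E : Type*} [NormedAddCommGroup E] (η : ℝ) (hη : 0 < η) (x y x' y' : E) :
    (‖x - y‖₊ : ℝ≥0∞) ^ 2 ≤ ENNReal.ofReal (1 + η) * (‖x' - y'‖₊ : ℝ≥0∞) ^ 2 +
      ENNReal.ofReal (2 * (1 + η⁻¹)) * ((‖x - x'‖₊ : ℝ≥0∞) ^ 2 + (‖y - y'‖₊ : ℝ≥0∞) ^ 2) := by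
  have hr : ‖x - y‖ ^ 2 ≤ (1 + η) * ‖x' - y'‖ ^ 2 +
      (2 * (1 + η⁻¹)) * (‖x - x'‖ ^ 2 + ‖y - y'‖ ^ 2) := by
    have h1 : ‖x - y‖ ≤ ‖x' - y'‖ + (‖x - x'‖ + ‖y - y'‖) := by
      have : x - y = (x' - y') + ((x - x') - (y - y')) := by abel
      rw [this]
      exact (norm_add_le _ _).trans (by gcongr; exact norm_sub_le _ _)
    have hA := norm_nonneg (x - y)
    have hB := norm_nonneg (x' - y')
    have hC := norm_nonneg (x - x')
    have hD := norm_nonneg (y - y')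
    generalize ‖x - y‖ = A at *
    generalize ‖x' - y'‖ = B at *
    generalize ‖x - x'‖ = C at *
    generalize ‖y - y'‖ = D at *
    have h2 : A ^ 2 ≤ (B + (C + D)) ^ 2 := by gcongr
    have h3 : 0 ≤ η * (B - η⁻¹ * (C + D)) ^ 2 := by positivity
    have h4 : η * (B - η⁻¹ * (C + D)) ^ 2
        = η * B ^ 2 - 2 * B * (C + D) + η⁻¹ * (C + D) ^ 2 := by
      field_simp
      ring
    have h5 : (1 + η⁻¹) * (C + D) ^ 2 ≤ (1 + η⁻¹) * (2 * (C ^ 2 + D ^ 2)) := by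
      gcongr
      nlinarith [sq_nonneg (C - D)]
    nlinarith
  have e : ∀ z : E, (‖z‖₊ : ℝ≥0∞) ^ 2 = ENNReal.ofReal (‖z‖ ^ 2) := fun z => by
    rw [ENNReal.ofReal_pow (norm_nonneg _), ofReal_norm]; rfl
  simp only [e]
  rw [← ENNReal.ofReal_add (by positivity) (by positivity), ← ENNReal.ofReal_mul (by positivity),
    ← ENNReal.ofReal_mul (by positivity), ← ENNReal.ofReal_add (by positivity) (by positivity)]
  exact ENNReal.ofReal_le_ofReal hr

theorem jensen_enn {I : Type*} [Fintype I] (c : I → I → ℝ≥0∞) (hc : ∀ i j, c i j ≠ ⊤)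
    (m : Measure ℝ) [IsProbabilityMeasure m] (a b : ℝ → I → ℝ≥0∞) (t : ℝ → ℝ≥0∞)
    (ha : ∀ i, AEMeasurable (fun v => a v i) m) (hb : ∀ i, AEMeasurable (fun v => b v i) m)
    (ht : AEMeasurable t m) (ha' : ∀ i, ∫⁻ v, a v i ∂m ≠ ⊤) (hb' : ∀ i, ∫⁻ v, b v i ∂m ≠ ⊤)
    (ht' : ∫⁻ v, t v ∂m ≠ ⊤)
    (h : ∀ᵐ v ∂m, t v ≠ ⊤ → ∃ p : I → I → ℝ≥0∞, (∀ i, ∑ j, p i j = a v i) ∧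
      (∀ j, ∑ i, p i j = b v j) ∧ ∑ i, ∑ j, p i j * c i j ≤ t v) :
    ∃ p : I → I → ℝ≥0∞, (∀ i, ∑ j, p i j = ∫⁻ v, a v i ∂m) ∧
      (∀ j, ∑ i, p i j = ∫⁻ v, b v j ∂m) ∧ ∑ i, ∑ j, p i j * c i j ≤ ∫⁻ v, t v ∂m := by
  have haf : ∀ᵐ v ∂m, ∀ i, a v i < ⊤ := ae_all_iff.2 fun i => ae_lt_top' (ha i) (ha' i)
  have hbf : ∀ᵐ v ∂m, ∀ i, b v i < ⊤ := ae_all_iff.2 fun i => ae_lt_top' (hb i) (hb' i)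
  have htf := ae_lt_top' ht ht'
  have hai := fun i => integrable_toReal_of_lintegral_ne_top (ha i) (ha' i)
  have hbi := fun i => integrable_toReal_of_lintegral_ne_top (hb i) (hb' i)
  obtain ⟨p, hp0, hp1, hp2, hp3⟩ := jensen_plan (fun i j => (c i j).toReal) m
    (fun v i => (a v i).toReal) (fun v i => (b v i).toReal) (fun v => (t v).toReal)
    (Integrable.of_eval hai) (Integrable.of_eval hbi)
    (integrable_toReal_of_lintegral_ne_top ht ht') (by
      filter_upwards [h, haf, hbf, htf] with v hv hva hvb hvt
      obtain ⟨p, hp1, hp2, hp3⟩ := hv hvt.ne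
      have hpf : ∀ i j, p i j ≠ ⊤ := fun i j => by
        have := hva i
        rw [← hp1 i] at this
        exact (ENNReal.sum_lt_top.1 this j (Finset.mem_univ j)).ne
      refine ⟨fun i j => (p i j).toReal, fun i j => ENNReal.toReal_nonneg, fun i => ?_,
        fun j => ?_, ?_⟩
      · rw [← hp1 i, ENNReal.toReal_sum fun j _ => hpf i j]
      · rw [← hp2 j, ENNReal.toReal_sum fun i _ => hpf i j]
      · refine le_trans (le_of_eq ?_) (ENNReal.toReal_mono hvt.ne hp3)
        rw [ENNReal.toReal_sum fun i _ => ?_]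
        · refine Finset.sum_congr rfl fun i _ => ?_
          rw [ENNReal.toReal_sum fun j _ => ENNReal.mul_ne_top (hpf i j) (hc i j)]
          simp
        · exact ENNReal.sum_ne_top.2 fun j _ => ENNReal.mul_ne_top (hpf i j) (hc i j))
  refine ⟨fun i j => ENNReal.ofReal (p i j), fun i => ?_, fun j => ?_, ?_⟩
  · rw [← ENNReal.ofReal_sum_of_nonneg fun j _ => hp0 i j, hp1, eval_integral hai,
      integral_toReal (ha i) (haf.mono fun v hv => hv i), ENNReal.ofReal_toReal (ha' i)]
  · rw [← ENNReal.ofReal_sum_of_nonneg fun i _ => hp0 i j, hp2, eval_integral hbi,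
      integral_toReal (hb j) (hbf.mono fun v hv => hv j), ENNReal.ofReal_toReal (hb' j)]
  · rw [← ENNReal.ofReal_toReal ht', ← integral_toReal ht htf]
    refine le_trans (le_of_eq ?_) (ENNReal.ofReal_le_ofReal hp3)
    rw [ENNReal.ofReal_sum_of_nonneg fun i _ => Finset.sum_nonneg fun j _ =>
      mul_nonneg (hp0 i j) ENNReal.toReal_nonneg]
    refine Finset.sum_congr rfl fun i _ => ?_
    rw [ENNReal.ofReal_sum_of_nonneg fun j _ => mul_nonneg (hp0 i j) ENNReal.toReal_nonneg]
    refine Finset.sum_congr rfl fun j _ => ?_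
    rw [ENNReal.ofReal_mul (hp0 i j), ENNReal.ofReal_toReal (hc i j)]

theorem glue_plan {E I : Type*} [MeasurableSpace E] [Fintype I] [MeasurableSpace I]
    [MeasurableSingletonClass I] (μ ν : Measure E) [IsProbabilityMeasure μ]
    [IsProbabilityMeasure ν] (Q : E → I) (hQ : Measurable Q) (p c : I → I → ℝ≥0∞)
    (hp1 : ∀ i, ∑ j, p i j = μ (Q ⁻¹' {i})) (hp2 : ∀ j, ∑ i, p i j = ν (Q ⁻¹' {j})) :
    ∃ π : Measure (E × E), IsProbabilityMeasure π ∧ π.map Prod.fst = μ ∧ π.map Prod.snd = ν ∧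
      ∫⁻ z, c (Q z.1) (Q z.2) ∂π ≤ ∑ i, ∑ j, p i j * c i j := by
  classical
  have hm : ∀ i, MeasurableSet (Q ⁻¹' {i}) := fun i => hQ (measurableSet_singleton i)
  have hle1 : ∀ i j, p i j ≤ μ (Q ⁻¹' {i}) := fun i j => by
    rw [← hp1 i]; exact Finset.single_le_sum (f := fun j => p i j) (fun _ _ => zero_le) (Finset.mem_univ j)
  have hle2 : ∀ i j, p i j ≤ ν (Q ⁻¹' {j}) := fun i j => by
    rw [← hp2 j]; exact Finset.single_le_sum (f := fun i => p i j) (fun _ _ => zero_le) (Finset.mem_univ i)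
  have hdec : ∀ ρ : Measure E, IsProbabilityMeasure ρ →
      ∑ i, ρ (Q ⁻¹' {i}) • ProbabilityTheory.cond ρ (Q ⁻¹' {i}) = ρ := by
    intro ρ hρ
    ext s hs
    simp only [Measure.coe_finsetSum, Finset.sum_apply, Measure.smul_apply, smul_eq_mul]
    have : ∀ i, ρ (Q ⁻¹' {i}) * ProbabilityTheory.cond ρ (Q ⁻¹' {i}) s = ρ (s ∩ Q ⁻¹' {i}) := by
      intro i
      rw [mul_comm, ProbabilityTheory.cond_mul_eq_inter (hm i), Set.inter_comm]
    simp only [this]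
    rw [← measure_biUnion_finset]
    · congr 1
      ext x
      simp
    · intro i _ j _ hij
      refine Set.disjoint_left.2 fun x hx hx' => hij ?_
      rw [← hx.2, ← hx'.2]
    · exact fun i _ => hs.inter (hm i)
  set π : Measure (E × E) := ∑ i, ∑ j, p i j •
    (ProbabilityTheory.cond μ (Q ⁻¹' {i})).prod (ProbabilityTheory.cond ν (Q ⁻¹' {j})) with hπ
  have h1 : π.map Prod.fst = μ := by
    rw [hπ, ← hdec μ inferInstance]
    ext s hs
    rw [Measure.map_apply measurable_fst hs]
    simp only [Measure.coe_finsetSum, Finset.sum_apply, Measure.smul_apply, smul_eq_mul]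
    refine Finset.sum_congr rfl fun i _ => ?_
    rw [hdec μ inferInstance, ← hp1 i, Finset.sum_mul]
    refine Finset.sum_congr rfl fun j _ => ?_
    by_cases h0 : ν (Q ⁻¹' {j}) = 0
    · have : p i j = 0 := le_antisymm ((hle2 i j).trans h0.le) zero_le
      simp [this]
    · have := ProbabilityTheory.cond_isProbabilityMeasure h0
      rw [← Set.prod_univ, Measure.prod_prod]
      simp
  have h2 : π.map Prod.snd = ν := by
    rw [hπ, ← hdec ν inferInstance]
    ext s hs
    rw [Measure.map_apply measurable_snd hs]
    simp only [Measure.coe_finsetSum, Finset.sum_apply, Measure.smul_apply, smul_eq_mul]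
    rw [Finset.sum_comm]
    refine Finset.sum_congr rfl fun j _ => ?_
    rw [hdec ν inferInstance, ← hp2 j, Finset.sum_mul]
    refine Finset.sum_congr rfl fun i _ => ?_
    by_cases h0 : μ (Q ⁻¹' {i}) = 0
    · have : p i j = 0 := le_antisymm ((hle1 i j).trans h0.le) zero_le
      simp [this]
    · have := ProbabilityTheory.cond_isProbabilityMeasure h0
      rw [← Set.univ_prod, Measure.prod_prod]
      simp
  refine ⟨π, ?_, h1, h2, ?_⟩
  · constructor
    have := congrArg (fun ρ : Measure E => ρ Set.univ) h1
    simpa [Measure.map_apply measurable_fst MeasurableSet.univ] using this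
  · rw [hπ, lintegral_finsetSum_measure]
    refine Finset.sum_le_sum fun i _ => ?_
    rw [lintegral_finsetSum_measure]
    refine Finset.sum_le_sum fun j _ => ?_
    rw [lintegral_smul_measure, smul_eq_mul]
    gcongr
    have e1 : ∀ᵐ z ∂(ProbabilityTheory.cond μ (Q ⁻¹' {i})).prod
        (ProbabilityTheory.cond ν (Q ⁻¹' {j})), c (Q z.1) (Q z.2) = c i j := by
      have f1 := Measure.quasiMeasurePreserving_fst
        (μ := ProbabilityTheory.cond μ (Q ⁻¹' {i})) (ν := ProbabilityTheory.cond ν (Q ⁻¹' {j}))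
        |>.ae (ProbabilityTheory.ae_cond_mem (hm i))
      have f2 := Measure.quasiMeasurePreserving_snd
        (μ := ProbabilityTheory.cond μ (Q ⁻¹' {i})) (ν := ProbabilityTheory.cond ν (Q ⁻¹' {j}))
        |>.ae (ProbabilityTheory.ae_cond_mem (hm j))
      filter_upwards [f1, f2] with z hz1 hz2
      simp only [Set.mem_preimage, Set.mem_singleton_iff] at hz1 hz2
      rw [hz1, hz2]
    rw [lintegral_congr_ae e1, lintegral_const]
    refine mul_le_of_le_one_right zero_le ?_
    rw [← Set.univ_prod_univ, Measure.prod_prod]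
    exact mul_le_one' prob_le_one prob_le_one


theorem W2sq_le_of_plan {E : Type*} [NormedAddCommGroup E] [MeasurableSpace E] {μ ν : Measure E}
    (π : Measure (E × E)) (h : IsProbabilityMeasure π) (h1 : π.map Prod.fst = μ)
    (h2 : π.map Prod.snd = ν) : W2sq μ ν ≤ ∫⁻ p, (‖p.1 - p.2‖₊ : ℝ≥0∞) ^ 2 ∂π :=
  iInf_le_of_le π <| iInf_le_of_le h <| iInf_le_of_le h1 <| iInf_le_of_le h2 le_rfl

theorem exists_plan_of_W2sq_lt {E : Type*} [NormedAddCommGroup E] [MeasurableSpace E]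
    {μ ν : Measure E} {a : ℝ≥0∞} (h : W2sq μ ν < a) :
    ∃ π : Measure (E × E), IsProbabilityMeasure π ∧ π.map Prod.fst = μ ∧ π.map Prod.snd = ν ∧
      ∫⁻ p, (‖p.1 - p.2‖₊ : ℝ≥0∞) ^ 2 ∂π < a := by
  simp only [W2sq, iInf_lt_iff] at h
  obtain ⟨π, h0, h1, h2, h3⟩ := h
  exact ⟨π, h0, h1, h2, h3⟩

/-- cost comparison integrated against a plan -/
theorem cost_compare {E : Type*} [NormedAddCommGroup E] [MeasurableSpace E] [BorelSpace E]
    [SecondCountableTopology E] {μ ν : Measure E} (π : Measure (E × E))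
    (h1 : π.map Prod.fst = μ) (h2 : π.map Prod.snd = ν) (L C : ℝ≥0∞)
    (A B : E × E → ℝ≥0∞) (hB : Measurable B) (e : E → ℝ≥0∞) (he : Measurable e)
    (h : ∀ z, A z ≤ L * B z + C * (e z.1 + e z.2)) :
    ∫⁻ z, A z ∂π ≤ L * ∫⁻ z, B z ∂π + C * (∫⁻ x, e x ∂μ + ∫⁻ x, e x ∂ν) := by
  refine (lintegral_mono h).trans (le_of_eq ?_)
  have hf1 : Measurable fun z : E × E => e z.1 := he.comp measurable_fst
  have hf2 : Measurable fun z : E × E => e z.2 := he.comp measurable_snd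
  have hf12 : Measurable fun z : E × E => e z.1 + e z.2 := hf1.add hf2
  rw [lintegral_add_left (hB.const_mul L), lintegral_const_mul _ hB, lintegral_const_mul _ hf12,
    lintegral_add_left hf1, ← h1, ← h2,
    lintegral_map he measurable_fst, lintegral_map he measurable_snd]

theorem key_step {E I : Type*} [NormedAddCommGroup E] [MeasurableSpace E] [BorelSpace E]
    [SecondCountableTopology E] [Fintype I] [MeasurableSpace I] [MeasurableSingletonClass I]
    (m : Measure ℝ) [IsProbabilityMeasure m] (k : ℝ → ℝ≥0∞) (hk : AEMeasurable k m)
    (hkf : ∀ v, k v ≠ ⊤) (μ ν : ℝ → Measure E)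
    (hμ : ∀ B, MeasurableSet B → AEMeasurable (fun v => μ v B) m)
    (hν : ∀ B, MeasurableSet B → AEMeasurable (fun v => ν v B) m)
    (hμp : ∀ᵐ v ∂m, IsProbabilityMeasure (μ v))
    (μbar νbar : Measure E) [IsProbabilityMeasure μbar] [IsProbabilityMeasure νbar]
    (hμbar : ∀ B, MeasurableSet B → μbar B = ∫⁻ v, k v * μ v B ∂m)
    (hνbar : ∀ B, MeasurableSet B → νbar B = ∫⁻ v, k v * ν v B ∂m)
    (g : ℝ → ℝ≥0∞) (hg : Measurable g) (hg' : ∫⁻ v, g v ∂m ≠ ⊤)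
    (hWg : ∀ v, k v * W2sq (μ v) (ν v) ≤ g v)
    (Q : E → I) (hQ : Measurable Q) (r : I → E) (η : ℝ) (hη : 0 < η) (δ : ℝ≥0∞) (hδ : δ ≠ ⊤)
    (hδe : ∫⁻ x, (‖x - r (Q x)‖₊ : ℝ≥0∞) ^ 2 ∂μbar +
      ∫⁻ x, (‖x - r (Q x)‖₊ : ℝ≥0∞) ^ 2 ∂νbar ≤ δ) :
    W2sq μbar νbar ≤ ENNReal.ofReal (1 + η) *
      (ENNReal.ofReal (1 + η) * (∫⁻ v, g v ∂m + ENNReal.ofReal η) +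
        ENNReal.ofReal (2 * (1 + η⁻¹)) * δ) + ENNReal.ofReal (2 * (1 + η⁻¹)) * δ := by
  set L := ENNReal.ofReal (1 + η) with hL
  set C := ENNReal.ofReal (2 * (1 + η⁻¹)) with hC
  have hLt : L ≠ ⊤ := ENNReal.ofReal_ne_top
  have hCt : C ≠ ⊤ := ENNReal.ofReal_ne_top
  set e : E → ℝ≥0∞ := fun x => (‖x - r (Q x)‖₊ : ℝ≥0∞) ^ 2 with he_def
  have hr : Measurable r := measurable_of_finite r
  have he : Measurable e := by
    have : Measurable fun x => x - r (Q x) := measurable_id.sub (hr.comp hQ)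
    exact (this.nnnorm.coe_nnreal_ennreal).pow_const 2
  set c : I → I → ℝ≥0∞ := fun i j => (‖r i - r j‖₊ : ℝ≥0∞) ^ 2 with hc_def
  have hc : ∀ i j, c i j ≠ ⊤ := fun i j => by simp [hc_def]
  have hQQ : Measurable fun z : E × E => (Q z.1, Q z.2) :=
    (hQ.comp measurable_fst).prodMk (hQ.comp measurable_snd)
  have hcQ : Measurable fun z : E × E => c (Q z.1) (Q z.2) :=
    (measurable_of_finite (fun ij : I × I => c ij.1 ij.2)).comp hQQ
  have hm : ∀ i, MeasurableSet (Q ⁻¹' {i}) := fun i => hQ (measurableSet_singleton i)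
  obtain ⟨heμ1, heμ2⟩ := mixture_lintegral m k hk μ hμ μbar hμbar he
  obtain ⟨heν1, heν2⟩ := mixture_lintegral m k hk ν hν νbar hνbar he
  have hk1 : ∫⁻ v, k v ∂m = 1 := by
    have := hμbar Set.univ MeasurableSet.univ
    rw [measure_univ] at this
    rw [this]
    refine lintegral_congr_ae ?_
    filter_upwards [hμp] with v hv
    simp
  set t : ℝ → ℝ≥0∞ := fun v => L * (g v + k v * ENNReal.ofReal η) +
    C * (k v * ∫⁻ x, e x ∂(μ v) + k v * ∫⁻ x, e x ∂(ν v)) with ht_def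
  have ht1 : AEMeasurable (fun v => g v + k v * ENNReal.ofReal η) m :=
    hg.aemeasurable.add (hk.mul_const _)
  have ht2 : AEMeasurable (fun v => k v * ∫⁻ x, e x ∂(μ v) + k v * ∫⁻ x, e x ∂(ν v)) m :=
    (hk.mul heμ1).add (hk.mul heν1)
  have ht : AEMeasurable t m := (ht1.const_mul _).add (ht2.const_mul _)
  have htint : ∫⁻ v, t v ∂m ≤ L * (∫⁻ v, g v ∂m + ENNReal.ofReal η) + C * δ := by
    rw [ht_def, lintegral_add_left' (ht1.const_mul L), lintegral_const_mul'' _ ht1,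
      lintegral_const_mul'' _ ht2, lintegral_add_left hg, lintegral_mul_const'' _ hk, hk1, one_mul,
      lintegral_add_left' (hk.fun_mul heμ1), ← heμ2, ← heν2]
    gcongr
  have htfin : ∫⁻ v, t v ∂m ≠ ⊤ := by
    refine ne_top_of_le_ne_top ?_ htint
    exact ENNReal.add_ne_top.2 ⟨ENNReal.mul_ne_top hLt (ENNReal.add_ne_top.2
      ⟨hg', ENNReal.ofReal_ne_top⟩), ENNReal.mul_ne_top hCt hδ⟩
  obtain ⟨p, hp1, hp2, hp3⟩ := jensen_enn c hc m (fun v i => k v * μ v (Q ⁻¹' {i}))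
    (fun v i => k v * ν v (Q ⁻¹' {i})) t (fun i => hk.mul (hμ _ (hm i)))
    (fun i => hk.mul (hν _ (hm i))) ht
    (fun i => by rw [← hμbar _ (hm i)]; exact measure_ne_top _ _)
    (fun i => by rw [← hνbar _ (hm i)]; exact measure_ne_top _ _) htfin (by
      filter_upwards [ae_lt_top hg hg'] with v hgv _
      by_cases hk0 : k v = 0
      · exact ⟨fun _ _ => 0, by simp [hk0], by simp [hk0], by simp⟩
      have hlt : W2sq (μ v) (ν v) < g v / k v + ENNReal.ofReal η := by
        have h1 : W2sq (μ v) (ν v) ≤ g v / k v := by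
          rw [ENNReal.le_div_iff_mul_le (Or.inl hk0) (Or.inl (hkf v)), mul_comm]
          exact hWg v
        refine h1.trans_lt (ENNReal.lt_add_right (ENNReal.div_ne_top hgv.ne hk0) ?_)
        simpa using hη
      obtain ⟨π, hπ, hπ1, hπ2, hπ3⟩ := exists_plan_of_W2sq_lt hlt
      refine ⟨fun i j => k v * π.map (fun z : E × E => (Q z.1, Q z.2)) {(i, j)},
        fun i => ?_, fun j => ?_, ?_⟩
      · rw [← Finset.mul_sum, ← hπ1, Measure.map_apply measurable_fst (hm i)]
        congr 1
        have := sum_measure_preimage_singleton (μ := π.restrict (Prod.fst ⁻¹' (Q ⁻¹' {i})))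
          (f := fun z : E × E => Q z.2) Finset.univ
          (fun j _ => (hQ.comp measurable_snd) (measurableSet_singleton j))
        simp only [Finset.coe_univ, Set.preimage_univ, Measure.restrict_apply_univ] at this
        rw [← this]
        refine Finset.sum_congr rfl fun j _ => ?_
        rw [Measure.map_apply hQQ (measurableSet_singleton _),
          Measure.restrict_apply (show MeasurableSet ((fun z : E × E => Q z.2) ⁻¹' {j}) from
            (hQ.comp measurable_snd) (measurableSet_singleton j))]
        congr 1
        ext z
        simp [and_comm]
      · rw [← Finset.mul_sum, ← hπ2, Measure.map_apply measurable_snd (hm j)]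
        congr 1
        have := sum_measure_preimage_singleton (μ := π.restrict (Prod.snd ⁻¹' (Q ⁻¹' {j})))
          (f := fun z : E × E => Q z.1) Finset.univ
          (fun i _ => (hQ.comp measurable_fst) (measurableSet_singleton i))
        simp only [Finset.coe_univ, Set.preimage_univ, Measure.restrict_apply_univ] at this
        rw [← this]
        refine Finset.sum_congr rfl fun i _ => ?_
        rw [Measure.map_apply hQQ (measurableSet_singleton _),
          Measure.restrict_apply (show MeasurableSet ((fun z : E × E => Q z.1) ⁻¹' {i}) from
            (hQ.comp measurable_fst) (measurableSet_singleton i))]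
        congr 1
        ext z
        simp
      · have hsum : ∑ i, ∑ j, k v * π.map (fun z : E × E => (Q z.1, Q z.2)) {(i, j)} * c i j
            = k v * ∫⁻ z, c (Q z.1) (Q z.2) ∂π := by
          rw [← lintegral_map (f := fun ij : I × I => c ij.1 ij.2) (measurable_of_finite _) hQQ,
            lintegral_fintype, Fintype.sum_prod_type]
          simp only [Finset.mul_sum]
          refine Finset.sum_congr rfl fun i _ => Finset.sum_congr rfl fun j _ => by ring
        rw [hsum]
        have hcc := cost_compare π hπ1 hπ2 L C (fun z => c (Q z.1) (Q z.2))
          (fun z => (‖z.1 - z.2‖₊ : ℝ≥0∞) ^ 2)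
          (((measurable_fst.sub measurable_snd).nnnorm.coe_nnreal_ennreal).pow_const 2) e he
          (fun z => by
            have := norm_pt η hη (r (Q z.1)) (r (Q z.2)) z.1 z.2
            have hrev : ∀ x y : E, ‖x - y‖₊ = ‖y - x‖₊ := fun x y =>
              NNReal.eq (norm_sub_rev x y)
            rw [hrev (r (Q z.1)) z.1, hrev (r (Q z.2)) z.2] at this
            exact this)
        have hkc : k v * ∫⁻ z, (‖z.1 - z.2‖₊ : ℝ≥0∞) ^ 2 ∂π ≤ g v + k v * ENNReal.ofReal η := by
          calc _ ≤ k v * (g v / k v + ENNReal.ofReal η) := by gcongr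
            _ = _ := by rw [mul_add, ENNReal.mul_div_cancel hk0 (hkf v)]
        calc _ ≤ k v * (L * ∫⁻ z, (‖z.1 - z.2‖₊ : ℝ≥0∞) ^ 2 ∂π +
            C * (∫⁻ x, e x ∂(μ v) + ∫⁻ x, e x ∂(ν v))) := by gcongr
          _ = L * (k v * ∫⁻ z, (‖z.1 - z.2‖₊ : ℝ≥0∞) ^ 2 ∂π) +
            C * (k v * ∫⁻ x, e x ∂(μ v) + k v * ∫⁻ x, e x ∂(ν v)) := by ring
          _ ≤ _ := by exact add_le_add_left (mul_le_mul_right hkc L) _)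
  simp only [← hμbar _ (hm _)] at hp1
  simp only [← hνbar _ (hm _)] at hp2
  obtain ⟨π, hπ, hπ1, hπ2, hπ3⟩ := glue_plan μbar νbar Q hQ p c hp1 hp2
  refine (W2sq_le_of_plan π hπ hπ1 hπ2).trans ?_
  have hcc := cost_compare π hπ1 hπ2 L C (fun z => (‖z.1 - z.2‖₊ : ℝ≥0∞) ^ 2)
    (fun z => c (Q z.1) (Q z.2)) hcQ e he
    (fun z => norm_pt η hη z.1 z.2 (r (Q z.1)) (r (Q z.2)))
  refine hcc.trans ?_
  gcongr
  exact (hπ3.trans hp3).trans htint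

/-- **Convexity of the squared Wasserstein distance under mixtures**:
`W₂²(μ̄, ν̄) ≤ ∫₀¹ w(v) W₂²(μ^v, ν^v) dv` for mixtures with a common weight function `w`. -/
theorem W2sq_mixture_convexity
    (d : ℕ) (w : ℝ → ℝ)
    (hw_meas : AEMeasurable w (volume.restrict (Set.Icc (0:ℝ) 1)))
    (hw_nonneg : ∀ v ∈ Set.Icc (0:ℝ) 1, 0 ≤ w v)
    (hw_int : ∫ v in Set.Icc (0:ℝ) 1, w v = 1)
    (μ ν : ℝ → Measure (EuclideanSpace ℝ (Fin d)))
    (hμprob : ∀ v ∈ Set.Icc (0:ℝ) 1, IsProbabilityMeasure (μ v))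
    (hνprob : ∀ v ∈ Set.Icc (0:ℝ) 1, IsProbabilityMeasure (ν v))
    (hμsetwise : ∀ B : Set (EuclideanSpace ℝ (Fin d)), MeasurableSet B →
      AEMeasurable (fun v => μ v B) (volume.restrict (Set.Icc (0:ℝ) 1)))
    (hνsetwise : ∀ B : Set (EuclideanSpace ℝ (Fin d)), MeasurableSet B →
      AEMeasurable (fun v => ν v B) (volume.restrict (Set.Icc (0:ℝ) 1)))
    (hμmom : (⨆ v ∈ Set.Icc (0:ℝ) 1, ∫⁻ x, (‖x‖₊ : ℝ≥0∞) ^ 2 ∂(μ v)) < ⊤)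
    (hνmom : (⨆ v ∈ Set.Icc (0:ℝ) 1, ∫⁻ x, (‖x‖₊ : ℝ≥0∞) ^ 2 ∂(ν v)) < ⊤)
    (μbar νbar : Measure (EuclideanSpace ℝ (Fin d)))
    (hμbar_prob : IsProbabilityMeasure μbar)
    (hνbar_prob : IsProbabilityMeasure νbar)
    (hμbar : ∀ B : Set (EuclideanSpace ℝ (Fin d)), MeasurableSet B →
      μbar B = ∫⁻ v in Set.Icc (0:ℝ) 1, ENNReal.ofReal (w v) * μ v B)
    (hνbar : ∀ B : Set (EuclideanSpace ℝ (Fin d)), MeasurableSet B →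
      νbar B = ∫⁻ v in Set.Icc (0:ℝ) 1, ENNReal.ofReal (w v) * ν v B) :
    W2sq μbar νbar ≤
      upperLintegral (volume.restrict (Set.Icc (0:ℝ) 1))
        (fun v => ENNReal.ofReal (w v) * W2sq (μ v) (ν v)) := by
  have : IsProbabilityMeasure (volume.restrict (Set.Icc (0:ℝ) 1)) := ⟨by simp⟩
  set m := volume.restrict (Set.Icc (0:ℝ) 1) with hm
  unfold upperLintegral
  refine le_iInf fun g => le_iInf fun hg => le_iInf fun hWg => ?_
  by_cases hG : ∫⁻ v, g v ∂m = ⊤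
  · rw [hG]; exact le_top
  have hk : AEMeasurable (fun v => ENNReal.ofReal (w v)) m := hw_meas.ennreal_ofReal
  have hsq : Measurable fun x : EuclideanSpace ℝ (Fin d) => (‖x‖₊ : ℝ≥0∞) ^ 2 :=
    (measurable_id.nnnorm.coe_nnreal_ennreal).pow_const 2
  have hμp : ∀ᵐ v ∂m, IsProbabilityMeasure (μ v) :=
    (ae_restrict_mem measurableSet_Icc).mono hμprob
  have hk1 : ∫⁻ v, ENNReal.ofReal (w v) ∂m = 1 := by
    have := hμbar Set.univ MeasurableSet.univ
    rw [measure_univ] at this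
    rw [this]
    refine lintegral_congr_ae ?_
    filter_upwards [hμp] with v hv
    simp
  have hmom : ∀ (ρ : ℝ → Measure (EuclideanSpace ℝ (Fin d)))
      (ρbar : Measure (EuclideanSpace ℝ (Fin d))),
      (∀ B, MeasurableSet B → AEMeasurable (fun v => ρ v B) m) →
      (⨆ v ∈ Set.Icc (0:ℝ) 1, ∫⁻ x, (‖x‖₊ : ℝ≥0∞) ^ 2 ∂(ρ v)) < ⊤ →
      (∀ B, MeasurableSet B → ρbar B = ∫⁻ v, ENNReal.ofReal (w v) * ρ v B ∂m) →
      ∫⁻ x, (‖x‖₊ : ℝ≥0∞) ^ 2 ∂ρbar < ⊤ := by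
    intro ρ ρbar h1 h2 h3
    rw [(mixture_lintegral m _ hk ρ h1 ρbar h3 hsq).2]
    refine lt_of_le_of_lt ?_ h2
    set K := ⨆ v ∈ Set.Icc (0:ℝ) 1, ∫⁻ x, (‖x‖₊ : ℝ≥0∞) ^ 2 ∂(ρ v) with hK
    calc _ ≤ ∫⁻ v, ENNReal.ofReal (w v) * K ∂m := by
          refine lintegral_mono_ae ?_
          filter_upwards [ae_restrict_mem measurableSet_Icc] with v hv
          gcongr
          exact le_iSup₂ (f := fun v (_ : v ∈ Set.Icc (0:ℝ) 1) =>
            ∫⁻ x, (‖x‖₊ : ℝ≥0∞) ^ 2 ∂(ρ v)) v hv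
      _ = K := by rw [lintegral_mul_const'' _ hk, hk1, one_mul]
  have hLp : MemLp (id : EuclideanSpace ℝ (Fin d) → _) 2 (μbar + νbar) := by
    refine ⟨measurable_id.aestronglyMeasurable, ?_⟩
    rw [eLpNorm_lt_top_iff_lintegral_rpow_enorm_lt_top (by simp) (by simp)]
    have := ENNReal.add_lt_top.2 ⟨hmom μ μbar hμsetwise hμmom hμbar,
      hmom ν νbar hνsetwise hνmom hνbar⟩
    rw [← lintegral_add_measure] at this
    simpa [enorm_eq_nnnorm] using this
  have main : ∀ η : ℝ, 0 < η → W2sq μbar νbar ≤ ENNReal.ofReal ((1 + η) *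
      ((1 + η) * ((∫⁻ v, g v ∂m).toReal + η) + η) + η) := by
    intro η hη
    set C := 2 * (1 + η⁻¹) with hC
    have hCpos : 0 < C := by positivity
    have hε : ENNReal.ofReal (Real.sqrt (η / C)) ≠ 0 := by
      simp only [ne_eq, ENNReal.ofReal_eq_zero, not_le]
      positivity
    obtain ⟨q, hq, -⟩ := hLp.exists_simpleFunc_eLpNorm_sub_lt (by simp) hε
    have hq2 : ∫⁻ x, (‖x - q x‖₊ : ℝ≥0∞) ^ 2 ∂(μbar + νbar) ≤ ENNReal.ofReal (η / C) := by
      have h1 := eLpNorm_nnreal_pow_eq_lintegral (μ := μbar + νbar)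
        (f := (id : EuclideanSpace ℝ (Fin d) → _) - ⇑q) (p := 2) (by simp)
      have h2 : ∫⁻ x, (‖x - q x‖₊ : ℝ≥0∞) ^ 2 ∂(μbar + νbar)
          = eLpNorm (id - ⇑q) 2 (μbar + νbar) ^ 2 := by
        simpa [enorm_eq_nnnorm] using h1.symm
      rw [h2]
      calc _ ≤ ENNReal.ofReal (Real.sqrt (η / C)) ^ 2 := by gcongr
        _ = _ := by rw [← ENNReal.ofReal_pow (Real.sqrt_nonneg _), Real.sq_sqrt (by positivity)]
    rw [lintegral_add_measure] at hq2
    have := key_step (I := q.range) m (fun v => ENNReal.ofReal (w v)) hk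
      (fun v => ENNReal.ofReal_ne_top) μ ν hμsetwise hνsetwise hμp μbar νbar hμbar hνbar g hg hG hWg
      (fun x => ⟨q x, q.mem_range_self x⟩) (q.measurable.subtype_mk) (fun i => i.1) η hη
      (ENNReal.ofReal (η / C)) ENNReal.ofReal_ne_top hq2
    refine this.trans (le_of_eq ?_)
    have hGr := ENNReal.ofReal_toReal hG
    have hG0 : 0 ≤ (∫⁻ v, g v ∂m).toReal := ENNReal.toReal_nonneg
    rw [← ENNReal.ofReal_mul hCpos.le, mul_div_cancel₀ _ hCpos.ne', ← hGr,
      ← ENNReal.ofReal_add hG0 hη.le, ← ENNReal.ofReal_mul (by positivity),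
      ← ENNReal.ofReal_add (by positivity) hη.le, ← ENNReal.ofReal_mul (by positivity),
      ← ENNReal.ofReal_add (by positivity) hη.le, ENNReal.toReal_ofReal hG0]
  have hlim : Filter.Tendsto (fun η : ℝ => ENNReal.ofReal ((1 + η) *
      ((1 + η) * ((∫⁻ v, g v ∂m).toReal + η) + η) + η)) (nhdsWithin 0 (Set.Ioi 0))
      (nhds (∫⁻ v, g v ∂m)) := by
    have hcont : Continuous (fun η : ℝ => ENNReal.ofReal ((1 + η) *
      ((1 + η) * ((∫⁻ v, g v ∂m).toReal + η) + η) + η)) :=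
      ENNReal.continuous_ofReal.comp (by fun_prop)
    have := hcont.tendsto 0
    simp only [add_zero, one_mul, ENNReal.ofReal_toReal hG] at this
    exact this.mono_left nhdsWithin_le_nhds
  refine ge_of_tendsto hlim ?_
  filter_upwards [self_mem_nhdsWithin] with η hη using main η hη

end
end

section
/- Let G, G' : [0,1]×[0,1] → [0,∞) be graphons (measurable, symmetric, bounded) with ‖G‖_∞ ≤ M, ‖G'‖_∞ ≤ M and with degrees bounded below by c > 0, and let (μ^u)_{u∈[0,1]}, (μ'^u)_{u∈[0,1]} be setwise measurable families of Borel probability measures on ℝ^d with ∫ |x|² dμ^u(x) ≤ K and ∫ |x|² dμ'^u(x) ≤ K for every u ∈ [0,1]. Then there exists a constant C, depending only on M, c and K, such that ∫₀¹ W₂²([Gμ]^u, [G'μ']^u) du ≤ C ( ∫₀¹∫₀¹ |G(u,v) − G'(u,v)| dv du + ∫₀¹ W₂²(μ^u, μ'^u) du ), where the integrals of Wasserstein distances are upper Lebesgue integrals. -/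
open MeasureTheory ENNReal

noncomputable section

/-- A setwise a.e.-measurable family of probability measures agrees a.e. with a measurable one. -/
lemma exists_measurable_family {E : Type*} [MeasurableSpace E] [MeasurableSpace.CountablyGenerated E]
    [Nonempty E] (m : Measure ℝ) (s : Set ℝ) (hs : ∀ᵐ u ∂m, u ∈ s) (μ : ℝ → Measure E)
    (hp : ∀ u ∈ s, IsProbabilityMeasure (μ u))
    (hm : ∀ B, MeasurableSet B → AEMeasurable (fun u => μ u B) m) :
    ∃ κ : ℝ → Measure E, Measurable κ ∧ (∀ u, IsProbabilityMeasure (κ u)) ∧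
      ∀ᵐ u ∂m, κ u = μ u := by
  classical
  set S := generateSetAlgebra (MeasurableSpace.countableGeneratingSet E) with hS
  have hSc : S.Countable :=
    countable_generateSetAlgebra (MeasurableSpace.countable_countableGeneratingSet)
  have hgen : MeasurableSpace.generateFrom S = ‹MeasurableSpace E› := by
    rw [hS, generateFrom_generateSetAlgebra_eq,
      MeasurableSpace.generateFrom_countableGeneratingSet]
  have hSm : ∀ B ∈ S, MeasurableSet B := fun B hB => by
    rw [← hgen]; exact MeasurableSpace.measurableSet_generateFrom hB
  have hpi : IsPiSystem S := fun a ha b hb _ =>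
    isSetAlgebra_generateSetAlgebra.inter_mem ha hb
  have hae : ∀ᵐ u ∂m, u ∈ s ∧ ∀ B : S, μ u B = (hm B (hSm B B.2)).mk _ u := by
    have := hSc.to_subtype
    refine hs.and ?_
    rw [ae_all_iff]
    intro B
    exact (hm B (hSm B B.2)).ae_eq_mk
  obtain ⟨N, hN, hNm, hN0⟩ := exists_measurable_superset_of_null (ae_iff.1 hae)
  have hgood : ∀ u, u ∉ N → u ∈ s ∧ ∀ B : S, μ u B = (hm B (hSm B B.2)).mk _ u := by
    intro u hu
    by_contra hc
    exact hu (hN hc)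
  let x0 : E := Classical.arbitrary E
  have hprob : ∀ u, IsProbabilityMeasure (if u ∈ N then Measure.dirac x0 else μ u) := by
    intro u
    split_ifs with h
    · infer_instance
    · exact hp u (hgood u h).1
  refine ⟨fun u => if u ∈ N then Measure.dirac x0 else μ u, ?_, hprob, ?_⟩
  · have := hprob
    refine Measurable.measure_of_isPiSystem_of_isProbabilityMeasure hgen.symm hpi ?_
    intro B hB
    have : (fun u => (if u ∈ N then Measure.dirac x0 else μ u) B) =
        fun u => if u ∈ N then Measure.dirac x0 B else (hm B (hSm B hB)).mk _ u := by
      ext u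
      split_ifs with h
      · rfl
      · exact (hgood u h).2 ⟨B, hB⟩
    rw [this]
    exact Measurable.ite hNm measurable_const (hm B (hSm B hB)).measurable_mk
  · have : ∀ᵐ u ∂m, u ∉ N := by rw [ae_iff]; simpa using hN0
    filter_upwards [this] with u hu
    simp [hu]

/-- Two finite measures of equal mass admit a coupling. -/
lemma exists_coupling {X Y : Type*} [MeasurableSpace X] [MeasurableSpace Y]
    (r : Measure X) (r' : Measure Y) [IsFiniteMeasure r] [IsFiniteMeasure r']
    (h : r Set.univ = r' Set.univ) :
    ∃ p : Measure (X × Y), p.map Prod.fst = r ∧ p.map Prod.snd = r' := by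
  by_cases h0 : r Set.univ = 0
  · have h1 := Measure.measure_univ_eq_zero.1 h0
    have h2 := Measure.measure_univ_eq_zero.1 (h ▸ h0)
    exact ⟨0, by simp [h1], by simp [h2]⟩
  · refine ⟨(r Set.univ)⁻¹ • r.prod r', ?_, ?_⟩
    · rw [Measure.map_smul, Measure.map_fst_prod, smul_smul, ← h,
        ENNReal.inv_mul_cancel h0 (measure_ne_top _ _), one_smul]
    · rw [Measure.map_smul, Measure.map_snd_prod, smul_smul,
        ENNReal.inv_mul_cancel h0 (measure_ne_top _ _), one_smul]

lemma coupling_cost_le {X Y : Type*} [MeasurableSpace X] [MeasurableSpace Y]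
    {r : Measure X} {r' : Measure Y} {p : Measure (X × Y)}
    (h1 : p.map Prod.fst = r) (h2 : p.map Prod.snd = r')
    {C : X × Y → ℝ≥0∞} {f : X → ℝ≥0∞} {f' : Y → ℝ≥0∞} (hf : Measurable f) (hf' : Measurable f')
    (hC : ∀ x y, C (x, y) ≤ 2 * (f x + f' y)) :
    ∫⁻ z, C z ∂p ≤ 2 * (∫⁻ x, f x ∂r + ∫⁻ y, f' y ∂r') := by
  subst h1 h2
  rw [lintegral_map hf measurable_fst, lintegral_map hf' measurable_snd,
    ← lintegral_add_left (by fun_prop), ← lintegral_const_mul]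
  · exact lintegral_mono fun z => hC z.1 z.2
  · fun_prop

/-- Discretisation of a separable space into countably many small cells. -/
lemma exists_cells {E : Type*} [NormedAddCommGroup E] [MeasurableSpace E] [BorelSpace E]
    [TopologicalSpace.SeparableSpace E] (ε : ℝ) (hε : 0 < ε) :
    ∃ (T : E → ℕ) (x : ℕ → E), Measurable T ∧ ∀ y, ‖y - x (T y)‖ < ε := by
  classical
  have hex : ∀ y : E, ∃ n, dist y (TopologicalSpace.denseSeq E n) < ε := by
    intro y
    obtain ⟨n, hn⟩ := (TopologicalSpace.denseRange_denseSeq E).exists_dist_lt y hε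
    exact ⟨n, hn⟩
  refine ⟨fun y => Nat.find (hex y), TopologicalSpace.denseSeq E, ?_, ?_⟩
  · refine measurable_find hex fun k => ?_
    exact (isOpen_lt (by fun_prop) (by fun_prop)).measurableSet
  · intro y
    rw [← dist_eq_norm]
    exact Nat.find_spec (hex y)

lemma lift_aux {E F : Type*} [MeasurableSpace E] [MeasurableSpace F] (μ : Measure E) (ν : Measure F)
    [IsFiniteMeasure μ] [IsFiniteMeasure ν] (T : E → ℕ) (S : F → ℕ) (hT : Measurable T)
    (hS : Measurable S)
    (p : ℕ → ℕ → ℝ≥0∞) (h1 : ∀ j, ∑' k, p j k = μ.map T {j})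
    (h2 : ∀ k, ∑' j, p j k = ν.map S {k}) (B : Set E) (hB : MeasurableSet B) :
    ∫⁻ x in B, ∫⁻ y, p (T x) (S y) * (μ.map T {T x})⁻¹ * (ν.map S {S y})⁻¹ ∂ν ∂μ = μ B := by
  have key : ∀ j, μ.map T {j} ≠ 0 →
      ∫⁻ y, p j (S y) * (μ.map T {j})⁻¹ * (ν.map S {S y})⁻¹ ∂ν = 1 := by
    intro j hj
    have := lintegral_map (μ := ν) (f := fun k => p j k * (μ.map T {j})⁻¹ * (ν.map S {k})⁻¹)
      (measurable_of_countable _) hS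
    rw [← this, lintegral_countable']
    have e : ∀ k, p j k * (μ.map T {j})⁻¹ * (ν.map S {k})⁻¹ * ν.map S {k}
        = p j k * (μ.map T {j})⁻¹ := by
      intro k
      by_cases hk : ν.map S {k} = 0
      · have : p j k = 0 := by
          have := h2 k
          rw [hk, ENNReal.tsum_eq_zero] at this
          exact this j
        simp [this]
      · rw [mul_assoc, ENNReal.inv_mul_cancel hk (measure_ne_top _ _), mul_one]
    simp_rw [e]
    rw [ENNReal.tsum_mul_right, h1, ENNReal.mul_inv_cancel hj (measure_ne_top _ _)]
  have hae : ∀ᵐ x ∂μ, μ.map T {T x} ≠ 0 := by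
    have : ∀ᵐ j ∂(μ.map T), μ.map T {j} ≠ 0 := by
      rw [ae_iff, ← Set.biUnion_of_singleton {a | ¬ μ.map T {a} ≠ 0}]
      rw [measure_biUnion_null_iff (Set.to_countable _)]
      intro j hj
      simpa using hj
    exact ae_of_ae_map hT.aemeasurable this
  rw [← setLIntegral_one]
  refine lintegral_congr_ae ?_
  filter_upwards [ae_restrict_of_ae hae] with x hx
  exact key _ hx

lemma exists_lift {E : Type*} [MeasurableSpace E] (μ ν : Measure E)
    [IsFiniteMeasure μ] [IsFiniteMeasure ν] (T : E → ℕ) (hT : Measurable T)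
    (p : Measure (ℕ × ℕ)) (h1 : p.map Prod.fst = μ.map T) (h2 : p.map Prod.snd = ν.map T) :
    ∃ π : Measure (E × E), π.map Prod.fst = μ ∧ π.map Prod.snd = ν ∧
      π.map (fun z => (T z.1, T z.2)) = p := by
  have e1 : ∀ j, ∑' k, p {(j, k)} = μ.map T {j} := by
    intro j
    rw [← h1, Measure.map_apply measurable_fst (measurableSet_singleton j),
      ← measure_iUnion _ (fun _ => measurableSet_singleton _)]
    · congr 1; ext ⟨a, b⟩; simp [eq_comm]
    · intro k k' hk; simp [Function.onFun, hk]
  have e2 : ∀ k, ∑' j, p {(j, k)} = ν.map T {k} := by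
    intro k
    rw [← h2, Measure.map_apply measurable_snd (measurableSet_singleton k),
      ← measure_iUnion _ (fun _ => measurableSet_singleton _)]
    · congr 1; ext ⟨a, b⟩; simp [eq_comm]
    · intro k k' hk; simp [Function.onFun, hk]
  let F : ℕ × ℕ → ℝ≥0∞ := fun z => p {(z.1, z.2)} * (μ.map T {z.1})⁻¹ * (ν.map T {z.2})⁻¹
  have hTT : Measurable (fun z : E × E => (T z.1, T z.2)) := by fun_prop
  have hF : Measurable (fun z : E × E => F (T z.1, T z.2)) :=
    (measurable_of_countable F).comp hTT
  refine ⟨(μ.prod ν).withDensity (fun z => F (T z.1, T z.2)), ?_, ?_, ?_⟩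
  · ext B hB
    rw [Measure.map_apply measurable_fst hB, withDensity_apply _ (measurable_fst hB)]
    have : (Prod.fst ⁻¹' B : Set (E × E)) = B ×ˢ Set.univ := by ext; simp
    rw [this, setLIntegral_prod _ hF.aemeasurable]
    simp only [Measure.restrict_univ]
    exact lift_aux μ ν T T hT hT (fun j k => p {(j, k)}) e1 e2 B hB
  · ext B hB
    rw [Measure.map_apply measurable_snd hB, withDensity_apply _ (measurable_snd hB)]
    have : (Prod.snd ⁻¹' B : Set (E × E)) = Set.univ ×ˢ B := by ext; simp
    rw [this, ← Measure.prod_restrict, lintegral_prod_symm _ hF.aemeasurable]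
    simp only [Measure.restrict_univ]
    rw [← lift_aux ν μ T T hT hT (fun j k => p {(k, j)}) e2 e1 B hB]
    refine lintegral_congr fun x => lintegral_congr fun y => ?_
    simp only [F]
    ring
  · apply Measure.ext_of_singleton
    rintro ⟨j, k⟩
    rw [Measure.map_apply hTT (measurableSet_singleton _),
      withDensity_apply _ (hTT (measurableSet_singleton _))]
    have : ((fun z : E × E => (T z.1, T z.2)) ⁻¹' {(j, k)}) = (T ⁻¹' {j}) ×ˢ (T ⁻¹' {k}) := by
      ext; simp
    rw [setLIntegral_congr_fun (g := fun _ => F (j, k)) (hTT (measurableSet_singleton _))]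
    · rw [setLIntegral_const, this, Measure.prod_prod,
        ← Measure.map_apply hT (measurableSet_singleton _),
        ← Measure.map_apply hT (measurableSet_singleton _)]
      simp only [F]
      have z1 : μ.map T {j} = 0 → p {(j, k)} = 0 := fun h => by
        have := e1 j; rw [h, ENNReal.tsum_eq_zero] at this; exact this k
      have z2 : ν.map T {k} = 0 → p {(j, k)} = 0 := fun h => by
        have := e2 k; rw [h, ENNReal.tsum_eq_zero] at this; exact this j
      by_cases hj : μ.map T {j} = 0
      · simp [z1 hj]
      by_cases hk : ν.map T {k} = 0
      · simp [z2 hk]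
      calc _ = p {(j, k)} * ((μ.map T {j})⁻¹ * μ.map T {j}) * ((ν.map T {k})⁻¹ * ν.map T {k}) := by
            ring
        _ = _ := by
          rw [ENNReal.inv_mul_cancel hj (measure_ne_top _ _),
            ENNReal.inv_mul_cancel hk (measure_ne_top _ _), mul_one, mul_one]
    · intro z hz
      simp only [Set.mem_preimage, Set.mem_singleton_iff] at hz
      simp only [hz]

/-- The finitely supported measure with rational weights `P`. -/
def ratMeas (P : (ℕ × ℕ) →₀ ℚ) : Measure (ℕ × ℕ) :=
  Measure.count.withDensity (fun z => (((P z : ℝ).toNNReal : NNReal) : ℝ≥0∞))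

lemma ratMeas_singleton (P : (ℕ × ℕ) →₀ ℚ) (z : ℕ × ℕ) :
    ratMeas P {z} = (((P z : ℝ).toNNReal : NNReal) : ℝ≥0∞) := by
  simp [ratMeas, withDensity_apply]

lemma lintegral_ratMeas (P : (ℕ × ℕ) →₀ ℚ) (W : ℕ × ℕ → ℝ≥0∞) :
    ∫⁻ z, W z ∂(ratMeas P) = ∑ z ∈ P.support, W z * (((P z : ℝ).toNNReal : NNReal) : ℝ≥0∞) := by
  rw [lintegral_countable', tsum_eq_sum (s := P.support)]
  · simp [ratMeas_singleton]
  · intro z hz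
    rw [ratMeas_singleton]
    simp [Finsupp.notMem_support_iff.1 hz]

lemma lintegral_ratMeas_ne_top (P : (ℕ × ℕ) →₀ ℚ) (W : ℕ × ℕ → ℝ≥0∞) (hW : ∀ z, W z ≠ ∞) :
    ∫⁻ z, W z ∂(ratMeas P) ≠ ∞ := by
  rw [lintegral_ratMeas]
  exact ENNReal.sum_ne_top.2 fun z _ => ENNReal.mul_ne_top (hW z) ENNReal.coe_ne_top

instance (P : (ℕ × ℕ) →₀ ℚ) : IsFiniteMeasure (ratMeas P) := by
  constructor
  have := lintegral_ratMeas_ne_top P (fun _ => 1) (by simp)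
  rw [lintegral_one] at this
  exact this.lt_top

lemma measure_le_of_singleton {α : Type*} [MeasurableSpace α] [Countable α]
    [MeasurableSingletonClass α] {μ ν : Measure α} (h : ∀ a, μ {a} ≤ ν {a}) : μ ≤ ν := by
  rw [Measure.le_iff]
  intro s hs
  rw [← lintegral_indicator_one hs, ← lintegral_indicator_one hs, lintegral_countable',
    lintegral_countable']
  exact ENNReal.tsum_le_tsum fun a => mul_le_mul_right (h a) _

lemma exists_rat_below (x w δ : ℝ≥0∞) (hx : x ≠ ∞) (hw : w ≠ ∞) (hδ : δ ≠ 0) :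
    ∃ q : ℚ, (((q : ℝ).toNNReal : NNReal) : ℝ≥0∞) ≤ x ∧
      w * x ≤ w * (((q : ℝ).toNNReal : NNReal) : ℝ≥0∞) + δ := by
  by_cases hx0 : x = 0
  · exact ⟨0, by simp, by simp [hx0]⟩
  by_cases hw0 : w = 0
  · exact ⟨0, by simp, by simp [hw0]⟩
  have hlt : x - δ / w < x :=
    ENNReal.sub_lt_self hx hx0 (ENNReal.div_ne_zero.2 ⟨hδ, hw⟩)
  obtain ⟨q, _, h1, h2⟩ := ENNReal.lt_iff_exists_rat_btwn.1 hlt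
  refine ⟨q, h2.le, ?_⟩
  have h3 : x ≤ (((q : ℝ).toNNReal : NNReal) : ℝ≥0∞) + δ / w := tsub_le_iff_right.1 h1.le
  calc w * x ≤ w * ((((q : ℝ).toNNReal : NNReal) : ℝ≥0∞) + δ / w) := by gcongr
    _ = _ := by rw [mul_add, ENNReal.mul_div_cancel hw0 hw]

lemma exists_ratMeas_below (p : Measure (ℕ × ℕ)) [IsFiniteMeasure p] (W : ℕ × ℕ → ℝ≥0∞)
    (hW : ∀ z, W z ≠ ∞) (hfin : ∫⁻ z, W z ∂p ≠ ∞) (η : ℝ≥0∞) (hη : η ≠ 0) :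
    ∃ P : (ℕ × ℕ) →₀ ℚ, ratMeas P ≤ p ∧ ∫⁻ z, W z ∂p ≤ ∫⁻ z, W z ∂(ratMeas P) + η := by
  classical
  rw [lintegral_countable'] at hfin ⊢
  have hη2 : η / 2 ≠ 0 := ENNReal.div_ne_zero.2 ⟨hη, by simp⟩
  obtain ⟨S, hS⟩ : ∃ S : Finset (ℕ × ℕ), ∑' z, W z * p {z} ≤ ∑ z ∈ S, W z * p {z} + η / 2 := by
    by_cases h0 : ∑' z, W z * p {z} = 0
    · exact ⟨∅, by simp [h0]⟩
    have hlt := ENNReal.sub_lt_self hfin h0 hη2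
    nth_rewrite 2 [ENNReal.tsum_eq_iSup_sum] at hlt
    obtain ⟨S, hS⟩ := lt_iSup_iff.1 hlt
    exact ⟨S, tsub_le_iff_right.1 hS.le⟩
  have hδ : η / 2 / (S.card + 1 : ℝ≥0∞) ≠ 0 :=
    ENNReal.div_ne_zero.2 ⟨hη2, by simp⟩
  choose q hq1 hq2 using fun z => exists_rat_below (p {z}) (W z) _ (measure_ne_top p _) (hW z) hδ
  let P : (ℕ × ℕ) →₀ ℚ := Finsupp.onFinset S (fun z => if z ∈ S then q z else 0)
    (fun z hz => by by_contra h; simp [h] at hz)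
  have hP : ∀ z, P z = if z ∈ S then q z else 0 := fun z => rfl
  refine ⟨P, measure_le_of_singleton fun z => ?_, ?_⟩
  · rw [ratMeas_singleton, hP]
    split_ifs
    · exact hq1 z
    · simp
  · have h1 : ∑ z ∈ S, W z * (((q z : ℝ).toNNReal : NNReal) : ℝ≥0∞) ≤
        ∫⁻ z, W z ∂(ratMeas P) := by
      rw [lintegral_countable']
      refine le_trans (le_of_eq ?_) (ENNReal.sum_le_tsum S)
      refine Finset.sum_congr rfl fun z hz => ?_
      rw [ratMeas_singleton, hP, if_pos hz]
    calc _ ≤ ∑ z ∈ S, W z * p {z} + η / 2 := hS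
      _ ≤ ∑ z ∈ S, (W z * (((q z : ℝ).toNNReal : NNReal) : ℝ≥0∞) +
            η / 2 / (S.card + 1 : ℝ≥0∞)) + η / 2 := by
          gcongr with z hz; exact hq2 z
      _ = ∑ z ∈ S, W z * (((q z : ℝ).toNNReal : NNReal) : ℝ≥0∞) +
            S.card * (η / 2 / (S.card + 1 : ℝ≥0∞)) + η / 2 := by
          rw [Finset.sum_add_distrib, Finset.sum_const, nsmul_eq_mul]
      _ ≤ ∫⁻ z, W z ∂(ratMeas P) + η / 2 + η / 2 := by
          gcongr
          calc (S.card : ℝ≥0∞) * (η / 2 / (S.card + 1 : ℝ≥0∞))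
              ≤ (S.card + 1 : ℝ≥0∞) * (η / 2 / (S.card + 1 : ℝ≥0∞)) := by
                gcongr; exact le_self_add
            _ ≤ η / 2 := ENNReal.mul_div_le
      _ = _ := by rw [add_assoc, ENNReal.add_halves]

/-- The pointwise condition on a rational sub-coupling. -/
def GoodSub (P : (ℕ × ℕ) →₀ ℚ) (h : ℕ → ℝ≥0∞) (C : ℕ × ℕ → ℝ≥0∞) (η : ℝ≥0∞)
    (a b : Measure ℕ) (g : ℝ≥0∞) : Prop :=
  (∀ j, (ratMeas P).map Prod.fst {j} ≤ a {j}) ∧ (∀ j, (ratMeas P).map Prod.snd {j} ≤ b {j}) ∧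
  ∫⁻ j, h j ∂a + ∫⁻ j, h j ∂b ≤ ∫⁻ z, (h z.1 + h z.2) ∂(ratMeas P) + η ∧
  ∫⁻ z, C z ∂(ratMeas P) ≤ g

lemma discrete_fixed {Ω : Type*} [MeasurableSpace Ω] (m : Measure Ω) [IsFiniteMeasure m]
    (a b : Ω → Measure ℕ) (ha : Measurable a) (hb : Measurable b)
    (pa : ∀ v, IsProbabilityMeasure (a v)) (pb : ∀ v, IsProbabilityMeasure (b v))
    (h : ℕ → ℝ≥0∞) (hh : ∀ j, h j ≠ ∞) (C : ℕ × ℕ → ℝ≥0∞)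
    (hC : ∀ j k, C (j, k) ≤ 2 * (h j + h k)) (g : Ω → ℝ≥0∞) (η : ℝ≥0∞)
    (P : (ℕ × ℕ) →₀ ℚ) (hP : ∀ᵐ v ∂m, GoodSub P h C η (a v) (b v) (g v)) :
    ∃ p : Measure (ℕ × ℕ), p.map Prod.fst = m.bind a ∧ p.map Prod.snd = m.bind b ∧
      ∫⁻ z, C z ∂p ≤ ∫⁻ v, g v ∂m + 2 * (η * m Set.univ) := by
  set t := m Set.univ with ht
  have htt : t ≠ ∞ := measure_ne_top _ _
  have hle : ∀ (c : Ω → Measure ℕ) (hc : Measurable c) (f : ℕ × ℕ → ℕ) (hf : Measurable f),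
      (∀ᵐ v ∂m, ∀ j, (ratMeas P).map f {j} ≤ c v {j}) →
      t • (ratMeas P).map f ≤ m.bind c := by
    intro c hc f hf hcf
    refine measure_le_of_singleton fun j => ?_
    rw [Measure.bind_apply (measurableSet_singleton j) hc.aemeasurable, Measure.smul_apply,
      smul_eq_mul, mul_comm, ht, ← lintegral_const]
    refine lintegral_mono_ae ?_
    filter_upwards [hcf] with v hv using hv j
  have l1 := hle a ha Prod.fst measurable_fst (hP.mono fun v hv => hv.1)
  have l2 := hle b hb Prod.snd measurable_snd (hP.mono fun v hv => hv.2.1)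
  have mass : ∀ (c : Ω → Measure ℕ) (hc : Measurable c) (pc : ∀ v, IsProbabilityMeasure (c v)),
      (m.bind c) Set.univ = t := by
    intro c hc pc
    rw [Measure.bind_apply MeasurableSet.univ hc.aemeasurable]
    simp [ht]
  have fa : IsFiniteMeasure (m.bind a) := ⟨by rw [mass a ha pa]; exact htt.lt_top⟩
  have fb : IsFiniteMeasure (m.bind b) := ⟨by rw [mass b hb pb]; exact htt.lt_top⟩
  have f1 : IsFiniteMeasure (t • (ratMeas P).map Prod.fst) := isFiniteMeasure_of_le _ l1
  have f2 : IsFiniteMeasure (t • (ratMeas P).map Prod.snd) := isFiniteMeasure_of_le _ l2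
  have s1 := Measure.sub_add_cancel_of_le l1
  have s2 := Measure.sub_add_cancel_of_le l2
  set r1 := m.bind a - t • (ratMeas P).map Prod.fst with hr1
  set r2 := m.bind b - t • (ratMeas P).map Prod.snd with hr2
  have fr1 : IsFiniteMeasure r1 := by
    refine isFiniteMeasure_of_le (m.bind a) ?_
    rw [← s1]; exact Measure.le_add_right le_rfl
  have fr2 : IsFiniteMeasure r2 := by
    refine isFiniteMeasure_of_le (m.bind b) ?_
    rw [← s2]; exact Measure.le_add_right le_rfl
  have hmass : r1 Set.univ = r2 Set.univ := by
    have e1 : r1 Set.univ + t * ratMeas P Set.univ = t := by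
      have := congrArg (fun ρ : Measure ℕ => ρ Set.univ) s1
      simpa [Measure.map_apply measurable_fst, mass a ha pa] using this
    have e2 : r2 Set.univ + t * ratMeas P Set.univ = t := by
      have := congrArg (fun ρ : Measure ℕ => ρ Set.univ) s2
      simpa [Measure.map_apply measurable_snd, mass b hb pb] using this
    exact (ENNReal.add_left_inj (ENNReal.mul_ne_top htt (measure_ne_top _ _))).1 (e1.trans e2.symm)
  obtain ⟨q, hq1, hq2⟩ := exists_coupling r1 r2 hmass
  refine ⟨q + t • ratMeas P, ?_, ?_, ?_⟩
  · rw [Measure.map_add _ _ measurable_fst, Measure.map_smul, hq1, s1]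
  · rw [Measure.map_add _ _ measurable_snd, Measure.map_smul, hq2, s2]
  · have hm : Measurable h := measurable_of_countable h
    have c1 := coupling_cost_le hq1 hq2 hm hm hC
    have c2 : ∫⁻ x, h x ∂r1 + ∫⁻ x, h x ∂r2 ≤ η * t := by
      have i1 : ∫⁻ x, h x ∂r1 + t * ∫⁻ z, h z.1 ∂(ratMeas P) = ∫⁻ v, ∫⁻ j, h j ∂(a v) ∂m := by
        rw [← Measure.lintegral_bind ha.aemeasurable hm.aemeasurable, ← s1, lintegral_add_measure,
          lintegral_smul_measure, lintegral_map hm measurable_fst, smul_eq_mul]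
      have i2 : ∫⁻ x, h x ∂r2 + t * ∫⁻ z, h z.2 ∂(ratMeas P) = ∫⁻ v, ∫⁻ j, h j ∂(b v) ∂m := by
        rw [← Measure.lintegral_bind hb.aemeasurable hm.aemeasurable, ← s2, lintegral_add_measure,
          lintegral_smul_measure, lintegral_map hm measurable_snd, smul_eq_mul]
      have hW : ∫⁻ z, (h z.1 + h z.2) ∂(ratMeas P) =
          ∫⁻ z, h z.1 ∂(ratMeas P) + ∫⁻ z, h z.2 ∂(ratMeas P) :=
        lintegral_add_left (measurable_of_countable _) _
      have hWt : t * ∫⁻ z, (h z.1 + h z.2) ∂(ratMeas P) ≠ ∞ :=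
        ENNReal.mul_ne_top htt
          (lintegral_ratMeas_ne_top P _ fun z => ENNReal.add_ne_top.2 ⟨hh _, hh _⟩)
      have i3 : ∫⁻ v, ∫⁻ j, h j ∂(a v) ∂m + ∫⁻ v, ∫⁻ j, h j ∂(b v) ∂m ≤
          t * ∫⁻ z, (h z.1 + h z.2) ∂(ratMeas P) + η * t := by
        have mia : Measurable fun v => ∫⁻ j, h j ∂(a v) :=
          (Measure.measurable_lintegral hm).comp ha
        rw [← lintegral_add_left mia]
        calc _ ≤ ∫⁻ v, (∫⁻ z, (h z.1 + h z.2) ∂(ratMeas P) + η) ∂m :=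
              lintegral_mono_ae (hP.mono fun v hv => hv.2.2.1)
          _ = _ := by rw [lintegral_const]; ring
      rw [← i1, ← i2] at i3
      refine (ENNReal.add_le_add_iff_right hWt).1 ?_
      calc _ = _ := ?_
        _ ≤ _ := i3
        _ = _ := add_comm _ _
      rw [hW]; ring
    have c3 : t * ∫⁻ z, C z ∂(ratMeas P) ≤ ∫⁻ v, g v ∂m := by
      rw [mul_comm, ht, ← lintegral_const]
      exact lintegral_mono_ae (hP.mono fun v hv => hv.2.2.2)
    rw [lintegral_add_measure, lintegral_smul_measure, smul_eq_mul, add_comm]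
    exact add_le_add c3 (c1.trans (by gcongr))

lemma discrete_selection {Ω : Type*} [MeasurableSpace Ω] (m : Measure Ω) [IsFiniteMeasure m]
    (a b : Ω → Measure ℕ) (ha : Measurable a) (hb : Measurable b)
    (pa : ∀ v, IsProbabilityMeasure (a v)) (pb : ∀ v, IsProbabilityMeasure (b v))
    (h : ℕ → ℝ≥0∞) (hh : ∀ j, h j ≠ ∞) (C : ℕ × ℕ → ℝ≥0∞)
    (hC : ∀ j k, C (j, k) ≤ 2 * (h j + h k)) (g : Ω → ℝ≥0∞) (hg : Measurable g)
    (η : ℝ≥0∞) (hη : η ≠ 0)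
    (hfin : ∀ᵐ v ∂m, ∫⁻ j, h j ∂(a v) ≠ ∞ ∧ ∫⁻ j, h j ∂(b v) ≠ ∞)
    (hex : ∀ᵐ v ∂m, ∃ p : Measure (ℕ × ℕ), p.map Prod.fst = a v ∧ p.map Prod.snd = b v ∧
      ∫⁻ z, C z ∂p ≤ g v) :
    ∃ p : Measure (ℕ × ℕ), p.map Prod.fst = m.bind a ∧ p.map Prod.snd = m.bind b ∧
      ∫⁻ z, C z ∂p ≤ ∫⁻ v, g v ∂m + 2 * (η * m Set.univ) := by
  have hm : Measurable h := measurable_of_countable h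
  obtain ⟨F, hF⟩ := exists_surjective_nat ((ℕ × ℕ) →₀ ℚ)
  let A : ℕ → Set Ω := fun n => {v | GoodSub (F n) h C η (a v) (b v) (g v)}
  have hAm : ∀ n, MeasurableSet (A n) := by
    intro n
    have ma : ∀ j, Measurable fun v => a v {j} := fun j =>
      (Measure.measurable_coe (measurableSet_singleton j)).comp ha
    have mb : ∀ j, Measurable fun v => b v {j} := fun j =>
      (Measure.measurable_coe (measurableSet_singleton j)).comp hb
    have mia : Measurable fun v => ∫⁻ j, h j ∂(a v) := (Measure.measurable_lintegral hm).comp ha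
    have mib : Measurable fun v => ∫⁻ j, h j ∂(b v) := (Measure.measurable_lintegral hm).comp hb
    simp only [A, GoodSub]
    refine MeasurableSet.inter (s₁ := {v | _}) ?_ (MeasurableSet.inter (s₁ := {v | _}) ?_
      (MeasurableSet.inter (s₁ := {v | _}) ?_ ?_))
    · simp only [Set.ofPred_forall]
      exact MeasurableSet.iInter fun j => measurableSet_le measurable_const (ma j)
    · simp only [Set.ofPred_forall]
      exact MeasurableSet.iInter fun j => measurableSet_le measurable_const (mb j)
    · exact measurableSet_le (mia.add mib) measurable_const
    · exact measurableSet_le measurable_const hg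
  have hcov : ∀ᵐ v ∂m, v ∈ ⋃ n, A n := by
    filter_upwards [hfin, hex] with v hv hp
    obtain ⟨p, h1, h2, h3⟩ := hp
    have hpf : IsFiniteMeasure p := by
      constructor
      have : p.map Prod.fst Set.univ = a v Set.univ := by rw [h1]
      rw [Measure.map_apply measurable_fst MeasurableSet.univ, Set.preimage_univ] at this
      rw [this]; exact measure_lt_top _ _
    have e : ∫⁻ z, (h z.1 + h z.2) ∂p = ∫⁻ j, h j ∂(a v) + ∫⁻ j, h j ∂(b v) := by
      rw [lintegral_add_left (measurable_of_countable _), ← h1, ← h2,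
        lintegral_map hm measurable_fst, lintegral_map hm measurable_snd]
    obtain ⟨P, hP1, hP2⟩ := exists_ratMeas_below p (fun z => h z.1 + h z.2)
      (fun z => ENNReal.add_ne_top.2 ⟨hh _, hh _⟩)
      (by rw [e]; exact ENNReal.add_ne_top.2 hv) η hη
    obtain ⟨n, rfl⟩ := hF P
    refine Set.mem_iUnion.2 ⟨n, ?_, ?_, ?_, ?_⟩
    · intro j; rw [← h1]; exact Measure.map_mono hP1 measurable_fst _
    · intro j; rw [← h2]; exact Measure.map_mono hP1 measurable_snd _
    · rw [← e]; exact hP2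
    · exact (lintegral_mono' hP1 le_rfl).trans h3
  have hsum : Measure.sum (fun n => m.restrict (disjointed A n)) = m := by
    rw [← Measure.restrict_iUnion (disjoint_disjointed A) (MeasurableSet.disjointed hAm),
      iUnion_disjointed, Measure.restrict_eq_self_of_ae_mem hcov]
  have hn : ∀ n, ∃ p : Measure (ℕ × ℕ), p.map Prod.fst = (m.restrict (disjointed A n)).bind a ∧
      p.map Prod.snd = (m.restrict (disjointed A n)).bind b ∧
      ∫⁻ z, C z ∂p ≤ ∫⁻ v, g v ∂(m.restrict (disjointed A n)) +
        2 * (η * (m.restrict (disjointed A n)) Set.univ) := by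
    intro n
    refine discrete_fixed _ a b ha hb pa pb h hh C hC g η (F n) ?_
    filter_upwards [ae_restrict_mem (MeasurableSet.disjointed hAm n)] with v hv
    exact disjointed_subset A n hv
  choose p h1 h2 h3 using hn
  refine ⟨Measure.sum p, ?_, ?_, ?_⟩
  · rw [Measure.map_sum measurable_fst.aemeasurable]
    conv_rhs => rw [← hsum]
    rw [Measure.bind_sum _ _ ha.aemeasurable]
    simp_rw [h1]
  · rw [Measure.map_sum measurable_snd.aemeasurable]
    conv_rhs => rw [← hsum]
    rw [Measure.bind_sum _ _ hb.aemeasurable]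
    simp_rw [h2]
  · rw [lintegral_sum_measure]
    refine (ENNReal.tsum_le_tsum h3).trans ?_
    rw [ENNReal.tsum_add, ← lintegral_sum_measure, hsum, ENNReal.tsum_mul_left,
      ENNReal.tsum_mul_left]
    conv_rhs => rw [← hsum, Measure.sum_apply _ MeasurableSet.univ]
    rw [hsum]

lemma norm_cell_le {E : Type*} [NormedAddCommGroup E] (x y x' y' : E) (ε : NNReal)
    (hx : ‖x - x'‖ ≤ ε) (hy : ‖y - y'‖ ≤ ε) :
    (‖x' - y'‖₊ : ℝ≥0∞) ^ 2 ≤ 3 * ((‖x - y‖₊ : ℝ≥0∞) ^ 2 + 2 * (ε : ℝ≥0∞) ^ 2) := by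
  have h : ‖x' - y'‖₊ ^ 2 ≤ 3 * (‖x - y‖₊ ^ 2 + 2 * ε ^ 2) := by
    rw [← NNReal.coe_le_coe]
    push_cast
    have h1 : ‖x' - y'‖ ≤ ‖x - y‖ + 2 * ε := by
      calc ‖x' - y'‖ = ‖(x - y) + (y - y') - (x - x')‖ := by congr 1; abel
        _ ≤ ‖x - y‖ + ‖y - y'‖ + ‖x - x'‖ :=
          (norm_sub_le _ _).trans (by gcongr; exact norm_add_le _ _)
        _ ≤ _ := by linarith
    have h0 := norm_nonneg (x' - y')
    have h2 := norm_nonneg (x - y)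
    have h3 : (0:ℝ) ≤ ε := ε.2
    calc ‖x' - y'‖ ^ 2 ≤ (‖x - y‖ + 2 * ε) ^ 2 := by gcongr
      _ ≤ _ := by nlinarith [sq_nonneg (‖x - y‖ - ε)]
  exact_mod_cast h

lemma norm_sub_sq_le {E : Type*} [NormedAddCommGroup E] (x y : E) :
    (‖x - y‖₊ : ℝ≥0∞) ^ 2 ≤ 2 * ((‖x‖₊ : ℝ≥0∞) ^ 2 + (‖y‖₊ : ℝ≥0∞) ^ 2) := by
  have h : ‖x - y‖₊ ^ 2 ≤ 2 * (‖x‖₊ ^ 2 + ‖y‖₊ ^ 2) := by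
    rw [← NNReal.coe_le_coe]
    push_cast
    have h1 := norm_sub_le x y
    have h0 := norm_nonneg (x - y)
    calc ‖x - y‖ ^ 2 ≤ (‖x‖ + ‖y‖) ^ 2 := by gcongr
      _ ≤ _ := by nlinarith [sq_nonneg (‖x‖ - ‖y‖)]
  exact_mod_cast h

lemma core_coupling {E : Type*} [NormedAddCommGroup E] [MeasurableSpace E] [BorelSpace E]
    [SecondCountableTopology E] {Ω : Type*} [MeasurableSpace Ω]
    (m : Measure Ω) [IsFiniteMeasure m] (κ κ' : Ω → Measure E)
    (hκ : Measurable κ) (hκ' : Measurable κ')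
    (pκ : ∀ v, IsProbabilityMeasure (κ v)) (pκ' : ∀ v, IsProbabilityMeasure (κ' v))
    (g : Ω → ℝ≥0∞) (hg : Measurable g)
    (hW : ∀ᵐ v ∂m, W2sq (κ v) (κ' v) ≤ g v)
    (hfin : ∀ᵐ v ∂m, ∫⁻ x, (‖x‖₊ : ℝ≥0∞) ^ 2 ∂(κ v) ≠ ∞ ∧ ∫⁻ x, (‖x‖₊ : ℝ≥0∞) ^ 2 ∂(κ' v) ≠ ∞)
    (ε : NNReal) (hε : 0 < ε) :
    ∃ π : Measure (E × E), π.map Prod.fst = m.bind κ ∧ π.map Prod.snd = m.bind κ' ∧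
      ∫⁻ z, (‖z.1 - z.2‖₊ : ℝ≥0∞) ^ 2 ∂π ≤
        9 * ∫⁻ v, g v ∂m + 39 * (ε : ℝ≥0∞) ^ 2 * m Set.univ := by
  obtain ⟨T, x, hT, hx⟩ := exists_cells (E := E) ε hε
  set e : ℝ≥0∞ := (ε : ℝ≥0∞) ^ 2 with he
  have he0 : e ≠ 0 := by simp [he, hε.ne']
  have hetop : e ≠ ∞ := by simp [he]
  have hTT : Measurable (fun z : E × E => (T z.1, T z.2)) := by fun_prop
  have hmap : Measurable fun ρ : Measure E => ρ.map T := Measure.measurable_map T hT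
  let C : ℕ × ℕ → ℝ≥0∞ := fun z => (‖x z.1 - x z.2‖₊ : ℝ≥0∞) ^ 2
  let h : ℕ → ℝ≥0∞ := fun j => (‖x j‖₊ : ℝ≥0∞) ^ 2
  have hC : Measurable C := measurable_of_countable _
  have hcost : Measurable fun z : E × E => (‖z.1 - z.2‖₊ : ℝ≥0∞) ^ 2 := by fun_prop
  have momfin : ∀ ρ : Measure E, IsProbabilityMeasure ρ → ∫⁻ x, (‖x‖₊ : ℝ≥0∞) ^ 2 ∂ρ ≠ ∞ →
      ∫⁻ j, h j ∂(ρ.map T) ≠ ∞ := by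
    intro ρ _ hρ
    rw [lintegral_map (measurable_of_countable _) hT]
    refine ne_top_of_le_ne_top (b := ∫⁻ y, 3 * ((‖y‖₊ : ℝ≥0∞) ^ 2 + 2 * e) ∂ρ) ?_ ?_
    · rw [lintegral_const_mul _ (by fun_prop), lintegral_add_right _ measurable_const,
        lintegral_const]
      simp only [measure_univ, mul_one]
      exact ENNReal.mul_ne_top (by simp)
        (ENNReal.add_ne_top.2 ⟨hρ, ENNReal.mul_ne_top (by simp) hetop⟩)
    · refine lintegral_mono fun y => ?_
      have := norm_cell_le y 0 (x (T y)) 0 ε (hx y).le (by simp)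
      simpa using this
  obtain ⟨p, hp1, hp2, hp3⟩ := discrete_selection m (fun v => (κ v).map T) (fun v => (κ' v).map T)
    (hmap.comp hκ) (hmap.comp hκ')
    (fun v => Measure.isProbabilityMeasure_map hT.aemeasurable)
    (fun v => Measure.isProbabilityMeasure_map hT.aemeasurable)
    h (fun j => by simp [h]) C (fun j k => norm_sub_sq_le _ _)
    (fun v => 3 * (g v + 3 * e)) (by fun_prop) e he0
    (by
      filter_upwards [hfin] with v hv
      exact ⟨momfin _ (pκ v) hv.1, momfin _ (pκ' v) hv.2⟩)
    (by
      filter_upwards [hW] with v hv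
      obtain ⟨π, hπ, h1, h2, h3⟩ : ∃ π : Measure (E × E), IsProbabilityMeasure π ∧
          π.map Prod.fst = κ v ∧ π.map Prod.snd = κ' v ∧
          ∫⁻ z, (‖z.1 - z.2‖₊ : ℝ≥0∞) ^ 2 ∂π ≤ g v + e := by
        by_cases hgv : g v = ∞
        · exact ⟨(κ v).prod (κ' v), inferInstance, by simp [Measure.map_fst_prod],
            by simp [Measure.map_snd_prod], by simp [hgv]⟩
        · have hlt : W2sq (κ v) (κ' v) < g v + e :=
            hv.trans_lt (ENNReal.lt_add_right hgv he0)
          simp only [W2sq, iInf_lt_iff] at hlt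
          obtain ⟨π, hπ, h1, h2, h3⟩ := hlt
          exact ⟨π, hπ, h1, h2, h3.le⟩
      refine ⟨π.map (fun z => (T z.1, T z.2)), ?_, ?_, ?_⟩
      · rw [Measure.map_map measurable_fst hTT, ← h1, Measure.map_map hT measurable_fst]; rfl
      · rw [Measure.map_map measurable_snd hTT, ← h2, Measure.map_map hT measurable_snd]; rfl
      · rw [lintegral_map hC hTT]
        calc _ ≤ ∫⁻ z, 3 * ((‖z.1 - z.2‖₊ : ℝ≥0∞) ^ 2 + 2 * e) ∂π :=
              lintegral_mono fun z => norm_cell_le z.1 z.2 _ _ ε (hx _).le (hx _).le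
          _ = 3 * (∫⁻ z, (‖z.1 - z.2‖₊ : ℝ≥0∞) ^ 2 ∂π + 2 * e) := by
              rw [lintegral_const_mul _ (by fun_prop), lintegral_add_right _ measurable_const,
                lintegral_const]
              simp
          _ ≤ 3 * ((g v + e) + 2 * e) := by gcongr
          _ = _ := by ring)
  have bmap : ∀ c : Ω → Measure E, Measurable c →
      m.bind (fun v => (c v).map T) = (m.bind c).map T := by
    intro c hc
    ext B hB
    rw [Measure.map_apply hT hB, Measure.bind_apply (f := fun v => (c v).map T) hB (hmap.comp hc).aemeasurable,
      Measure.bind_apply (hT hB) hc.aemeasurable]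
    refine lintegral_congr fun v => ?_
    rw [Measure.map_apply hT hB]
  have mass : ∀ (c : Ω → Measure E) (hc : Measurable c) (pc : ∀ v, IsProbabilityMeasure (c v)),
      (m.bind c) Set.univ = m Set.univ := by
    intro c hc pc
    rw [Measure.bind_apply MeasurableSet.univ hc.aemeasurable]
    simp
  have fa : IsFiniteMeasure (m.bind κ) := ⟨by rw [mass κ hκ pκ]; exact measure_lt_top _ _⟩
  have fb : IsFiniteMeasure (m.bind κ') := ⟨by rw [mass κ' hκ' pκ']; exact measure_lt_top _ _⟩
  rw [bmap κ hκ] at hp1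
  rw [bmap κ' hκ'] at hp2
  obtain ⟨π, h1, h2, h3⟩ := exists_lift (m.bind κ) (m.bind κ') T hT p hp1 hp2
  refine ⟨π, h1, h2, ?_⟩
  have hπu : π Set.univ = m Set.univ := by
    rw [← mass κ hκ pκ, ← h1, Measure.map_apply measurable_fst MeasurableSet.univ, Set.preimage_univ]
  calc ∫⁻ z, (‖z.1 - z.2‖₊ : ℝ≥0∞) ^ 2 ∂π
      ≤ ∫⁻ z, 3 * (C (T z.1, T z.2) + 2 * e) ∂π := by
        refine lintegral_mono fun z => ?_
        exact norm_cell_le _ _ _ _ ε ((norm_sub_rev _ _).trans_le (hx z.1).le)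
          ((norm_sub_rev _ _).trans_le (hx z.2).le)
    _ = 3 * (∫⁻ z, C z ∂p + 2 * e * m Set.univ) := by
        have hCT : Measurable fun z : E × E => C (T z.1, T z.2) := hC.comp hTT
        rw [lintegral_const_mul _ (by fun_prop), lintegral_add_right _ measurable_const,
          lintegral_const, hπu, ← h3, lintegral_map hC hTT]
    _ ≤ 3 * ((∫⁻ v, 3 * (g v + 3 * e) ∂m + 2 * (e * m Set.univ)) + 2 * e * m Set.univ) := by
        gcongr
    _ = 9 * ∫⁻ v, g v ∂m + 39 * e * m Set.univ := by
        rw [lintegral_const_mul _ (by fun_prop), lintegral_add_right _ measurable_const,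
          lintegral_const]
        ring

lemma mix_coupling {E : Type*} [NormedAddCommGroup E] [MeasurableSpace E] [BorelSpace E]
    [SecondCountableTopology E] {Ω : Type*} [MeasurableSpace Ω]
    (I : Measure Ω) [IsFiniteMeasure I] (κ κ' : Ω → Measure E)
    (hκ : Measurable κ) (hκ' : Measurable κ')
    (pκ : ∀ v, IsProbabilityMeasure (κ v)) (pκ' : ∀ v, IsProbabilityMeasure (κ' v))
    (g : Ω → ℝ≥0∞) (hg : Measurable g)
    (hW : ∀ᵐ v ∂I, W2sq (κ v) (κ' v) ≤ g v) (k : ℝ≥0∞) (hk : k ≠ ∞)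
    (hmom : ∀ᵐ v ∂I, ∫⁻ x, (‖x‖₊ : ℝ≥0∞) ^ 2 ∂(κ v) ≤ k)
    (hmom' : ∀ᵐ v ∂I, ∫⁻ x, (‖x‖₊ : ℝ≥0∞) ^ 2 ∂(κ' v) ≤ k)
    (p q : Ω → ℝ≥0∞) (hp : Measurable p) (hq : Measurable q)
    (ip : ∫⁻ v, p v ∂I = 1) (iq : ∫⁻ v, q v ∂I = 1) (R : ℝ≥0∞) (hR : ∀ᵐ v ∂I, p v ≤ R)
    (ε : NNReal) (hε : 0 < ε) :
    W2sq ((I.withDensity p).bind κ) ((I.withDensity q).bind κ') ≤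
      9 * (R * ∫⁻ v, g v ∂I) + 39 * (ε : ℝ≥0∞) ^ 2 +
        2 * (k * ∫⁻ v, ((p v - q v) + (q v - p v)) ∂I) := by
  let mn : Ω → ℝ≥0∞ := fun v => min (p v) (q v)
  have hmn : Measurable mn := hp.min hq
  have mn1 : ∫⁻ v, mn v ∂I ≤ 1 := ip ▸ lintegral_mono fun v => min_le_left _ _
  have hpq : Measurable fun v => p v - q v := hp.sub hq
  have hqp : Measurable fun v => q v - p v := hq.sub hp
  have dp : I.withDensity p = I.withDensity mn + I.withDensity (fun v => p v - q v) := by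
    rw [← withDensity_add_left hmn]
    congr 1; ext v
    simp only [Pi.add_apply, mn]
    rw [add_comm]
    rcases le_total (p v) (q v) with h | h
    · rw [min_eq_left h, tsub_eq_zero_of_le h, zero_add]
    · rw [min_eq_right h, tsub_add_cancel_of_le h]
  have dq : I.withDensity q = I.withDensity mn + I.withDensity (fun v => q v - p v) := by
    rw [← withDensity_add_left hmn]
    congr 1; ext v
    simp only [Pi.add_apply, mn]
    rw [add_comm]
    rcases le_total (p v) (q v) with h | h
    · rw [min_eq_left h, tsub_add_cancel_of_le h]
    · rw [min_eq_right h, tsub_eq_zero_of_le h, zero_add]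
  have badd : ∀ (a b : Measure Ω) (c : Ω → Measure E), Measurable c →
      (a + b).bind c = a.bind c + b.bind c := by
    intro a b c hc
    ext B hB
    rw [Measure.add_apply, Measure.bind_apply hB hc.aemeasurable,
      Measure.bind_apply hB hc.aemeasurable, Measure.bind_apply hB hc.aemeasurable,
      lintegral_add_measure]
  have mass : ∀ (m : Measure Ω) (c : Ω → Measure E) (hc : Measurable c)
      (pc : ∀ v, IsProbabilityMeasure (c v)), (m.bind c) Set.univ = m Set.univ := by
    intro m c hc pc
    rw [Measure.bind_apply MeasurableSet.univ hc.aemeasurable]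
    simp
  have up : I.withDensity p Set.univ = 1 := by simp [withDensity_apply, ip]
  have uq : I.withDensity q Set.univ = 1 := by simp [withDensity_apply, iq]
  have umn : I.withDensity mn Set.univ ≤ 1 := by simpa [withDensity_apply] using mn1
  have fmn : IsFiniteMeasure (I.withDensity mn) := ⟨umn.trans_lt (by simp)⟩
  have u1 := up
  rw [dp, Measure.add_apply] at u1
  have u2 := uq
  rw [dq, Measure.add_apply] at u2
  have f1 : I.withDensity (fun v => p v - q v) Set.univ < ∞ :=
    (le_add_self.trans u1.le).trans_lt (by simp)
  have f2 : I.withDensity (fun v => q v - p v) Set.univ < ∞ :=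
    (le_add_self.trans u2.le).trans_lt (by simp)
  have ueq : I.withDensity (fun v => p v - q v) Set.univ =
      I.withDensity (fun v => q v - p v) Set.univ :=
    (ENNReal.add_right_inj (measure_ne_top (I.withDensity mn) _)).1 (u1.trans u2.symm)
  have F1 : IsFiniteMeasure ((I.withDensity (fun v => p v - q v)).bind κ) :=
    ⟨by rw [mass _ _ hκ pκ]; exact f1⟩
  have F2 : IsFiniteMeasure ((I.withDensity (fun v => q v - p v)).bind κ') :=
    ⟨by rw [mass _ _ hκ' pκ']; exact f2⟩
  obtain ⟨π2, r1, r2⟩ := exists_coupling ((I.withDensity (fun v => p v - q v)).bind κ)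
    ((I.withDensity (fun v => q v - p v)).bind κ')
    (by rw [mass _ _ hκ pκ, mass _ _ hκ' pκ', ueq])
  have ac := withDensity_absolutelyContinuous I mn
  obtain ⟨π1, s1, s2, s3⟩ := core_coupling (I.withDensity mn) κ κ' hκ hκ' pκ pκ' g hg
    (ac.ae_le hW) (ac.ae_le (by
      filter_upwards [hmom, hmom'] with v h1 h2
      exact ⟨ne_top_of_le_ne_top hk h1, ne_top_of_le_ne_top hk h2⟩)) ε hε
  have t1 : (π1 + π2).map Prod.fst = (I.withDensity p).bind κ := by
    rw [Measure.map_add _ _ measurable_fst, s1, r1, dp, badd _ _ _ hκ]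
  have t2 : (π1 + π2).map Prod.snd = (I.withDensity q).bind κ' := by
    rw [Measure.map_add _ _ measurable_snd, s2, r2, dq, badd _ _ _ hκ']
  have tp : IsProbabilityMeasure (π1 + π2) := by
    constructor
    have : (π1 + π2).map Prod.fst Set.univ = 1 := by rw [t1, mass _ _ hκ pκ, up]
    rwa [Measure.map_apply measurable_fst MeasurableSet.univ, Set.preimage_univ] at this
  have mm : Measurable fun x : E => (‖x‖₊ : ℝ≥0∞) ^ 2 := by fun_prop
  have c2 := coupling_cost_le r1 r2 mm mm (C := fun z => (‖z.1 - z.2‖₊ : ℝ≥0∞) ^ 2)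
    (fun x y => norm_sub_sq_le x y)
  have mom : ∀ (c : Ω → Measure E) (hc : Measurable c) (w : Ω → ℝ≥0∞) (hw : Measurable w),
      (∀ᵐ v ∂I, ∫⁻ x, (‖x‖₊ : ℝ≥0∞) ^ 2 ∂(c v) ≤ k) →
      ∫⁻ x, (‖x‖₊ : ℝ≥0∞) ^ 2 ∂((I.withDensity w).bind c) ≤ k * ∫⁻ v, w v ∂I := by
    intro c hc w hw hcm
    have := withDensity_absolutelyContinuous I w
    rw [Measure.lintegral_bind hc.aemeasurable mm.aemeasurable]
    calc _ ≤ ∫⁻ v, k ∂(I.withDensity w) := lintegral_mono_ae (this.ae_le hcm)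
      _ = _ := by simp [withDensity_apply]
  have hgR : ∫⁻ v, g v ∂(I.withDensity mn) ≤ R * ∫⁻ v, g v ∂I := by
    rw [lintegral_withDensity_eq_lintegral_mul _ hmn hg, ← lintegral_const_mul _ hg]
    refine lintegral_mono_ae ?_
    filter_upwards [hR] with v hv
    simp only [Pi.mul_apply]
    gcongr
    exact (min_le_left _ _).trans hv
  refine (iInf_le_of_le (π1 + π2) (iInf_le_of_le tp (iInf_le_of_le t1
    (iInf_le_of_le t2 le_rfl)))).trans ?_
  rw [lintegral_add_measure, lintegral_add_left hpq, mul_add k]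
  refine add_le_add (s3.trans ?_) (c2.trans ?_)
  · refine add_le_add (by gcongr) ?_
    exact mul_le_of_le_one_right' umn
  · gcongr
    · exact mom κ hκ _ hpq hmom
    · exact mom κ' hκ' _ hqp hmom'

lemma weight_diff (c : ℝ) (hc : 0 < c) (M : ℝ) (I : Measure ℝ) [IsFiniteMeasure I]
    (a b : ℝ → ℝ) (ha : Measurable a) (hb : Measurable b) (ha0 : ∀ v, 0 ≤ a v) (hb0 : ∀ v, 0 ≤ b v)
    (haM : ∀ v, a v ≤ M) (hbM : ∀ v, b v ≤ M) (D D' : ℝ) (hD : D = ∫ v, a v ∂I)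
    (hD' : D' = ∫ v, b v ∂I) (hcD : c ≤ D) (hcD' : c ≤ D')
    (hone : ∫⁻ v, ENNReal.ofReal (b v / D') ∂I = 1) :
    ∫⁻ v, ((ENNReal.ofReal (a v / D) - ENNReal.ofReal (b v / D')) +
      (ENNReal.ofReal (b v / D') - ENNReal.ofReal (a v / D))) ∂I ≤
      ENNReal.ofReal (2 / c) * ∫⁻ v, ENNReal.ofReal |a v - b v| ∂I := by
  have inta : Integrable a I := Integrable.of_bound ha.aestronglyMeasurable M
    (Filter.Eventually.of_forall fun v => by rw [Real.norm_of_nonneg (ha0 v)]; exact haM v)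
  have intb : Integrable b I := Integrable.of_bound hb.aestronglyMeasurable M
    (Filter.Eventually.of_forall fun v => by rw [Real.norm_of_nonneg (hb0 v)]; exact hbM v)
  have intd : Integrable (fun v => |a v - b v|) I := (inta.sub intb).abs
  set L := ∫ v, |a v - b v| ∂I with hL
  have hL0 : 0 ≤ L := integral_nonneg fun v => abs_nonneg _
  have hLe : ∫⁻ v, ENNReal.ofReal |a v - b v| ∂I = ENNReal.ofReal L := by
    rw [hL, ofReal_integral_eq_lintegral_ofReal intd
      (Filter.Eventually.of_forall fun v => abs_nonneg _)]
  have hDL : |D - D'| ≤ L := by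
    rw [hD, hD', ← integral_sub inta intb]
    exact abs_integral_le_integral_abs
  have hD0 : 0 < D := hc.trans_le hcD
  have hD0' : 0 < D' := hc.trans_le hcD'
  have key : ∀ v, |a v / D - b v / D'| ≤ (1 / c) * (|a v - b v| + b v / D' * L) := by
    intro v
    have e : a v / D - b v / D' = (1 / D) * ((a v - b v) - b v / D' * (D - D')) := by
      field_simp; ring
    have hb' : 0 ≤ b v / D' := div_nonneg (hb0 v) hD0'.le
    rw [e, abs_mul, abs_of_pos (by positivity : 0 < 1 / D)]
    have h1 : |(a v - b v) - b v / D' * (D - D')| ≤ |a v - b v| + b v / D' * L := by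
      refine (abs_sub _ _).trans ?_
      rw [abs_mul, abs_of_nonneg hb']
      gcongr
    gcongr
  have hm1 : Measurable fun v => ENNReal.ofReal |a v - b v| := by fun_prop
  have hm2 : Measurable fun v => ENNReal.ofReal (b v / D') := by fun_prop
  calc _ ≤ ∫⁻ v, ENNReal.ofReal (1 / c) * (ENNReal.ofReal |a v - b v| +
        ENNReal.ofReal (b v / D') * ENNReal.ofReal L) ∂I := by
        refine lintegral_mono fun v => ?_
        have hb' : 0 ≤ b v / D' := div_nonneg (hb0 v) hD0'.le
        have ha' : 0 ≤ a v / D := div_nonneg (ha0 v) hD0.le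
        calc _ ≤ ENNReal.ofReal |a v / D - b v / D'| := by
              rw [← ENNReal.ofReal_sub _ hb', ← ENNReal.ofReal_sub _ ha']
              rcases le_total (a v / D) (b v / D') with h | h
              · rw [ENNReal.ofReal_of_nonpos (sub_nonpos.2 h), zero_add, abs_sub_comm]
                exact ENNReal.ofReal_le_ofReal (le_abs_self _)
              · rw [ENNReal.ofReal_of_nonpos (sub_nonpos.2 h), add_zero]
                exact ENNReal.ofReal_le_ofReal (le_abs_self _)
          _ ≤ ENNReal.ofReal ((1 / c) * (|a v - b v| + b v / D' * L)) :=
              ENNReal.ofReal_le_ofReal (key v)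
          _ = _ := by
              rw [ENNReal.ofReal_mul (by positivity), ENNReal.ofReal_add (abs_nonneg _)
                (by positivity), ENNReal.ofReal_mul hb']
    _ = ENNReal.ofReal (1 / c) * (ENNReal.ofReal L + 1 * ENNReal.ofReal L) := by
        rw [lintegral_const_mul _ (by fun_prop), lintegral_add_left hm1,
          lintegral_mul_const _ hm2, hone, hLe]
    _ = _ := by
        rw [hLe, one_mul, ← two_mul, ← mul_assoc, mul_comm (ENNReal.ofReal (1 / c)) 2,
          show (2:ℝ≥0∞) = ENNReal.ofReal 2 by simp, ← ENNReal.ofReal_mul (by norm_num)]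
        congr 2; ring

/-- **Joint stability of the graphon aggregate in the graphon and the measure family**:
`∫₀¹ W₂²([Gμ]^u, [G'μ']^u) du ≤ C ( ‖G − G'‖_{L¹} + ∫₀¹ W₂²(μ^u, μ'^u) du )`, with `C`
depending only on `M`, `c` and `K`. -/
theorem graphon_aggregate_joint_stability
    (d : ℕ) (M c K : ℝ) (hc : 0 < c) :
    ∃ C : ℝ, 0 < C ∧
      ∀ G G' : ℝ → ℝ → ℝ,
        Measurable (Function.uncurry G) → Measurable (Function.uncurry G') →
        (∀ u v, G u v = G v u) → (∀ u v, G' u v = G' v u) →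
        (∀ u v, 0 ≤ G u v) → (∀ u v, 0 ≤ G' u v) →
        (∀ u v, G u v ≤ M) → (∀ u v, G' u v ≤ M) →
        (∀ u ∈ Set.Icc (0:ℝ) 1, c ≤ ∫ v in Set.Icc (0:ℝ) 1, G u v) →
        (∀ u ∈ Set.Icc (0:ℝ) 1, c ≤ ∫ v in Set.Icc (0:ℝ) 1, G' u v) →
        ∀ μ μ' : ℝ → Measure (EuclideanSpace ℝ (Fin d)),
          (∀ u ∈ Set.Icc (0:ℝ) 1, IsProbabilityMeasure (μ u)) →
          (∀ u ∈ Set.Icc (0:ℝ) 1, IsProbabilityMeasure (μ' u)) →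
          (∀ B : Set (EuclideanSpace ℝ (Fin d)), MeasurableSet B →
            AEMeasurable (fun u => μ u B) (volume.restrict (Set.Icc (0:ℝ) 1))) →
          (∀ B : Set (EuclideanSpace ℝ (Fin d)), MeasurableSet B →
            AEMeasurable (fun u => μ' u B) (volume.restrict (Set.Icc (0:ℝ) 1))) →
          (∀ u ∈ Set.Icc (0:ℝ) 1,
            ∫⁻ x, (‖x‖₊ : ℝ≥0∞) ^ 2 ∂(μ u) ≤ ENNReal.ofReal K) →
          (∀ u ∈ Set.Icc (0:ℝ) 1,
            ∫⁻ x, (‖x‖₊ : ℝ≥0∞) ^ 2 ∂(μ' u) ≤ ENNReal.ofReal K) →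
          ∀ agg agg' : ℝ → Measure (EuclideanSpace ℝ (Fin d)),
            IsGraphonAggregate G μ agg → IsGraphonAggregate G' μ' agg' →
            upperLintegral (volume.restrict (Set.Icc (0:ℝ) 1))
                (fun u => W2sq (agg u) (agg' u)) ≤
              ENNReal.ofReal C *
                ((∫⁻ u in Set.Icc (0:ℝ) 1, ∫⁻ v in Set.Icc (0:ℝ) 1,
                    ENNReal.ofReal |G u v - G' u v|) +
                  upperLintegral (volume.restrict (Set.Icc (0:ℝ) 1))
                    (fun u => W2sq (μ u) (μ' u))) := by
  refine ⟨9 * |M| / c + 4 * |K| / c + 1, by positivity, ?_⟩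
  intro G G' hG hG' _ _ hG0 hG0' hGM hGM' hDc hDc' μ μ' pμ pμ' mμ mμ' momμ momμ' agg agg' hagg hagg'
  set I : Measure ℝ := volume.restrict (Set.Icc (0:ℝ) 1) with hI
  have hIcc : ∀ᵐ v ∂I, v ∈ Set.Icc (0:ℝ) 1 := ae_restrict_mem measurableSet_Icc
  have hIu : I Set.univ = 1 := by simp [hI]
  have fI : IsFiniteMeasure I := ⟨by rw [hIu]; simp⟩
  obtain ⟨κ, hκ, pκ, eκ⟩ := exists_measurable_family I _ hIcc μ pμ mμ
  obtain ⟨κ', hκ', pκ', eκ'⟩ := exists_measurable_family I _ hIcc μ' pμ' mμ'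
  have hM : M ≤ |M| := le_abs_self M
  -- the aggregates as mixtures
  have aggeq : ∀ (H : ℝ → ℝ → ℝ), Measurable (Function.uncurry H) →
      ∀ (μ ν κ : ℝ → Measure (EuclideanSpace ℝ (Fin d))), Measurable κ →
      (∀ v, IsProbabilityMeasure (κ v)) → (∀ᵐ v ∂I, κ v = μ v) → IsGraphonAggregate H μ ν →
      ∀ u ∈ Set.Icc (0:ℝ) 1, Measurable (fun v => ENNReal.ofReal (gnorm H u v)) ∧
        ν u = (I.withDensity (fun v => ENNReal.ofReal (gnorm H u v))).bind κ ∧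
        ∫⁻ v, ENNReal.ofReal (gnorm H u v) ∂I = 1 := by
    intro H hH μ ν κ hκ pκ eκ hν u hu
    have hm : Measurable (fun v => ENNReal.ofReal (gnorm H u v)) := by
      have : Measurable (H u) := hH.of_uncurry_left
      simp only [gnorm]
      fun_prop
    obtain ⟨hprob, hform⟩ := hν u hu
    have heq : ν u = (I.withDensity (fun v => ENNReal.ofReal (gnorm H u v))).bind κ := by
      ext B hB
      have mB : Measurable fun v => κ v B := (Measure.measurable_coe hB).comp hκ
      rw [hform B hB, Measure.bind_apply hB hκ.aemeasurable,
        lintegral_withDensity_eq_lintegral_mul _ hm mB]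
      refine lintegral_congr_ae ?_
      filter_upwards [eκ] with v hv
      simp [hv]
    refine ⟨hm, heq, ?_⟩
    have h1 : ν u Set.univ = 1 := measure_univ
    rw [heq, Measure.bind_apply MeasurableSet.univ hκ.aemeasurable] at h1
    simpa [withDensity_apply] using h1
  -- pointwise bound
  have point : ∀ g : ℝ → ℝ≥0∞, Measurable g → (∀ v, W2sq (μ v) (μ' v) ≤ g v) →
      ∀ ε : NNReal, 0 < ε → ∀ u ∈ Set.Icc (0:ℝ) 1,
      W2sq (agg u) (agg' u) ≤ 9 * (ENNReal.ofReal (|M| / c) * ∫⁻ v, g v ∂I) +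
        39 * (ε : ℝ≥0∞) ^ 2 + 2 * (ENNReal.ofReal |K| * (ENNReal.ofReal (2 / c) *
          ∫⁻ v, ENNReal.ofReal |G u v - G' u v| ∂I)) := by
    intro g hg hgW ε hε u hu
    obtain ⟨m1, e1, i1⟩ := aggeq G hG μ agg κ hκ pκ eκ hagg u hu
    obtain ⟨m2, e2, i2⟩ := aggeq G' hG' μ' agg' κ' hκ' pκ' eκ' hagg' u hu
    have hKK : ENNReal.ofReal K ≤ ENNReal.ofReal |K| := ENNReal.ofReal_le_ofReal (le_abs_self K)
    have hmix := mix_coupling I κ κ' hκ hκ' pκ pκ' g hg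
      (by filter_upwards [eκ, eκ'] with v h1 h2; rw [h1, h2]; exact hgW v)
      (ENNReal.ofReal |K|) ENNReal.ofReal_ne_top
      (by filter_upwards [eκ, hIcc] with v h1 h2; rw [h1]; exact (momμ v h2).trans hKK)
      (by filter_upwards [eκ', hIcc] with v h1 h2; rw [h1]; exact (momμ' v h2).trans hKK)
      _ _ m1 m2 i1 i2 (ENNReal.ofReal (|M| / c))
      (Filter.Eventually.of_forall fun v => by
        refine ENNReal.ofReal_le_ofReal ?_
        have := hDc u hu
        unfold gnorm
        gcongr
        exact (hGM u v).trans hM) ε hε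
    rw [e1, e2]
    refine hmix.trans ?_
    gcongr
    exact weight_diff c hc M I (G u) (G' u) hG.of_uncurry_left hG'.of_uncurry_left
      (hG0 u) (hG0' u) (hGM u) (hGM' u) _ _ rfl rfl (hDc u hu) (hDc' u hu) i2
  set Cst : ℝ := 9 * |M| / c + 4 * |K| / c + 1 with hCst
  have hC0 : ENNReal.ofReal Cst ≠ 0 := by
    have : 0 < Cst := by positivity
    simpa using this
  have hCt : ENNReal.ofReal Cst ≠ ∞ := ENNReal.ofReal_ne_top
  have k1 : 9 * ENNReal.ofReal (|M| / c) ≤ ENNReal.ofReal Cst := by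
    rw [show (9:ℝ≥0∞) = ENNReal.ofReal 9 by simp, ← ENNReal.ofReal_mul (by norm_num)]
    refine ENNReal.ofReal_le_ofReal ?_
    have : 0 ≤ 4 * |K| / c := by positivity
    rw [hCst, ← mul_div_assoc]; linarith
  have k2 : 2 * (ENNReal.ofReal |K| * ENNReal.ofReal (2 / c)) ≤ ENNReal.ofReal Cst := by
    rw [show (2:ℝ≥0∞) = ENNReal.ofReal 2 by simp, ← ENNReal.ofReal_mul (abs_nonneg _),
      ← ENNReal.ofReal_mul (by norm_num)]
    refine ENNReal.ofReal_le_ofReal ?_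
    have : 0 ≤ 9 * |M| / c := by positivity
    have e : 2 * (|K| * (2 / c)) = 4 * |K| / c := by ring
    rw [hCst, e]; linarith
  set J : ℝ≥0∞ := ∫⁻ u, ∫⁻ v, ENNReal.ofReal |G u v - G' u v| ∂I ∂I with hJ
  have hmeas : Measurable fun u => ∫⁻ v, ENNReal.ofReal |G u v - G' u v| ∂I := by
    have : Measurable fun z : ℝ × ℝ => ENNReal.ofReal |G z.1 z.2 - G' z.1 z.2| := by
      have h1 : Measurable fun z : ℝ × ℝ => G z.1 z.2 := hG
      have h2 : Measurable fun z : ℝ × ℝ => G' z.1 z.2 := hG'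
      fun_prop
    exact this.lintegral_prod_right'
  have main : ∀ g : ℝ → ℝ≥0∞, Measurable g → (∀ v, W2sq (μ v) (μ' v) ≤ g v) →
      upperLintegral I (fun u => W2sq (agg u) (agg' u)) ≤
        ENNReal.ofReal Cst * (J + ∫⁻ v, g v ∂I) := by
    intro g hg hgW
    refine ENNReal.le_of_forall_pos_le_add fun δ hδ _ => ?_
    obtain ⟨ε, hε, hεδ⟩ : ∃ ε : NNReal, 0 < ε ∧ 39 * ε ^ 2 ≤ δ := by
      refine ⟨NNReal.sqrt (δ / 39), by simpa using hδ, ?_⟩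
      rw [NNReal.sq_sqrt, mul_div_cancel₀]
      norm_num
    classical
    let B : ℝ → ℝ≥0∞ := fun u => 9 * (ENNReal.ofReal (|M| / c) * ∫⁻ v, g v ∂I) +
        39 * (ε : ℝ≥0∞) ^ 2 + 2 * (ENNReal.ofReal |K| * (ENNReal.ofReal (2 / c) *
          ∫⁻ v, ENNReal.ofReal |G u v - G' u v| ∂I))
    have hB : Measurable B := by fun_prop
    let B' : ℝ → ℝ≥0∞ := fun u => if u ∈ Set.Icc (0:ℝ) 1 then B u else ∞
    have hB' : Measurable B' := Measurable.ite measurableSet_Icc hB measurable_const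
    have hle : ∀ u, W2sq (agg u) (agg' u) ≤ B' u := by
      intro u
      simp only [B']
      split_ifs with hu
      · exact point g hg hgW ε hε u hu
      · exact le_top
    have hup : upperLintegral I (fun u => W2sq (agg u) (agg' u)) ≤ ∫⁻ u, B' u ∂I := by
      unfold upperLintegral
      exact iInf_le_of_le B' (iInf_le_of_le hB' (iInf_le_of_le hle le_rfl))
    refine hup.trans ?_
    have hBB : ∫⁻ u, B' u ∂I = ∫⁻ u, B u ∂I := by
      refine lintegral_congr_ae ?_
      filter_upwards [hIcc] with u hu
      simp only [B', if_pos hu]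
    rw [hBB]
    have hδ' : 39 * (ε : ℝ≥0∞) ^ 2 ≤ δ := by exact_mod_cast hεδ
    calc ∫⁻ u, B u ∂I = 9 * (ENNReal.ofReal (|M| / c) * ∫⁻ v, g v ∂I) +
        39 * (ε : ℝ≥0∞) ^ 2 + 2 * (ENNReal.ofReal |K| * (ENNReal.ofReal (2 / c) * J)) := by
          simp only [B]
          rw [lintegral_add_left measurable_const, lintegral_const, hIu, mul_one,
            lintegral_const_mul _ (by fun_prop), lintegral_const_mul _ (by fun_prop),
            lintegral_const_mul _ hmeas]
      _ = (9 * ENNReal.ofReal (|M| / c)) * ∫⁻ v, g v ∂I +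
          (2 * (ENNReal.ofReal |K| * ENNReal.ofReal (2 / c))) * J + 39 * (ε : ℝ≥0∞) ^ 2 := by
          ring
      _ ≤ ENNReal.ofReal Cst * ∫⁻ v, g v ∂I + ENNReal.ofReal Cst * J + δ := by gcongr
      _ = _ := by ring
  have hdiv : upperLintegral I (fun u => W2sq (agg u) (agg' u)) / ENNReal.ofReal Cst - J ≤
      upperLintegral I (fun u => W2sq (μ u) (μ' u)) := by
    refine le_iInf fun g => le_iInf fun hg => le_iInf fun hgW => ?_
    rw [tsub_le_iff_left, ENNReal.div_le_iff' hC0 hCt]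
    exact main g hg hgW
  rwa [tsub_le_iff_left, ENNReal.div_le_iff' hC0 hCt] at hdiv

end
end

section
/- Let C₀ > 0 and ε > 0, and let 𝔓 = { ν : ν is a Borel probability measure on ℝ^d with ∫ |x|^{2+ε} dν(x) ≤ C₀ }, endowed with the topology of weak convergence. Then there exists a continuous map T : 𝔓 → L²((0,1), Lebesgue; ℝ^d) such that for every ν ∈ 𝔓, the pushforward of the Lebesgue measure on (0,1) under (a representative of) T(ν) equals ν. -/
open MeasureTheory ENNReal

noncomputable section
open Set Filter Topology ProbabilityTheory

theorem cantor_emb : IsClosedEmbedding (Cardinal.cantorFunction (1/3)) := by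
  refine Continuous.isClosedEmbedding ?_ (Cardinal.cantorFunction_injective (by norm_num) (by norm_num))
  unfold Cardinal.cantorFunction
  refine continuous_tsum (u := fun n => (1/3 : ℝ)^n) ?_
    (summable_geometric_of_lt_one (by norm_num) (by norm_num)) ?_
  · intro n
    unfold Cardinal.cantorFunctionAux
    exact (continuous_of_discreteTopology (f := fun b : Bool => cond b ((1/3:ℝ)^n) 0)).comp
      (continuous_apply n)
  · intro n f
    unfold Cardinal.cantorFunctionAux
    cases f n <;> simp

/-- The `n`-th binary digit of a point. -/
def bit {d : ℕ} (o : Option (Fin d × ℚ)) (x : EuclideanSpace ℝ (Fin d)) : Bool :=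
  match o with
  | some p => decide ((p.2 : ℝ) < x p.1)
  | none => false

def bits {d : ℕ} (x : EuclideanSpace ℝ (Fin d)) (n : ℕ) : Bool :=
  bit (Encodable.decode n : Option (Fin d × ℚ)) x

def IrrCoord {d : ℕ} (x : EuclideanSpace ℝ (Fin d)) : Prop := ∀ i, ∀ q : ℚ, x i ≠ q

theorem bits_encode {d : ℕ} (x : EuclideanSpace ℝ (Fin d)) (i : Fin d) (q : ℚ) :
    bits x (Encodable.encode (i, q)) = decide ((q : ℝ) < x i) := by
  simp [bits, bit]

theorem measurable_bits {d : ℕ} : Measurable (bits (d := d)) := by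
  refine measurable_pi_iff.2 fun n => ?_
  unfold bits bit
  rcases (Encodable.decode n : Option (Fin d × ℚ)) with _ | p
  · exact measurable_const
  · refine measurable_to_bool ?_
    have : (fun x : EuclideanSpace ℝ (Fin d) => decide ((p.2 : ℝ) < x p.1)) ⁻¹' {true}
      = {x | (p.2 : ℝ) < x p.1} := by ext; simp
    rw [this]
    exact measurableSet_lt measurable_const (by fun_prop)

theorem continuousAt_bits {d : ℕ} {x : EuclideanSpace ℝ (Fin d)} (hx : IrrCoord x) :
    ContinuousAt bits x := by
  refine continuousAt_pi.2 fun n => ?_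
  unfold bits bit
  rcases (Encodable.decode n : Option (Fin d × ℚ)) with _ | p
  · exact continuousAt_const
  · have hc : Continuous fun y : EuclideanSpace ℝ (Fin d) => y p.1 := by fun_prop
    rcases lt_or_gt_of_ne (hx p.1 p.2) with h | h
    · refine (continuousAt_const (y := false)).congr ?_
      filter_upwards [hc.continuousAt.eventually_lt_const h] with y hy
      simp [hy.le]
    · refine (continuousAt_const (y := true)).congr ?_
      filter_upwards [hc.continuousAt.eventually_const_lt h] with y hy
      simp [hy]

theorem tendsto_of_bits {d : ℕ} {ι : Type*} {l : Filter ι} {y : ι → EuclideanSpace ℝ (Fin d)}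
    {x : EuclideanSpace ℝ (Fin d)} (h : Tendsto (fun k => bits (y k)) l (𝓝 (bits x))) :
    Tendsto y l (𝓝 x) := by
  have key : ∀ i (q : ℚ), ∀ᶠ k in l, decide ((q:ℝ) < y k i) = decide ((q:ℝ) < x i) := by
    intro i q
    have := (tendsto_pi_nhds.1 h) (Encodable.encode (i, q))
    rw [nhds_discrete, tendsto_pure] at this
    simpa only [bits_encode] using this
  have h2 : Tendsto (fun k => (WithLp.ofLp (y k))) l (𝓝 (WithLp.ofLp x)) := by
    refine tendsto_pi_nhds.2 fun i => tendsto_order.2 ⟨fun a ha => ?_, fun a ha => ?_⟩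
    · obtain ⟨q, h1, h2⟩ := exists_rat_btwn ha
      filter_upwards [key i q] with k hk
      simp only [h2, decide_true, decide_eq_true_eq] at hk
      exact h1.trans hk
    · obtain ⟨q, h1, h2⟩ := exists_rat_btwn ha
      filter_upwards [key i q] with k hk
      simp only [h1.not_gt, decide_false, decide_eq_false_iff_not, not_lt] at hk
      exact hk.trans_lt h2
  exact (PiLp.continuous_toLp 2 _).continuousAt.tendsto.comp h2

theorem bits_injective {d : ℕ} : Function.Injective (bits (d := d)) := by
  intro x y h
  have : Tendsto (fun _ : ℕ => y) atTop (𝓝 x) := tendsto_of_bits (by rw [h]; exact tendsto_const_nhds)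
  exact tendsto_nhds_unique this tendsto_const_nhds |>.symm ▸ rfl

def code {d : ℕ} (x : EuclideanSpace ℝ (Fin d)) : ℝ := Cardinal.cantorFunction (1/3) (bits x)

theorem code_emb {d : ℕ} : MeasurableEmbedding (code (d := d)) :=
  (cantor_emb.continuous.measurable.comp measurable_bits).measurableEmbedding
    (cantor_emb.injective.comp bits_injective)

theorem continuousAt_code {d : ℕ} {x : EuclideanSpace ℝ (Fin d)} (hx : IrrCoord x) :
    ContinuousAt code x := cantor_emb.continuous.continuousAt.comp (continuousAt_bits hx)

theorem tendsto_of_code {d : ℕ} {ι : Type*} {l : Filter ι} {y : ι → EuclideanSpace ℝ (Fin d)}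
    {x : EuclideanSpace ℝ (Fin d)} (h : Tendsto (fun k => code (y k)) l (𝓝 (code x))) :
    Tendsto y l (𝓝 x) :=
  tendsto_of_bits (cantor_emb.isInducing.tendsto_nhds_iff.2 h)

/-- quantile function -/
def Qf (μ : Measure ℝ) (u : ℝ) : ℝ :=
  open scoped Classical in if u ∈ Ioo (0:ℝ) 1 then sInf {t | u ≤ cdf μ t} else 0

theorem Qf_le_iff (μ : Measure ℝ) {u : ℝ} (hu : u ∈ Ioo (0:ℝ) 1) (t : ℝ) :
    Qf μ u ≤ t ↔ u ≤ cdf μ t := by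
  have hne : {t | u ≤ cdf μ t}.Nonempty := by
    obtain ⟨t, ht⟩ := ((tendsto_cdf_atTop μ).eventually_const_lt hu.2).exists
    exact ⟨t, ht.le⟩
  have hbdd : BddBelow {t | u ≤ cdf μ t} := by
    obtain ⟨a, ha⟩ := ((tendsto_cdf_atBot μ).eventually_lt_const hu.1).exists
    refine ⟨a, fun t ht => ?_⟩
    by_contra! hlt
    exact absurd (ha.trans_le ht) (not_lt.2 (monotone_cdf μ hlt.le))
  rw [Qf, if_pos hu]
  constructor
  · intro h
    have hr : Tendsto (cdf μ) (𝓝[>] t) (𝓝 (cdf μ t)) :=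
      ((cdf μ).right_continuous t).tendsto.mono_left (nhdsWithin_mono _ Ioi_subset_Ici_self)
    refine ge_of_tendsto hr ?_
    filter_upwards [self_mem_nhdsWithin] with s hs
    obtain ⟨r, hr, hrs⟩ := (csInf_lt_iff hbdd hne).1 (h.trans_lt hs)
    exact le_trans hr (monotone_cdf μ hrs.le)
  · intro h
    exact csInf_le hbdd h

abbrev lam : Measure ℝ := volume.restrict (Ioo (0:ℝ) 1)

instance lamProb : IsProbabilityMeasure lam := ⟨by simp [lam]⟩

theorem lam_Ioo : ∀ᵐ u ∂lam, u ∈ Ioo (0:ℝ) 1 := ae_restrict_mem measurableSet_Ioo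

theorem measurable_Qf_param {α : Type*} [MeasurableSpace α] (μ : α → Measure ℝ)
    (h : ∀ t, Measurable fun a => cdf (μ a) t) :
    Measurable fun p : α × ℝ => Qf (μ p.1) p.2 := by
  refine measurable_of_Iic fun t => ?_
  have : (fun p : α × ℝ => Qf (μ p.1) p.2) ⁻¹' Iic t =
      ({p | p.2 ∈ Ioo (0:ℝ) 1} ∩ {p | p.2 ≤ cdf (μ p.1) t}) ∪
      ({p | p.2 ∉ Ioo (0:ℝ) 1} ∩ {p | (0:ℝ) ≤ t}) := by
    ext p
    by_cases hp : p.2 ∈ Ioo (0:ℝ) 1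
    · simp only [mem_preimage, mem_Iic, Qf_le_iff _ hp, mem_union, mem_inter_iff, mem_ofPred_eq, hp]
      simp
    · simp only [mem_preimage, mem_Iic, Qf, mem_union, mem_inter_iff, mem_ofPred_eq, hp]
      simp
  rw [this]
  have h1 : MeasurableSet {p : α × ℝ | p.2 ∈ Ioo (0:ℝ) 1} := measurable_snd measurableSet_Ioo
  exact (h1.inter (measurableSet_le measurable_snd ((h t).comp measurable_fst))).union
    (h1.compl.inter (MeasurableSet.const _))

theorem measurable_Qf (μ : Measure ℝ) : Measurable (Qf μ) :=
  (measurable_Qf_param (fun _ : Unit => μ) (fun _ => measurable_const)).comp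
    (measurable_const (a := ()) |>.prodMk measurable_id)

theorem map_Qf (μ : Measure ℝ) [IsProbabilityMeasure μ] : Measure.map (Qf μ) lam = μ := by
  have := Measure.isProbabilityMeasure_map (μ := lam) (measurable_Qf μ).aemeasurable
  refine Measure.ext_of_Iic _ _ fun t => ?_
  rw [Measure.map_apply (measurable_Qf μ) measurableSet_Iic, ← ofReal_cdf,
    Measure.restrict_apply (measurable_Qf μ measurableSet_Iic)]
  have h0 := cdf_nonneg μ t
  have h1 := cdf_le_one μ t
  have hs : Qf μ ⁻¹' Iic t ∩ Ioo 0 1 = Iic (cdf μ t) ∩ Ioo 0 1 := by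
    ext u
    constructor
    · rintro ⟨h, hu⟩; exact ⟨(Qf_le_iff μ hu t).1 h, hu⟩
    · rintro ⟨h, hu⟩; exact ⟨(Qf_le_iff μ hu t).2 h, hu⟩
  rw [hs]
  apply le_antisymm
  · calc volume (Iic (cdf μ t) ∩ Ioo 0 1) ≤ volume (Ioc 0 (cdf μ t)) :=
        measure_mono fun u hu => ⟨hu.2.1, hu.1⟩
      _ = _ := by simp
  · calc ENNReal.ofReal (cdf μ t) = volume (Ioo 0 (cdf μ t)) := by simp
      _ ≤ volume (Iic (cdf μ t) ∩ Ioo 0 1) := measure_mono fun u (hu : u ∈ Ioo 0 (cdf μ t)) => ⟨hu.2.le, hu.1, hu.2.trans_le h1⟩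

section rep
variable {Ω : Type*} [MeasurableSpace Ω] [Nonempty Ω] {e : Ω → ℝ}

theorem map_rep (he : MeasurableEmbedding e) (ν : Measure Ω) [IsProbabilityMeasure ν] :
    Measure.map (fun u => he.invFun (Qf (Measure.map e ν) u)) lam = ν := by
  have := Measure.isProbabilityMeasure_map (μ := ν) he.measurable.aemeasurable
  have h := Measure.map_map (μ := lam) he.measurable_invFun (measurable_Qf (Measure.map e ν))
  rw [map_Qf, Measure.map_map he.measurable_invFun he.measurable] at h
  have h2 : he.invFun ∘ e = id := he.leftInverse_invFun.comp_eq_id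
  rw [h2, Measure.map_id] at h
  exact h.symm

theorem ae_rep (he : MeasurableEmbedding e) (ν : Measure Ω) [IsProbabilityMeasure ν] :
    ∀ᵐ u ∂lam, e (he.invFun (Qf (Measure.map e ν) u)) = Qf (Measure.map e ν) u := by
  have := Measure.isProbabilityMeasure_map (μ := ν) he.measurable.aemeasurable
  have h : ∀ᵐ y ∂(Measure.map e ν), y ∈ range e := by
    exact (ae_map_iff he.measurable.aemeasurable he.measurableSet_range).2
      (Eventually.of_forall fun x => mem_range_self x)
  rw [← map_Qf (Measure.map e ν)] at h
  have h' := ae_of_ae_map (measurable_Qf _).aemeasurable h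
  filter_upwards [h'] with u ⟨x, hx⟩
  rw [← hx, he.leftInverse_invFun x]

end rep

theorem Qf_tendsto {μs : ℕ → Measure ℝ} {μ : Measure ℝ} {D : Set ℝ} (hD : Dense D)
    (h : ∀ t ∈ D, Tendsto (fun n => cdf (μs n) t) atTop (𝓝 (cdf μ t))) :
    ∀ᵐ u ∂lam, Tendsto (fun n => Qf (μs n) u) atTop (𝓝 (Qf μ u)) := by
  have hc : (range fun q : ℚ => cdf μ (q:ℝ)).Countable := countable_range _
  filter_upwards [lam_Ioo, hc.ae_notMem lam] with u hu hu'
  refine tendsto_order.2 ⟨fun a ha => ?_, fun a ha => ?_⟩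
  · obtain ⟨t, htD, h1, h2⟩ := hD.exists_between ha
    have : cdf μ t < u := by
      by_contra! hh
      exact absurd ((Qf_le_iff μ hu t).2 hh) (not_le.2 h2)
    filter_upwards [(h t htD).eventually_lt_const this] with n hn
    by_contra! hh
    exact absurd ((Qf_le_iff (μs n) hu t).1 (hh.trans h1.le)) (not_le.2 hn)
  · obtain ⟨t, htD, h1, h2⟩ := hD.exists_between ha
    obtain ⟨q, hq1, hq2⟩ := exists_rat_btwn h1
    have h3 : u ≤ cdf μ q := (Qf_le_iff μ hu q).1 hq1.le
    have h4 : u < cdf μ t := (lt_of_le_of_ne h3 fun hh => hu' ⟨q, hh.symm⟩).trans_le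
      (monotone_cdf μ hq2.le)
    filter_upwards [(h t htD).eventually_const_lt h4] with n hn
    exact ((Qf_le_iff (μs n) hu t).2 hn.le).trans_lt h2

theorem cdf_code {d : ℕ} (ν : ProbabilityMeasure (EuclideanSpace ℝ (Fin d))) (t : ℝ) :
    cdf (Measure.map code (ν : Measure (EuclideanSpace ℝ (Fin d)))) t =
      ((ν (code ⁻¹' Iic t) : NNReal) : ℝ) := by
  have := Measure.isProbabilityMeasure_map (μ := (ν : Measure (EuclideanSpace ℝ (Fin d))))
    code_emb.measurable.aemeasurable
  rw [cdf_eq_real, Measure.real, Measure.map_apply code_emb.measurable measurableSet_Iic]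
  rfl

theorem rep_tendsto {d : ℕ} {νs : ℕ → ProbabilityMeasure (EuclideanSpace ℝ (Fin d))}
    {ν : ProbabilityMeasure (EuclideanSpace ℝ (Fin d))} (h : Tendsto νs atTop (𝓝 ν))
    (hν : ∀ᵐ x ∂(ν : Measure (EuclideanSpace ℝ (Fin d))), IrrCoord x) :
    ∀ᵐ u ∂lam, Tendsto (fun n => (code_emb (d := d)).invFun (Qf (Measure.map code
        (νs n : Measure (EuclideanSpace ℝ (Fin d)))) u)) atTop
      (𝓝 ((code_emb (d := d)).invFun (Qf (Measure.map code
        (ν : Measure (EuclideanSpace ℝ (Fin d)))) u))) := by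
  have hp := Measure.isProbabilityMeasure_map (μ := (ν : Measure (EuclideanSpace ℝ (Fin d))))
    code_emb.measurable.aemeasurable
  set D : Set ℝ := {t | 0 < Measure.map code (ν : Measure (EuclideanSpace ℝ (Fin d))) {t}}ᶜ with hDdef
  have hD : Dense D := by
    refine Set.Countable.dense_compl ℝ ?_
    exact Measure.countable_meas_pos_of_disjoint_iUnion (fun t => measurableSet_singleton t)
      (fun a b hab => by simpa using hab)
  have hQ := Qf_tendsto (μs := fun n => Measure.map code (νs n : Measure (EuclideanSpace ℝ (Fin d))))
    (μ := Measure.map code (ν : Measure (EuclideanSpace ℝ (Fin d)))) hD (by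
      intro t ht
      simp only [cdf_code]
      refine (NNReal.continuous_coe.tendsto _).comp
        (ProbabilityMeasure.tendsto_measure_of_null_frontier_of_tendsto h ?_)
      rw [ProbabilityMeasure.null_iff_toMeasure_null]
      have ht0 : Measure.map code (ν : Measure (EuclideanSpace ℝ (Fin d))) {t} = 0 := by
        simpa [hDdef] using ht
      rw [Measure.map_apply code_emb.measurable (measurableSet_singleton t)] at ht0
      have h1 : ∀ᵐ x ∂(ν : Measure (EuclideanSpace ℝ (Fin d))), x ∉ code ⁻¹' {t} :=
        measure_eq_zero_iff_ae_notMem.1 ht0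
      rw [measure_eq_zero_iff_ae_notMem]
      filter_upwards [hν, h1] with x hx hxt hfr
      have hc := continuousAt_code hx
      rcases lt_or_gt_of_ne (show code x ≠ t from hxt) with hlt | hlt
      · refine hfr.2 (mem_interior_iff_mem_nhds.2 ?_)
        filter_upwards [hc.eventually_lt_const hlt] with y hy using hy.le
      · have hcl := hfr.1
        rw [mem_closure_iff_frequently] at hcl
        refine hcl ?_
        filter_upwards [hc.eventually_const_lt hlt] with y hy using not_le.2 hy)
  have ha := ae_rep (code_emb (d := d)) (ν : Measure (EuclideanSpace ℝ (Fin d)))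
  have hb := ae_all_iff.2 fun n => ae_rep (code_emb (d := d))
    (νs n : Measure (EuclideanSpace ℝ (Fin d)))
  filter_upwards [hQ, ha, hb] with u h1 h2 h3
  refine tendsto_of_code ?_
  simp only [h2, h3]
  exact h1

theorem unifInt {E : Type*} [NormedAddCommGroup E] {α : Type*} [MeasurableSpace α] {μ : Measure α}
    {p : ℝ} (hp : 2 < p) {f : ℕ → α → E} (hf : ∀ n, AEStronglyMeasurable (f n) μ)
    {C : ℝ≥0∞} (hC : C ≠ ∞) (hb : ∀ n, eLpNorm (f n) (ENNReal.ofReal p) μ ≤ C) :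
    UnifIntegrable f 2 μ := by
  intro η hη
  have hr : 0 < 1 / (2:ℝ) - 1 / p := by
    have := one_div_lt_one_div_of_lt (by norm_num : (0:ℝ) < 2) hp
    linarith
  have hlim : Tendsto (fun δ : ℝ => C * ENNReal.ofReal δ ^ (1 / (2:ℝ) - 1 / p)) (𝓝[>] 0) (𝓝 0) := by
    have h1 : Tendsto (fun δ : ℝ => ENNReal.ofReal δ ^ (1 / (2:ℝ) - 1 / p)) (𝓝[>] 0) (𝓝 0) := by
      have h2 : Continuous fun δ : ℝ => ENNReal.ofReal δ ^ (1 / (2:ℝ) - 1 / p) :=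
        (ENNReal.continuous_rpow_const).comp ENNReal.continuous_ofReal
      have h3 := h2.tendsto 0
      simp only [ENNReal.ofReal_zero, ENNReal.zero_rpow_of_pos hr] at h3
      exact h3.mono_left nhdsWithin_le_nhds
    simpa using ENNReal.Tendsto.const_mul h1 (Or.inr hC)
  have hev := hlim.eventually_lt_const (ENNReal.ofReal_pos.2 hη)
  obtain ⟨δ, hδ, hδ0⟩ := (hev.and self_mem_nhdsWithin).exists
  refine ⟨δ, hδ0, fun n s hs hμ => ?_⟩
  rw [eLpNorm_indicator_eq_eLpNorm_restrict hs]
  refine (eLpNorm_le_eLpNorm_mul_rpow_measure_univ (q := ENNReal.ofReal p) ?_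
    (hf n).restrict).trans ?_
  · rw [show (2:ℝ≥0∞) = ENNReal.ofReal 2 by simp]
    exact ENNReal.ofReal_le_ofReal hp.le
  · rw [ENNReal.toReal_ofReal (by linarith), Measure.restrict_apply_univ, ENNReal.toReal_ofNat]
    refine le_trans ?_ hδ.le
    gcongr
    exact (eLpNorm_restrict_le _ _ _ _).trans (hb n)

section final
variable {d : ℕ}

/-- The all-ones vector. -/
def ones (d : ℕ) : EuclideanSpace ℝ (Fin d) := WithLp.toLp 2 fun _ => 1

theorem measurable_shift (θ : ℝ) : Measurable fun x : EuclideanSpace ℝ (Fin d) => x + θ • ones d :=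
  measurable_id.add_const _

/-- Translate of a probability measure. -/
def shift (θ : ℝ) (ν : ProbabilityMeasure (EuclideanSpace ℝ (Fin d))) :
    ProbabilityMeasure (EuclideanSpace ℝ (Fin d)) :=
  ν.map (measurable_shift θ).aemeasurable

theorem shift_toMeasure (θ : ℝ) (ν : ProbabilityMeasure (EuclideanSpace ℝ (Fin d))) :
    (shift θ ν : Measure (EuclideanSpace ℝ (Fin d))) =
      Measure.map (fun x => x + θ • ones d) (ν : Measure (EuclideanSpace ℝ (Fin d))) := rfl

theorem measurableSet_irr : MeasurableSet {x : EuclideanSpace ℝ (Fin d) | IrrCoord x} := by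
  have : {x : EuclideanSpace ℝ (Fin d) | IrrCoord x} = ⋂ i, ⋂ q : ℚ, {x | x i = (q : ℝ)}ᶜ := by
    ext x; simp [IrrCoord]
  rw [this]
  refine MeasurableSet.iInter fun i => MeasurableSet.iInter fun q => MeasurableSet.compl ?_
  exact measurableSet_eq_fun (by fun_prop) measurable_const

theorem ae_irr (ν : ProbabilityMeasure (EuclideanSpace ℝ (Fin d))) :
    ∀ᵐ θ ∂lam, ∀ᵐ x ∂(shift θ ν : Measure (EuclideanSpace ℝ (Fin d))), IrrCoord x := by
  have h1 : ∀ᵐ x ∂(ν : Measure (EuclideanSpace ℝ (Fin d))), ∀ᵐ θ ∂lam,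
      IrrCoord (x + θ • ones d) := by
    refine Eventually.of_forall fun x => ?_
    unfold IrrCoord
    refine ae_all_iff.2 fun i => ae_all_iff.2 fun q => ?_
    filter_upwards [(countable_singleton ((q:ℝ) - x i)).ae_notMem lam] with θ hθ heq
    apply hθ
    simp [ones] at heq
    simp [← heq]
  have h2 := (Measure.ae_ae_comm (μ := (ν : Measure (EuclideanSpace ℝ (Fin d)))) (ν := lam)
    (p := fun x θ => IrrCoord (x + θ • ones d)) (by
      have : Measurable fun z : EuclideanSpace ℝ (Fin d) × ℝ => z.1 + z.2 • ones d := by fun_prop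
      exact this measurableSet_irr)).1 h1
  filter_upwards [h2] with θ hθ
  rw [shift_toMeasure]
  exact (ae_map_iff (measurable_shift θ).aemeasurable measurableSet_irr).2 hθ

/-- The representation on the square. -/
def Xf (ν : ProbabilityMeasure (EuclideanSpace ℝ (Fin d))) (p : ℝ × ℝ) :
    EuclideanSpace ℝ (Fin d) :=
  (code_emb (d := d)).invFun (Qf (Measure.map code
    (shift p.1 ν : Measure (EuclideanSpace ℝ (Fin d)))) p.2) - p.1 • ones d

theorem measurable_Xf (ν : ProbabilityMeasure (EuclideanSpace ℝ (Fin d))) :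
    Measurable (Xf ν) := by
  have h1 := measurable_Qf_param (fun θ : ℝ => Measure.map code
    (shift θ ν : Measure (EuclideanSpace ℝ (Fin d)))) (by
      intro t
      simp only [cdf_code]
      have hm : Measurable fun z : ℝ × EuclideanSpace ℝ (Fin d) => code (z.2 + z.1 • ones d) :=
        code_emb.measurable.comp (by fun_prop)
      have := (measurable_measure_prodMk_left (ν := (ν : Measure (EuclideanSpace ℝ (Fin d))))
        (hm (measurableSet_Iic (a := t)))).ennreal_toReal
      convert this using 2 with θ
      rw [← measureReal_def]
      change Measure.real (shift θ ν : Measure (EuclideanSpace ℝ (Fin d))) _ = _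
      rw [shift_toMeasure, measureReal_def, Measure.map_apply (measurable_shift θ)
        (code_emb.measurable measurableSet_Iic)]
      rfl)
  exact (code_emb.measurable_invFun.comp h1).sub (by fun_prop)

theorem map_Xf (ν : ProbabilityMeasure (EuclideanSpace ℝ (Fin d))) :
    Measure.map (Xf ν) (lam.prod lam) = (ν : Measure (EuclideanSpace ℝ (Fin d))) := by
  have key : ∀ θ, Measure.map (fun u => Xf ν (θ, u)) lam =
      (ν : Measure (EuclideanSpace ℝ (Fin d))) := by
    intro θ
    have h := map_rep (code_emb (d := d)) (shift θ ν : Measure (EuclideanSpace ℝ (Fin d)))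
    have hs : Measurable fun x : EuclideanSpace ℝ (Fin d) => x - θ • ones d := by fun_prop
    have h2 := congrArg (Measure.map fun x : EuclideanSpace ℝ (Fin d) => x - θ • ones d) h
    have hq : Measurable fun u => (code_emb (d := d)).invFun (Qf (Measure.map code
        (shift θ ν : Measure (EuclideanSpace ℝ (Fin d)))) u) :=
      code_emb.measurable_invFun.comp (measurable_Qf _)
    rw [Measure.map_map hs hq, shift_toMeasure,
      Measure.map_map hs (measurable_shift θ)] at h2
    have h3 : ((fun x : EuclideanSpace ℝ (Fin d) => x - θ • ones d) ∘
      fun x => x + θ • ones d) = id := by ext; simp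
    rw [h3, Measure.map_id] at h2
    exact h2
  ext s hs
  rw [Measure.map_apply (measurable_Xf ν) hs, Measure.prod_apply (measurable_Xf ν hs)]
  have : ∀ θ, lam (Prod.mk θ ⁻¹' (Xf ν ⁻¹' s)) = (ν : Measure (EuclideanSpace ℝ (Fin d))) s := by
    intro θ
    have hx : Measurable fun u => Xf ν (θ, u) := (measurable_Xf ν).comp measurable_prodMk_left
    rw [← key θ, Measure.map_apply hx hs]
    rfl
  simp only [this, lintegral_const, measure_univ, mul_one]

theorem Xf_tendsto {νs : ℕ → ProbabilityMeasure (EuclideanSpace ℝ (Fin d))}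
    {ν : ProbabilityMeasure (EuclideanSpace ℝ (Fin d))} (h : Tendsto νs atTop (𝓝 ν)) :
    ∀ᵐ p ∂(lam.prod lam), Tendsto (fun n => Xf (νs n) p) atTop (𝓝 (Xf ν p)) := by
  have hm : MeasurableSet {p | Tendsto (fun n => Xf (νs n) p) atTop (𝓝 (Xf ν p))} :=
    measurableSet_tendsto_fun (fun n => measurable_Xf (νs n)) (measurable_Xf ν)
  refine (Measure.ae_prod_mem_iff_ae_ae_mem hm).2 ?_
  filter_upwards [ae_irr ν] with θ hθ
  have hc : Continuous fun x : EuclideanSpace ℝ (Fin d) => x + θ • ones d := by fun_prop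
  have hs : Tendsto (fun n => shift θ (νs n)) atTop (𝓝 (shift θ ν)) :=
    ProbabilityMeasure.tendsto_map_of_tendsto_of_continuous νs ν h hc
  filter_upwards [rep_tendsto hs hθ] with u hu
  exact hu.sub_const _

theorem exists_Phi : ∃ Φ : ℝ → ℝ × ℝ, Measurable Φ ∧ Measure.map Φ lam = lam.prod lam :=
  ⟨_, (measurableEmbedding_embeddingReal (ℝ × ℝ)).measurable_invFun.comp (measurable_Qf _),
    map_rep (measurableEmbedding_embeddingReal (ℝ × ℝ)) (lam.prod lam)⟩

end final

theorem continuous_L2_representation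
    (d : ℕ) (C₀ ε : ℝ) (hC₀ : 0 < C₀) (hε : 0 < ε) :
    ∃ T : {ν : ProbabilityMeasure (EuclideanSpace ℝ (Fin d)) //
            ∫⁻ x, (‖x‖₊ : ℝ≥0∞) ^ ((2:ℝ) + ε)
              ∂(ν : Measure (EuclideanSpace ℝ (Fin d))) ≤ ENNReal.ofReal C₀} →
          Lp (EuclideanSpace ℝ (Fin d)) 2 (volume.restrict (Set.Ioo (0:ℝ) 1)),
      Continuous T ∧
      ∀ ν, Measure.map (⇑(T ν)) (volume.restrict (Set.Ioo (0:ℝ) 1)) =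
        ((ν : ProbabilityMeasure (EuclideanSpace ℝ (Fin d))) :
          Measure (EuclideanSpace ℝ (Fin d))) := by
  obtain ⟨Φ, hΦ, hmap⟩ := exists_Phi
  have hp0 : (0:ℝ) < 2 + ε := by linarith
  have hmeas : ∀ ν : ProbabilityMeasure (EuclideanSpace ℝ (Fin d)), Measurable (Xf ν ∘ Φ) :=
    fun ν => (measurable_Xf ν).comp hΦ
  have hlaw : ∀ ν : ProbabilityMeasure (EuclideanSpace ℝ (Fin d)),
      Measure.map (Xf ν ∘ Φ) lam = (ν : Measure (EuclideanSpace ℝ (Fin d))) := fun ν => by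
    rw [← Measure.map_map (measurable_Xf ν) hΦ, hmap, map_Xf]
  set C : ℝ≥0∞ := (ENNReal.ofReal C₀) ^ (1 / (2 + ε)) with hCdef
  have hC : C ≠ ∞ := ENNReal.rpow_ne_top_of_nonneg (by positivity) ENNReal.ofReal_ne_top
  have hbound : ∀ ν : ProbabilityMeasure (EuclideanSpace ℝ (Fin d)),
      ∫⁻ x, (‖x‖₊ : ℝ≥0∞) ^ ((2:ℝ) + ε)
        ∂(ν : Measure (EuclideanSpace ℝ (Fin d))) ≤ ENNReal.ofReal C₀ →
      eLpNorm (Xf ν ∘ Φ) (ENNReal.ofReal (2 + ε)) lam ≤ C := by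
    intro ν hν
    have h1 := eLpNorm_map_measure (μ := lam) (f := Xf ν ∘ Φ) (g := id)
      (p := ENNReal.ofReal (2 + ε)) (by fun_prop) (hmeas ν).aemeasurable
    rw [hlaw, Function.id_comp] at h1
    rw [← h1, eLpNorm_eq_lintegral_rpow_enorm_toReal (by simpa using hp0) ENNReal.ofReal_ne_top,
      ENNReal.toReal_ofReal hp0.le]
    exact ENNReal.rpow_le_rpow hν (by positivity)
  have hLp : ∀ ν : {ν : ProbabilityMeasure (EuclideanSpace ℝ (Fin d)) //
            ∫⁻ x, (‖x‖₊ : ℝ≥0∞) ^ ((2:ℝ) + ε)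
              ∂(ν : Measure (EuclideanSpace ℝ (Fin d))) ≤ ENNReal.ofReal C₀},
      MemLp (Xf ν.1 ∘ Φ) 2 lam := fun ν => by
    have : MemLp (Xf ν.1 ∘ Φ) (ENNReal.ofReal (2 + ε)) lam :=
      ⟨(hmeas _).aestronglyMeasurable, (hbound ν.1 ν.2).trans_lt hC.lt_top⟩
    refine this.mono_exponent ?_
    rw [show (2:ℝ≥0∞) = ENNReal.ofReal 2 by simp]
    exact ENNReal.ofReal_le_ofReal (by linarith)
  refine ⟨fun ν => (hLp ν).toLp _, ?_, fun ν => ?_⟩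
  · refine continuous_iff_seqContinuous.2 fun νs ν h => ?_
    refine (Lp.tendsto_Lp_iff_tendsto_eLpNorm'' _ (fun n => hLp (νs n)) _ (hLp ν)).2 ?_
    refine tendsto_Lp_finite_of_tendsto_ae (by norm_num) (by norm_num)
      (fun n => (hmeas _).aestronglyMeasurable) (hLp ν)
      (unifInt (p := 2 + ε) (by linarith) (fun n => (hmeas _).aestronglyMeasurable) hC
        fun n => hbound _ (νs n).2) ?_
    have h1 := Xf_tendsto ((continuous_subtype_val.tendsto ν).comp h)
    rw [← hmap] at h1
    exact ae_of_ae_map hΦ.aemeasurable h1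
  · rw [Measure.map_congr (hLp ν).coeFn_toLp]
    exact hlaw ν.1

end
end
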